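/- Fix real constants a_R > 0 and a_I, set p₁ = q₁ = a_R/(a_R²+a_I²), p₂ = −q₂ = −a_I/(a_R²+a_I²), let b_R, b_I, f_R, f_I : [0,1]×[0,1) → ℝ be continuously differentiable in the space variable and, for each fixed space point, given on [0,1) by power series in t with coefficients bounded uniformly in n and the space variable, and define β(x,y,t) = [a_R(b_R(y,t)−f_R(x,t)) + a_I(b_I(y,t)−f_I(x,t))]/(a_R²+a_I²), β_c(x,y,t) = [a_R(b_I(y,t)−f_I(x,t)) − a_I(b_R(y,t)−f_R(x,t))]/(a_R²+a_I²). Then for every t₀ ∈ (0,1), the system k_xx = k_yy + βk + β_c k_c + p₁k_t + p₂k_{c,t}, k_{c,xx} = k_{c,yy} − β_c k + βk_c + q₁k_{c,t} + q₂k_t on Ω = {(x,y) : 0 ≤ y ≤ x ≤ 1}, with boundary conditions k(x,x,t) = −(1/2)∫₀ˣβ(γ,γ,t)dγ, k_c(x,x,t) = (1/2)∫₀ˣβ_c(γ,γ,t)dγ, k_x(x,0,t) = k_{c,x}(x,0,t) = 0, and k(0,0,t) = k_c(0,0,t) = 0, has a unique twice continuously differentiable solution (k, k_c) on Ω×(0,t₀),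 and there exists M > 0 such that |k(x,y,t)| ≤ M e^{M(x²−y²)} and |k_c(x,y,t)| ≤ M e^{M(x²−y²)} on Ω×(0,t₀). -/

import Mathlib

open Set intervalIntegral

/-- The triangle `Ω = {(x,y) : 0 ≤ y ≤ x ≤ 1}`. -/
def Omega : Set (ℝ × ℝ) := {p : ℝ × ℝ | 0 ≤ p.2 ∧ p.2 ≤ p.1 ∧ p.1 ≤ 1}

/-- Partial derivative of a three-variable kernel in its first variable. -/
noncomputable def pX (k : ℝ → ℝ → ℝ → ℝ) (x y t : ℝ) : ℝ := deriv (fun x' => k x' y t) x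

/-- Second partial derivative of a three-variable kernel in its first variable. -/
noncomputable def pXX (k : ℝ → ℝ → ℝ → ℝ) (x y t : ℝ) : ℝ :=
  deriv (fun x' => deriv (fun x'' => k x'' y t) x') x

/-- Second partial derivative of a three-variable kernel in its second variable. -/
noncomputable def pYY (k : ℝ → ℝ → ℝ → ℝ) (x y t : ℝ) : ℝ :=
  deriv (fun y' => deriv (fun y'' => k x y'' t) y') y

/-- Partial derivative of a three-variable kernel in its last (time) variable. -/
noncomputable def pT (k : ℝ → ℝ → ℝ → ℝ) (x y t : ℝ) : ℝ := deriv (fun t' => k x y t') t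

/-- `f(x,t)` is continuously differentiable in the space variable and, for each fixed
space point, given on `[0,1)` by a power series in `t` with uniformly bounded
coefficients. -/
def SpaceC1TimeAnalytic (f : ℝ → ℝ → ℝ) : Prop :=
  (∀ t ∈ Set.Ico (0:ℝ) 1, ContDiffOn ℝ 1 (fun x => f x t) (Set.Icc 0 1))
  ∧ ∃ (c : ℕ → ℝ → ℝ) (C : ℝ),
      (∀ n, ∀ x ∈ Set.Icc (0:ℝ) 1, |c n x| ≤ C)
      ∧ ∀ x ∈ Set.Icc (0:ℝ) 1, ∀ t ∈ Set.Ico (0:ℝ) 1, f x t = ∑' n, c n x * t ^ n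

/-- `(k, k_c)` is a classical solution on `Ω × (0,t₀)` of the Neumann backstepping
kernel system. -/
def IsNeumannKernelSol (β βc : ℝ → ℝ → ℝ → ℝ) (p₁ p₂ q₁ q₂ t₀ : ℝ)
    (k kc : ℝ → ℝ → ℝ → ℝ) : Prop :=
  (∀ t ∈ Set.Ioo (0:ℝ) t₀, ContDiffOn ℝ 2 (fun p : ℝ × ℝ => k p.1 p.2 t) Omega)
  ∧ (∀ t ∈ Set.Ioo (0:ℝ) t₀, ContDiffOn ℝ 2 (fun p : ℝ × ℝ => kc p.1 p.2 t) Omega)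
  ∧ (∀ x y : ℝ, (x, y) ∈ Omega → ∀ t ∈ Set.Ioo (0:ℝ) t₀,
      DifferentiableAt ℝ (fun t' => k x y t') t ∧ DifferentiableAt ℝ (fun t' => kc x y t') t)
  ∧ (∀ x y : ℝ, (x, y) ∈ Omega → ∀ t ∈ Set.Ioo (0:ℝ) t₀,
      pXX k x y t
        = pYY k x y t + β x y t * k x y t + βc x y t * kc x y t
          + p₁ * pT k x y t + p₂ * pT kc x y t
      ∧ pXX kc x y t
        = pYY kc x y t - βc x y t * k x y t + β x y t * kc x y t
          + q₁ * pT kc x y t + q₂ * pT k x y t)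
  ∧ (∀ x ∈ Set.Icc (0:ℝ) 1, ∀ t ∈ Set.Ioo (0:ℝ) t₀,
      k x x t = -(1 / 2) * ∫ γ in (0:ℝ)..x, β γ γ t
      ∧ kc x x t = (1 / 2) * ∫ γ in (0:ℝ)..x, βc γ γ t
      ∧ pX k x 0 t = 0 ∧ pX kc x 0 t = 0)
  ∧ (∀ t ∈ Set.Ioo (0:ℝ) t₀, k 0 0 t = 0 ∧ kc 0 0 t = 0)

/-! ### Double primitives -/

section DoublePrimitive

variable {E : Type*} [NormedAddCommGroup E] [NormedSpace ℝ E]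

/-- A function of two real variables with `C^n` partial derivatives is `C^(n+1)`. -/
theorem contDiff_succ_of_partials {n : ℕ} {f u v : ℝ → ℝ → E}
    (hu : ∀ x y, HasDerivAt (fun x' => f x' y) (u x y) x)
    (hv : ∀ x y, HasDerivAt (fun y' => f x y') (v x y) y)
    (cu : ContDiff ℝ n (fun p : ℝ × ℝ => u p.1 p.2))
    (cv : ContDiff ℝ n (fun p : ℝ × ℝ => v p.1 p.2)) :
    ContDiff ℝ (n + 1) (fun p : ℝ × ℝ => f p.1 p.2) := by
  have key : ∀ {w : ℝ → ℝ → E}, ContDiff ℝ n (fun p : ℝ × ℝ => w p.1 p.2) →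
      ContDiff ℝ n (fun p : ℝ × ℝ => ContinuousLinearMap.toSpanSingleton ℝ (w p.1 p.2)) :=
    fun h => (ContinuousLinearMap.toSpanSingletonCLE (𝕜 := ℝ) (E := E)).contDiff.comp h
  rw [contDiff_succ_iff_hasFDerivAt]
  refine ⟨fun p => (ContinuousLinearMap.toSpanSingleton ℝ (u p.1 p.2)).coprod
    (ContinuousLinearMap.toSpanSingleton ℝ (v p.1 p.2)), ?_, fun p => ?_⟩
  · have : ContDiff ℝ n (fun p : ℝ × ℝ =>
        (ContinuousLinearMap.toSpanSingleton ℝ (u p.1 p.2)).comp (ContinuousLinearMap.fst ℝ ℝ ℝ) +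
        (ContinuousLinearMap.toSpanSingleton ℝ (v p.1 p.2)).comp
          (ContinuousLinearMap.snd ℝ ℝ ℝ)) :=
      ((key cu).clm_comp contDiff_const).add ((key cv).clm_comp contDiff_const)
    convert this using 2 with p
    ext <;> simp
  · exact (hasStrictFDerivAt_uncurry_coprod (f := f) (u := p)
      (f₁ := fun x y => ContinuousLinearMap.toSpanSingleton ℝ (u x y))
      (f₂ := fun x y => ContinuousLinearMap.toSpanSingleton ℝ (v x y))
      (Filter.Eventually.of_forall fun q => (hu q.1 q.2).hasFDerivAt)
      (Filter.Eventually.of_forall fun q => (hv q.1 q.2).hasFDerivAt)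
      (key cu).continuous.continuousAt (key cv).continuous.continuousAt).hasFDerivAt

/-- Differentiation under an interval integral with continuous derivative. -/
theorem hasDerivAt_intervalIntegral_param [CompleteSpace E] {F F₁ : ℝ → ℝ → E}
    (hF : Continuous fun p : ℝ × ℝ => F p.1 p.2) (hF₁ : Continuous fun p : ℝ × ℝ => F₁ p.1 p.2)
    (hd : ∀ x s, HasDerivAt (fun x' => F x' s) (F₁ x s) x) (a b x : ℝ) :
    HasDerivAt (fun x' => ∫ s in a..b, F x' s) (∫ s in a..b, F₁ x s) x := by
  obtain ⟨B, hB⟩ := ((isCompact_closedBall x 1).prod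
    (isCompact_uIcc (a := a) (b := b))).exists_bound_of_continuousOn hF₁.continuousOn
  refine (intervalIntegral.hasDerivAt_integral_of_dominated_loc_of_deriv_le (bound := fun _ => B)
    (Metric.closedBall_mem_nhds x one_pos) ?_ ?_ ?_ ?_ ?_ ?_).2
  · exact Filter.Eventually.of_forall fun x' =>
      (hF.comp (Continuous.prodMk_right x')).aestronglyMeasurable
  · exact (hF.comp (Continuous.prodMk_right x)).intervalIntegrable _ _
  · exact (hF₁.comp (Continuous.prodMk_right x)).aestronglyMeasurable
  · exact Filter.Eventually.of_forall fun s hs x' hx' => hB (x', s) ⟨hx', uIoc_subset_uIcc hs⟩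
  · simp
  · exact Filter.Eventually.of_forall fun s _ x' _ => hd x' s

/-- The double primitive `∫₀ˣ ∫₀ʸ F`. -/
noncomputable def doublePrim (F : ℝ → ℝ → E) (x y : ℝ) : E :=
  ∫ s in (0:ℝ)..x, ∫ τ in (0:ℝ)..y, F s τ

variable {F : ℝ → ℝ → E}

theorem continuous_inner_integral (hF : Continuous fun p : ℝ × ℝ => F p.1 p.2) :
    Continuous fun p : ℝ × ℝ => ∫ τ in (0:ℝ)..p.2, F p.1 τ :=
  continuous_parametric_intervalIntegral_of_continuous
    (f := fun (p : ℝ × ℝ) τ => F p.1 τ) (by fun_prop) continuous_snd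

theorem continuous_outer_integral (hF : Continuous fun p : ℝ × ℝ => F p.1 p.2) :
    Continuous fun p : ℝ × ℝ => ∫ s in (0:ℝ)..p.1, F s p.2 :=
  continuous_parametric_intervalIntegral_of_continuous
    (f := fun (p : ℝ × ℝ) s => F s p.2) (by fun_prop) continuous_fst

/-- The partial derivatives of a `C¹` function of two variables exist and are continuous. -/
theorem exists_partials_of_contDiff_one (hF : ContDiff ℝ 1 fun p : ℝ × ℝ => F p.1 p.2) :
    ∃ F₁ F₂ : ℝ → ℝ → E, Continuous (fun p : ℝ × ℝ => F₁ p.1 p.2) ∧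
      Continuous (fun p : ℝ × ℝ => F₂ p.1 p.2) ∧
      (∀ x y, HasDerivAt (fun x' => F x' y) (F₁ x y) x) ∧
      (∀ x y, HasDerivAt (fun y' => F x y') (F₂ x y) y) := by
  have hc := hF.continuous_fderiv one_ne_zero
  refine ⟨fun x y => fderiv ℝ (fun p : ℝ × ℝ => F p.1 p.2) (x, y) (1, 0),
    fun x y => fderiv ℝ (fun p : ℝ × ℝ => F p.1 p.2) (x, y) (0, 1),
    hc.clm_apply continuous_const, hc.clm_apply continuous_const, fun x y => ?_, fun x y => ?_⟩
  · exact ((hF.differentiable one_ne_zero) (x, y)).hasFDerivAt.comp_hasDerivAt x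
      ((hasDerivAt_id x).prodMk (hasDerivAt_const x y))
  · exact ((hF.differentiable one_ne_zero) (x, y)).hasFDerivAt.comp_hasDerivAt y
      ((hasDerivAt_const y x).prodMk (hasDerivAt_id y))

variable [CompleteSpace E]

theorem hasDerivAt_inner_integral (hF : Continuous fun p : ℝ × ℝ => F p.1 p.2) (x y : ℝ) :
    HasDerivAt (fun y' => ∫ τ in (0:ℝ)..y', F x τ) (F x y) y :=
  integral_hasDerivAt_right ((hF.comp (Continuous.prodMk_right x)).intervalIntegrable _ _)
    (hF.comp (Continuous.prodMk_right x)).stronglyMeasurable.stronglyMeasurableAtFilter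
    (hF.comp (Continuous.prodMk_right x)).continuousAt

theorem hasDerivAt_outer_integral (hF : Continuous fun p : ℝ × ℝ => F p.1 p.2) (x y : ℝ) :
    HasDerivAt (fun x' => ∫ s in (0:ℝ)..x', F s y) (F x y) x :=
  integral_hasDerivAt_right ((hF.comp (Continuous.prodMk_left y)).intervalIntegrable _ _)
    (hF.comp (Continuous.prodMk_left y)).stronglyMeasurable.stronglyMeasurableAtFilter
    (hF.comp (Continuous.prodMk_left y)).continuousAt

theorem hasDerivAt_doublePrim_fst (hF : Continuous fun p : ℝ × ℝ => F p.1 p.2) (x y : ℝ) :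
    HasDerivAt (fun x' => doublePrim F x' y) (∫ τ in (0:ℝ)..y, F x τ) x :=
  hasDerivAt_outer_integral (F := fun x y => ∫ τ in (0:ℝ)..y, F x τ)
    (continuous_inner_integral hF) x y

theorem hasDerivAt_doublePrim_snd (hF : Continuous fun p : ℝ × ℝ => F p.1 p.2) (x y : ℝ) :
    HasDerivAt (fun y' => doublePrim F x y') (∫ s in (0:ℝ)..x, F s y) y :=
  hasDerivAt_intervalIntegral_param (F := fun y' s => ∫ τ in (0:ℝ)..y', F s τ)
    (F₁ := fun y' s => F s y') ((continuous_inner_integral hF).comp continuous_swap)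
    (hF.comp continuous_swap) (fun y' s => hasDerivAt_inner_integral hF s y') 0 x y

theorem contDiff_one_doublePrim (hF : Continuous fun p : ℝ × ℝ => F p.1 p.2) :
    ContDiff ℝ 1 (fun p : ℝ × ℝ => doublePrim F p.1 p.2) := by
  have := contDiff_succ_of_partials (n := 0) (hasDerivAt_doublePrim_fst hF)
    (hasDerivAt_doublePrim_snd hF)
    (by simpa [contDiff_zero] using continuous_inner_integral hF)
    (by simpa [contDiff_zero] using continuous_outer_integral hF)
  simpa using this

theorem contDiff_one_inner_integral (hF : ContDiff ℝ 1 fun p : ℝ × ℝ => F p.1 p.2) :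
    ContDiff ℝ 1 fun p : ℝ × ℝ => ∫ τ in (0:ℝ)..p.2, F p.1 τ := by
  obtain ⟨F₁, F₂, c₁, c₂, h₁, h₂⟩ := exists_partials_of_contDiff_one hF
  have := contDiff_succ_of_partials (n := 0) (f := fun x y => ∫ τ in (0:ℝ)..y, F x τ)
    (fun x y => hasDerivAt_intervalIntegral_param hF.continuous c₁ h₁ 0 y x)
    (hasDerivAt_inner_integral hF.continuous)
    (by simpa [contDiff_zero] using continuous_inner_integral c₁)
    (by simpa [contDiff_zero] using hF.continuous)
  simpa using this

theorem contDiff_one_outer_integral (hF : ContDiff ℝ 1 fun p : ℝ × ℝ => F p.1 p.2) :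
    ContDiff ℝ 1 fun p : ℝ × ℝ => ∫ s in (0:ℝ)..p.1, F s p.2 :=
  (contDiff_one_inner_integral (F := fun x y => F y x)
    (hF.comp (contDiff_snd.prodMk contDiff_fst))).comp (contDiff_snd.prodMk contDiff_fst)

theorem contDiff_two_doublePrim (hF : ContDiff ℝ 1 fun p : ℝ × ℝ => F p.1 p.2) :
    ContDiff ℝ 2 (fun p : ℝ × ℝ => doublePrim F p.1 p.2) := by
  have := contDiff_succ_of_partials (n := 1) (hasDerivAt_doublePrim_fst hF.continuous)
    (hasDerivAt_doublePrim_snd hF.continuous)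
    (by simpa using contDiff_one_inner_integral hF)
    (by simpa using contDiff_one_outer_integral hF)
  norm_num at this
  exact this

end DoublePrimitive

/-- Chain rule along the characteristic directions. -/
theorem hasDerivAt_comp_characteristics {G G₁ G₂ : ℝ → ℝ → ℝ}
    (hG : ContDiff ℝ 1 fun p : ℝ × ℝ => G p.1 p.2)
    (h₁ : ∀ x y, HasDerivAt (fun x' => G x' y) (G₁ x y) x)
    (h₂ : ∀ x y, HasDerivAt (fun y' => G x y') (G₂ x y) y) (x y : ℝ) :
    HasDerivAt (fun x' => G (x' + y) (x' - y)) (G₁ (x + y) (x - y) + G₂ (x + y) (x - y)) x ∧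
    HasDerivAt (fun y' => G (x + y') (x - y')) (G₁ (x + y) (x - y) - G₂ (x + y) (x - y)) y := by
  have hd := fun q : ℝ × ℝ => ((hG.differentiable one_ne_zero) q).hasFDerivAt
  have e₁ : fderiv ℝ (fun p : ℝ × ℝ => G p.1 p.2) (x + y, x - y) (1, 0) = G₁ (x + y) (x - y) := by
    refine HasDerivAt.unique (f := fun x' => G x' (x - y)) ?_ (h₁ _ _)
    exact (hd (x + y, x - y)).comp_hasDerivAt (x + y)
      ((hasDerivAt_id (x + y)).prodMk (hasDerivAt_const (x + y) (x - y)))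
  have e₂ : fderiv ℝ (fun p : ℝ × ℝ => G p.1 p.2) (x + y, x - y) (0, 1) = G₂ (x + y) (x - y) := by
    refine HasDerivAt.unique (f := fun y' => G (x + y) y') ?_ (h₂ _ _)
    exact (hd (x + y, x - y)).comp_hasDerivAt (x - y)
      ((hasDerivAt_const (x - y) (x + y)).prodMk (hasDerivAt_id (x - y)))
  constructor
  · have := (hd (x + y, x - y)).comp_hasDerivAt x
      (((hasDerivAt_id x).add_const y).prodMk ((hasDerivAt_id x).sub_const y))
    rw [← e₁, ← e₂, ← map_add]
    simpa using! this
  · have := (hd (x + y, x - y)).comp_hasDerivAt y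
      (((hasDerivAt_id y).const_add x).prodMk ((hasDerivAt_id y).const_sub x))
    rw [← e₁, ← e₂, ← map_sub]
    simpa using! this

/-- The d'Alembert representation solves the inhomogeneous wave equation, and is `C²`. -/
theorem wave_equation_dAlembert {F : ℝ → ℝ → ℝ} {e₁ e₂ : ℝ → ℝ}
    (hF : ContDiff ℝ 1 fun p : ℝ × ℝ => F p.1 p.2) (h₁ : ContDiff ℝ 2 e₁) (h₂ : ContDiff ℝ 2 e₂)
    {k : ℝ → ℝ → ℝ}
    (hk : ∀ x y, k x y = e₁ (x + y) - e₂ (x - y) + 1 / 4 * doublePrim F (x + y) (x - y)) :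
    ContDiff ℝ 2 (fun p : ℝ × ℝ => k p.1 p.2) ∧ ∀ x y,
      deriv (fun x' => deriv (fun x'' => k x'' y) x') x
        = deriv (fun y' => deriv (fun y'' => k x y'') y') y + F (x + y) (x - y) := by
  have hP := contDiff_two_doublePrim hF
  have hU := contDiff_one_inner_integral hF
  have hV := contDiff_one_outer_integral hF
  have dP := hasDerivAt_comp_characteristics (hP.of_le (by norm_num))
    (hasDerivAt_doublePrim_fst hF.continuous) (hasDerivAt_doublePrim_snd hF.continuous)
  obtain ⟨F₁, F₂, c₁, c₂, d₁, d₂⟩ := exists_partials_of_contDiff_one hF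
  have dU := hasDerivAt_comp_characteristics (G := fun x y => ∫ τ in (0:ℝ)..y, F x τ) hU
    (fun x y => hasDerivAt_intervalIntegral_param hF.continuous c₁ d₁ 0 y x)
    (hasDerivAt_inner_integral hF.continuous)
  have dV := hasDerivAt_comp_characteristics (G := fun x y => ∫ s in (0:ℝ)..x, F s y) hV
    (hasDerivAt_outer_integral hF.continuous)
    (fun x y => hasDerivAt_intervalIntegral_param (F := fun y s => F s y) (F₁ := fun y s => F₂ s y)
      (hF.continuous.comp continuous_swap) (c₂.comp continuous_swap) (fun y s => d₂ s y) 0 x y)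
  have e1 : ∀ {e : ℝ → ℝ}, ContDiff ℝ 2 e → ∀ z, HasDerivAt e (deriv e z) z := fun h z =>
    (h.differentiable two_ne_zero z).hasDerivAt
  have e2 : ∀ {e : ℝ → ℝ}, ContDiff ℝ 2 e → ∀ z, HasDerivAt (deriv e) (deriv (deriv e) z) z :=
    fun {e} h z => ((h.differentiable_deriv_two) z).hasDerivAt
  obtain rfl : k = fun x y => e₁ (x + y) - e₂ (x - y) + 1 / 4 * doublePrim F (x + y) (x - y) := by
    ext x y; exact hk x y
  refine ⟨?_, fun x y => ?_⟩
  · have := hP.comp ((contDiff_fst (𝕜 := ℝ) (E := ℝ) (F := ℝ)).add contDiff_snd |>.prodMk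
      ((contDiff_fst (𝕜 := ℝ) (E := ℝ) (F := ℝ)).sub contDiff_snd))
    exact ((h₁.comp (contDiff_fst.add contDiff_snd)).sub
      (h₂.comp (contDiff_fst.sub contDiff_snd))).add (contDiff_const.mul this)
  · have x1 : ∀ x', deriv (fun x'' => e₁ (x'' + y) - e₂ (x'' - y)
        + 1 / 4 * doublePrim F (x'' + y) (x'' - y)) x' = deriv e₁ (x' + y) - deriv e₂ (x' - y)
        + 1 / 4 * ((∫ τ in (0:ℝ)..(x' - y), F (x' + y) τ) +
            ∫ s in (0:ℝ)..(x' + y), F s (x' - y)) := fun x' =>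
      ((((e1 h₁ (x' + y)).comp_add_const x' y).sub ((e1 h₂ (x' - y)).comp_sub_const x' y)).add
        ((dP x' y).1.const_mul (1 / 4))).deriv
    have y1 : ∀ y', deriv (fun y'' => e₁ (x + y'') - e₂ (x - y'')
        + 1 / 4 * doublePrim F (x + y'') (x - y'')) y' = deriv e₁ (x + y') - -deriv e₂ (x - y')
        + 1 / 4 * ((∫ τ in (0:ℝ)..(x - y'), F (x + y') τ) -
            ∫ s in (0:ℝ)..(x + y'), F s (x - y')) := fun y' =>
      ((((e1 h₁ (x + y')).comp_const_add x y').sub ((e1 h₂ (x - y')).comp_const_sub x y')).add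
        ((dP x y').2.const_mul (1 / 4))).deriv
    simp only [x1, y1]
    refine Eq.trans
      ((((e2 h₁ (x + y)).comp_add_const x y).sub ((e2 h₂ (x - y)).comp_sub_const x y)).add
        (((dU x y).1.add (dV x y).1).const_mul (1 / 4))).deriv
      (Eq.trans ?_ (congrArg (· + F (x + y) (x - y))
      ((((e2 h₁ (x + y)).comp_const_add x y).sub ((e2 h₂ (x - y)).comp_const_sub x y).neg).add
        (((dU x y).2.sub (dV x y).2).const_mul (1 / 4))).deriv.symm))
    ring

/-! ### The coefficient recursion as a fixed point problem -/

section Coefficients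

/-- The `n`-th time coefficient of `λ K + p ∂ₜ K`. -/
noncomputable def sourceCoeff (p : ℂ) (lam u : ℕ → ℝ → ℝ → ℂ) (n : ℕ) (s τ : ℝ) : ℂ :=
  (∑ ij ∈ Finset.HasAntidiagonal.antidiagonal n, lam ij.1 s τ * u ij.2 s τ) + p * ((n + 1) * u (n + 1) s τ)

theorem continuous_sourceCoeff {p : ℂ} {lam u : ℕ → ℝ → ℝ → ℂ}
    (hlam : ∀ n, Continuous fun q : ℝ × ℝ => lam n q.1 q.2)
    (hu : ∀ n, Continuous fun q : ℝ × ℝ => u n q.1 q.2) (n : ℕ) :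
    Continuous fun q : ℝ × ℝ => sourceCoeff p lam u n q.1 q.2 := by
  unfold sourceCoeff
  exact (continuous_finsetSum _ fun ij _ => (hlam ij.1).mul (hu ij.2)).add
    (continuous_const.mul (continuous_const.mul (hu (n + 1))))

theorem sourceCoeff_sub (p : ℂ) (lam u v : ℕ → ℝ → ℝ → ℂ) (n : ℕ) (s τ : ℝ) :
    sourceCoeff p lam u n s τ - sourceCoeff p lam v n s τ
      = sourceCoeff p lam (fun m s τ => u m s τ - v m s τ) n s τ := by
  simp only [sourceCoeff, mul_sub, Finset.sum_sub_distrib]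
  ring

/-- The integral of `F` over the characteristic rectangle `[η, ξ] × [0, η]`. -/
noncomputable def charIntegral (F : ℝ → ℝ → ℂ) (ξ η : ℝ) : ℂ :=
  ∫ s in η..ξ, ∫ τ in (0:ℝ)..η, F s τ

theorem charIntegral_eq_doublePrim {F : ℝ → ℝ → ℂ} (hF : Continuous fun q : ℝ × ℝ => F q.1 q.2)
    (ξ η : ℝ) : charIntegral F ξ η = doublePrim F ξ η - doublePrim F η η := by
  have h : ∀ a b : ℝ, IntervalIntegrable (fun s => ∫ τ in (0:ℝ)..η, F s τ) MeasureTheory.volume a b :=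
    fun a b => ((continuous_inner_integral hF).comp (Continuous.prodMk_left η)).intervalIntegrable a b
  rw [charIntegral, doublePrim, doublePrim, integral_interval_sub_left (h 0 ξ) (h 0 η)]

theorem continuous_charIntegral {F : ℝ → ℝ → ℂ} (hF : Continuous fun q : ℝ × ℝ => F q.1 q.2) :
    Continuous fun q : ℝ × ℝ => charIntegral F q.1 q.2 := by
  simp only [charIntegral_eq_doublePrim hF]
  have := (contDiff_one_doublePrim hF).continuous
  exact this.sub (this.comp (continuous_snd.prodMk continuous_snd))

theorem charIntegral_sub {F G : ℝ → ℝ → ℂ} (hF : Continuous fun q : ℝ × ℝ => F q.1 q.2)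
    (hG : Continuous fun q : ℝ × ℝ => G q.1 q.2) (ξ η : ℝ) :
    charIntegral F ξ η - charIntegral G ξ η = charIntegral (fun s τ => F s τ - G s τ) ξ η := by
  unfold charIntegral
  rw [← integral_sub]
  · congr 1
    ext s
    rw [← integral_sub]
    · exact (hF.comp (Continuous.prodMk_right s)).intervalIntegrable _ _
    · exact (hG.comp (Continuous.prodMk_right s)).intervalIntegrable _ _
  · exact ((continuous_inner_integral hF).comp (Continuous.prodMk_left η)).intervalIntegrable _ _
  · exact ((continuous_inner_integral hG).comp (Continuous.prodMk_left η)).intervalIntegrable _ _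

theorem integral_exp_mul_le {γ : ℝ} (hγ : 0 < γ) (a b : ℝ) :
    ∫ s in a..b, Real.exp (γ * s) ≤ Real.exp (γ * b) / γ := by
  rw [intervalIntegral.integral_comp_mul_left (fun x => Real.exp x) hγ.ne', integral_exp, smul_eq_mul,
    div_eq_inv_mul]
  gcongr
  linarith [Real.exp_pos (γ * a)]

theorem norm_charIntegral_le {F : ℝ → ℝ → ℂ} {A γ ξ η : ℝ} (hA : 0 ≤ A) (hγ : 0 < γ) (hη : 0 ≤ η)
    (hηξ : η ≤ ξ) (hF : ∀ s ∈ Icc η ξ, ∀ τ ∈ Icc 0 η, ‖F s τ‖ ≤ A * Real.exp (γ * (s + τ))) :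
    ‖charIntegral F ξ η‖ ≤ A / γ ^ 2 * Real.exp (γ * (ξ + η)) := by
  have inner : ∀ s ∈ Icc η ξ, ‖∫ τ in (0:ℝ)..η, F s τ‖
      ≤ A * Real.exp (γ * η) / γ * Real.exp (γ * s) := fun s hs =>
    calc ‖∫ τ in (0:ℝ)..η, F s τ‖
      _ ≤ ∫ τ in (0:ℝ)..η, A * Real.exp (γ * s) * Real.exp (γ * τ) := by
        refine norm_integral_le_of_norm_le hη (Filter.Eventually.of_forall fun τ hτ => ?_)
          (by apply Continuous.intervalIntegrable; fun_prop)
        rw [mul_assoc, ← Real.exp_add, ← mul_add]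
        exact hF s hs τ (Ioc_subset_Icc_self hτ)
      _ = A * Real.exp (γ * s) * ∫ τ in (0:ℝ)..η, Real.exp (γ * τ) := by
        rw [integral_const_mul]
      _ ≤ A * Real.exp (γ * s) * (Real.exp (γ * η) / γ) := by
        gcongr
        exact integral_exp_mul_le hγ _ _
      _ = _ := by ring
  calc ‖charIntegral F ξ η‖
    _ ≤ ∫ s in η..ξ, A * Real.exp (γ * η) / γ * Real.exp (γ * s) :=
      norm_integral_le_of_norm_le hηξ
        (Filter.Eventually.of_forall fun s hs => inner s (Ioc_subset_Icc_self hs))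
        (by apply Continuous.intervalIntegrable; fun_prop)
    _ = A * Real.exp (γ * η) / γ * ∫ s in η..ξ, Real.exp (γ * s) := by
      rw [integral_const_mul]
    _ ≤ A * Real.exp (γ * η) / γ * (Real.exp (γ * ξ) / γ) := by
      gcongr
      exact integral_exp_mul_le hγ _ _
    _ = _ := by
      rw [mul_add, Real.exp_add]
      field_simp

/-- Growth rate of the weight attached to the `n`-th time coefficient. -/
noncomputable def weightRate (μ : ℝ) (n : ℕ) : ℝ := μ * √(n + μ ^ 2)

theorem weightRate_sq (μ : ℝ) (n : ℕ) : weightRate μ n ^ 2 = μ ^ 2 * (n + μ ^ 2) := by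
  rw [weightRate, mul_pow, Real.sq_sqrt (by positivity)]

theorem weightRate_pos {μ : ℝ} (hμ : 0 < μ) (n : ℕ) : 0 < weightRate μ n := by
  unfold weightRate; positivity

theorem weightRate_mono {μ : ℝ} (hμ : 0 < μ) : Monotone (weightRate μ) := fun m n h => by
  unfold weightRate
  gcongr

theorem weightRate_succ_le {μ : ℝ} (hμ : 0 < μ) (n : ℕ) :
    weightRate μ (n + 1) ≤ weightRate μ n + 1 := by
  have h0 := weightRate_pos hμ n
  have h2 : μ ^ 2 ≤ weightRate μ n := by
    have : μ ≤ √(n + μ ^ 2) := Real.le_sqrt_of_sq_le (by simp)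
    calc μ ^ 2 = μ * μ := sq μ
      _ ≤ weightRate μ n := by unfold weightRate; gcongr
  refine le_of_sq_le_sq ?_ (by linarith)
  have e1 := weightRate_sq μ n
  have e2 := weightRate_sq μ (n + 1)
  push_cast at e2
  nlinarith

theorem norm_sourceCoeff_le {p : ℂ} {lam u : ℕ → ℝ → ℝ → ℂ} {C B μ : ℝ} (hC : 0 ≤ C) (hB : 0 ≤ B)
    (hμ : 0 < μ) (hlam : ∀ n s τ, ‖lam n s τ‖ ≤ C) {s τ : ℝ} (h0 : 0 ≤ s + τ) (h4 : s + τ ≤ 4)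
    (hu : ∀ n, ‖u n s τ‖ ≤ B * Real.exp (weightRate μ n * (s + τ))) (n : ℕ) :
    ‖sourceCoeff p lam u n s τ‖
      ≤ (C + ‖p‖ * Real.exp 4) * B * (n + 1) * Real.exp (weightRate μ n * (s + τ)) := by
  have hsum : ‖∑ ij ∈ Finset.HasAntidiagonal.antidiagonal n, lam ij.1 s τ * u ij.2 s τ‖
      ≤ (n + 1) * (C * (B * Real.exp (weightRate μ n * (s + τ)))) := by
    refine (norm_sum_le_of_le _ (f := fun ij : ℕ × ℕ => lam ij.1 s τ * u ij.2 s τ)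
      (n := fun _ => C * (B * Real.exp (weightRate μ n * (s + τ)))) fun ij hij => ?_).trans_eq
      (by simp)
    rw [norm_mul]
    gcongr
    · exact hlam _ _ _
    · refine (hu _).trans ?_
      have : ij.2 ≤ n := by
        have := Finset.HasAntidiagonal.mem_antidiagonal.1 hij
        omega
      gcongr
      exact weightRate_mono hμ this
  have hder : ‖p * ((n + 1) * u (n + 1) s τ)‖
      ≤ ‖p‖ * ((n + 1) * (B * (Real.exp (weightRate μ n * (s + τ)) * Real.exp 4))) := by
    have hn : ‖(n + 1 : ℂ)‖ = n + 1 := by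
      rw [← Nat.cast_succ, Complex.norm_natCast]; simp
    rw [norm_mul, norm_mul, hn]
    gcongr
    refine (hu _).trans ?_
    rw [← Real.exp_add]
    gcongr
    nlinarith [weightRate_succ_le hμ n]
  refine (norm_add_le _ _).trans ((add_le_add hsum hder).trans_eq ?_)
  ring

theorem norm_charIntegral_sourceCoeff_le {p : ℂ} {lam u : ℕ → ℝ → ℝ → ℂ} {C B μ : ℝ} (hC : 0 ≤ C)
    (hB : 0 ≤ B) (hμ : 1 ≤ μ) (hμC : C + ‖p‖ * Real.exp 4 ≤ μ ^ 2)
    (hlam : ∀ n s τ, ‖lam n s τ‖ ≤ C)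
    (hu : ∀ n, ∀ s τ : ℝ, 0 ≤ s + τ → s + τ ≤ 4 →
      ‖u n s τ‖ ≤ B * Real.exp (weightRate μ n * (s + τ)))
    (n : ℕ) {ξ η : ℝ} (hη : 0 ≤ η) (hηξ : η ≤ ξ) (hξ : ξ ≤ 2) :
    ‖charIntegral (sourceCoeff p lam u n) ξ η‖ ≤ B * Real.exp (weightRate μ n * (ξ + η)) := by
  have hμ0 : 0 < μ := by linarith
  refine (norm_charIntegral_le (A := (C + ‖p‖ * Real.exp 4) * B * (n + 1)) (by positivity)
    (weightRate_pos hμ0 n) hη hηξ fun s hs τ hτ => ?_).trans ?_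
  · have h0 : 0 ≤ s + τ := by linarith [hs.1, hτ.1]
    have h4 : s + τ ≤ 4 := by linarith [hs.2, hτ.2]
    exact norm_sourceCoeff_le hC hB hμ0 hlam h0 h4 (fun m => hu m s τ h0 h4) n
  · gcongr
    rw [weightRate_sq, div_le_iff₀ (by positivity)]
    have h1 : (n + 1 : ℝ) ≤ n + μ ^ 2 := by nlinarith
    calc (C + ‖p‖ * Real.exp 4) * B * (n + 1) ≤ μ ^ 2 * B * (n + μ ^ 2) := by gcongr
      _ = _ := by ring

theorem exists_coefficient_solution (p : ℂ) {lam g : ℕ → ℝ → ℝ → ℂ} {C D : ℝ}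
    (clam : ∀ n, Continuous fun q : ℝ × ℝ => lam n q.1 q.2) (hlam : ∀ n s τ, ‖lam n s τ‖ ≤ C)
    (cg : ∀ n, Continuous fun q : ℝ × ℝ => g n q.1 q.2)
    (hg : ∀ n ξ η, 0 ≤ η → η ≤ ξ → ξ ≤ 2 → ‖g n ξ η‖ ≤ D) :
    ∃ (K : ℕ → ℝ → ℝ → ℂ) (μ M : ℝ), 0 < μ ∧
      (∀ n, Continuous fun q : ℝ × ℝ => K n q.1 q.2) ∧
      (∀ n ξ η, ‖K n ξ η‖ ≤ M * Real.exp (4 * weightRate μ n)) ∧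
      ∀ n ξ η, 0 ≤ η → η ≤ ξ → ξ ≤ 2 →
        K n ξ η = g n ξ η + 1 / 4 * charIntegral (sourceCoeff p lam K n) ξ η := by
  have hC : 0 ≤ C := (norm_nonneg _).trans (hlam 0 0 0)
  set μ : ℝ := 1 + C + ‖p‖ * Real.exp 4 with hμdef
  have hpe : 0 ≤ ‖p‖ * Real.exp 4 := by positivity
  have hμ1 : 1 ≤ μ := by linarith
  have hμ0 : 0 < μ := by linarith
  have hμC : C + ‖p‖ * Real.exp 4 ≤ μ ^ 2 := by nlinarith
  let w : ℕ → ℝ → ℝ → ℝ := fun n s τ => Real.exp (weightRate μ n * max 0 (min 4 (s + τ)))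
  have cw : ∀ n, Continuous fun q : ℝ × ℝ => w n q.1 q.2 := fun n => by
    simp only [w]; fun_prop
  have w_eq : ∀ n s τ, 0 ≤ s + τ → s + τ ≤ 4 → w n s τ = Real.exp (weightRate μ n * (s + τ)) :=
    fun n s τ h0 h4 => by simp only [w, min_eq_right h4, max_eq_right h0]
  have w_one : ∀ n s τ, 1 ≤ w n s τ := fun n s τ =>
    Real.one_le_exp (mul_nonneg (weightRate_pos hμ0 n).le (le_max_left _ _))
  have w_le : ∀ n s τ, w n s τ ≤ Real.exp (4 * weightRate μ n) := fun n s τ => by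
    have := (weightRate_pos hμ0 n).le
    rw [mul_comm 4]
    simp only [w]
    gcongr
    simp
  let X := BoundedContinuousFunction (ℕ × ℝ × ℝ) ℂ
  let U : X → ℕ → ℝ → ℝ → ℂ := fun v n s τ => w n s τ * v (n, s, τ)
  have cU : ∀ v n, Continuous fun q : ℝ × ℝ => U v n q.1 q.2 := fun v n =>
    (Complex.continuous_ofReal.comp (cw n)).mul
      (v.continuous.comp (continuous_const.prodMk (continuous_fst.prodMk continuous_snd)))
  have hU : ∀ v n s τ, 0 ≤ s + τ → s + τ ≤ 4 →
      ‖U v n s τ‖ ≤ ‖v‖ * Real.exp (weightRate μ n * (s + τ)) := fun v n s τ h0 h4 => by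
    simp only [U, norm_mul, w_eq n s τ h0 h4, Complex.norm_real, Real.norm_eq_abs, Real.abs_exp]
    rw [mul_comm]
    gcongr
    exact v.norm_coe_le_norm _
  let T : X → ℕ → ℝ → ℝ → ℂ := fun v n ξ η =>
    g n ξ η + 1 / 4 * charIntegral (sourceCoeff p lam (U v) n) ξ η
  have cT : ∀ v n, Continuous fun q : ℝ × ℝ => T v n q.1 q.2 := fun v n =>
    (cg n).add (continuous_const.mul (continuous_charIntegral (continuous_sourceCoeff clam (cU v) n)))
  let a : ℝ → ℝ := fun ξ => max 0 (min 2 ξ)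
  let b : ℝ → ℝ → ℝ := fun ξ η => max 0 (min (a ξ) η)
  have ha0 : ∀ ξ, 0 ≤ a ξ := fun ξ => le_max_left _ _
  have ha2 : ∀ ξ, a ξ ≤ 2 := fun ξ => by simp [a]
  have hb0 : ∀ ξ η, 0 ≤ b ξ η := fun ξ η => le_max_left _ _
  have hba : ∀ ξ η, b ξ η ≤ a ξ := fun ξ η => max_le (ha0 ξ) (min_le_left _ _)
  have wab : ∀ n ξ η, w n (a ξ) (b ξ η) = Real.exp (weightRate μ n * (a ξ + b ξ η)) :=
    fun n ξ η => w_eq _ _ _ (by linarith [ha0 ξ, hb0 ξ η]) (by linarith [ha2 ξ, hba ξ η])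
  let S₀ : X → ℕ × ℝ × ℝ → ℂ := fun v q =>
    T v q.1 (a q.2.1) (b q.2.1 q.2.2) / w q.1 (a q.2.1) (b q.2.1 q.2.2)
  have cS : ∀ v, Continuous (S₀ v) := fun v => by
    rw [continuous_prod_of_discrete_left]
    intro n
    have cπ : Continuous fun q : ℝ × ℝ => (a q.1, b q.1 q.2) := by
      simp only [a, b]; fun_prop
    exact ((cT v n).comp cπ).div (Complex.continuous_ofReal.comp ((cw n).comp cπ)) fun q =>
      Complex.ofReal_ne_zero.2 (by linarith [w_one n (a q.1) (b q.1 q.2)])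
  have hS : ∀ v q, ‖S₀ v q‖ ≤ D + 1 / 4 * ‖v‖ := by
    rintro v ⟨n, ξ, η⟩
    have h1 := w_one n (a ξ) (b ξ η)
    have h2 := norm_charIntegral_sourceCoeff_le hC (norm_nonneg v) hμ1 hμC hlam (hU v) n
      (hb0 ξ η) (hba ξ η) (ha2 ξ)
    have h3 := hg n _ _ (hb0 ξ η) (hba ξ η) (ha2 ξ)
    have hD : 0 ≤ D := (norm_nonneg _).trans h3
    rw [← wab] at h2
    simp only [S₀, T]
    rw [norm_div, Complex.norm_real, Real.norm_eq_abs, abs_of_pos (by linarith),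
      div_le_iff₀ (by linarith)]
    refine (norm_add_le _ _).trans ?_
    rw [norm_mul, add_mul, mul_assoc]
    refine add_le_add (h3.trans (le_mul_of_one_le_right hD h1)) ?_
    have : ‖(1 / 4 : ℂ)‖ = 1 / 4 := by norm_num
    rw [this]
    gcongr
  let S : X → X := fun v => BoundedContinuousFunction.ofNormedAddCommGroup (S₀ v) (cS v) _ (hS v)
  have hcontr : ContractingWith (1 / 2) S := by
    refine ⟨by rw [← NNReal.coe_lt_coe]; norm_num, LipschitzWith.of_dist_le_mul fun u v => ?_⟩
    rw [BoundedContinuousFunction.dist_le (by positivity)]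
    rintro ⟨n, ξ, η⟩
    have h1 := w_one n (a ξ) (b ξ η)
    have hUd : ∀ m s τ, U u m s τ - U v m s τ = U (u - v) m s τ := fun m s τ =>
      (mul_sub _ _ _).symm
    have h2 := norm_charIntegral_sourceCoeff_le hC (norm_nonneg (u - v)) hμ1 hμC hlam (hU (u - v)) n
      (hb0 ξ η) (hba ξ η) (ha2 ξ)
    have h4 : T u n (a ξ) (b ξ η) - T v n (a ξ) (b ξ η)
        = 1 / 4 * charIntegral (sourceCoeff p lam (U (u - v)) n) (a ξ) (b ξ η) := by
      simp only [T]
      rw [add_sub_add_left_eq_sub, ← mul_sub,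
        charIntegral_sub (continuous_sourceCoeff clam (cU u) n) (continuous_sourceCoeff clam (cU v) n)]
      simp only [sourceCoeff_sub, hUd]
    rw [← wab] at h2
    change dist (S₀ u (n, ξ, η)) (S₀ v (n, ξ, η)) ≤ _
    rw [dist_eq_norm, dist_eq_norm]
    simp only [S₀]
    rw [← sub_div, h4, norm_div, Complex.norm_real, Real.norm_eq_abs, abs_of_pos (by linarith),
      div_le_iff₀ (by linarith), norm_mul]
    have : ‖(1 / 4 : ℂ)‖ = 1 / 4 := by norm_num
    rw [this]
    have h5 : ((1 / 2 : NNReal) : ℝ) = 1 / 2 := by norm_num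
    rw [h5, mul_assoc]
    gcongr
    norm_num
  obtain ⟨v, hv⟩ : ∃ v, S v = v := ⟨_, hcontr.fixedPoint_isFixedPt⟩
  refine ⟨U v, μ, ‖v‖, hμ0, cU v, fun n ξ η => ?_, fun n ξ η hη hηξ hξ => ?_⟩
  · simp only [U, norm_mul, Complex.norm_real, Real.norm_eq_abs]
    rw [abs_of_pos (by linarith [w_one n ξ η]), mul_comm]
    gcongr
    · exact v.norm_coe_le_norm _
    · exact w_le n ξ η
  · have haξ : a ξ = ξ := by simp only [a]; rw [min_eq_right hξ, max_eq_right (hη.trans hηξ)]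
    have hbη : b ξ η = η := by simp only [b]; rw [haξ, min_eq_right hηξ, max_eq_right hη]
    have h1 : S₀ v (n, ξ, η) = v (n, ξ, η) := congrArg (fun z : X => z (n, ξ, η)) hv
    simp only [S₀, haξ, hbη] at h1
    change (w n ξ η : ℂ) * v (n, ξ, η) = T v n ξ η
    rw [← h1, mul_div_cancel₀]
    exact Complex.ofReal_ne_zero.2 (by linarith [w_one n ξ η])

end Coefficients

/-! ### Power series in time with space-dependent coefficients -/

section TimeSeries

/-- The coefficients `u n` grow subexponentially, uniformly in the space variables. -/
def TimeBounded (u : ℕ → ℝ → ℝ → ℂ) : Prop :=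
  ∀ r ∈ Ico (0:ℝ) 1, ∃ B : ℝ, ∀ n s τ, ‖u n s τ‖ * r ^ n ≤ B

/-- The power series in `t` with coefficients `u n`. -/
noncomputable def timeSeries (u : ℕ → ℝ → ℝ → ℂ) (t s τ : ℝ) : ℂ := ∑' n, u n s τ * (t:ℂ) ^ n

/-- The coefficients of the time derivative of a power series. -/
def timeDeriv (u : ℕ → ℝ → ℝ → ℂ) (n : ℕ) (s τ : ℝ) : ℂ := (n + 1) * u (n + 1) s τ

theorem exists_le_mul_pow_of_lt_one {q : ℝ} (h0 : 0 ≤ q) (h1 : q < 1) :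
    ∃ A : ℝ, ∀ n : ℕ, (n + 1) * q ^ n ≤ A := by
  have h := (tendsto_self_mul_const_pow_of_lt_one h0 h1).add
    (tendsto_pow_atTop_nhds_zero_of_lt_one h0 h1)
  obtain ⟨A, hA⟩ := h.bddAbove_range
  refine ⟨A, fun n => ?_⟩
  have : (n:ℝ) * q ^ n + q ^ n ≤ A := hA (mem_range_self n)
  linarith

theorem TimeBounded.of_linear {u : ℕ → ℝ → ℝ → ℂ}
    (h : ∀ r ∈ Ioo (0:ℝ) 1, ∃ B : ℝ, ∀ n s τ, ‖u n s τ‖ * r ^ n ≤ (n + 1) * B) :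
    TimeBounded u := by
  rintro r ⟨h0, h1⟩
  have hr' : (0:ℝ) < (1 + r) / 2 := by linarith
  obtain ⟨B, hB⟩ := h ((1 + r) / 2) ⟨hr', by linarith⟩
  have hB0 : 0 ≤ B := by
    have := hB 0 0 0
    simp only [pow_zero, mul_one, Nat.cast_zero, zero_add, one_mul] at this
    exact (norm_nonneg _).trans this
  obtain ⟨A, hA⟩ := exists_le_mul_pow_of_lt_one (q := r / ((1 + r) / 2)) (by positivity)
    (by rw [div_lt_one hr']; linarith)
  refine ⟨A * B, fun n s τ => ?_⟩
  calc ‖u n s τ‖ * r ^ n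
    _ = ‖u n s τ‖ * ((1 + r) / 2) ^ n * (r / ((1 + r) / 2)) ^ n := by
      rw [mul_assoc, ← mul_pow, mul_div_cancel₀ _ hr'.ne']
    _ ≤ (n + 1) * B * (r / ((1 + r) / 2)) ^ n :=
      mul_le_mul_of_nonneg_right (hB n s τ) (by positivity)
    _ = (n + 1) * (r / ((1 + r) / 2)) ^ n * B := by ring
    _ ≤ A * B := by
      gcongr
      exact hA n

theorem TimeBounded.of_norm_le {u : ℕ → ℝ → ℝ → ℂ} {C : ℝ} (h : ∀ n s τ, ‖u n s τ‖ ≤ C) :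
    TimeBounded u := fun _ hr => ⟨C, fun n s τ =>
  (mul_le_of_le_one_right (norm_nonneg _) (pow_le_one₀ hr.1 hr.2.le)).trans (h n s τ)⟩

theorem TimeBounded.of_weightRate {u : ℕ → ℝ → ℝ → ℂ} {μ M : ℝ}
    (h : ∀ n s τ, ‖u n s τ‖ ≤ M * Real.exp (4 * weightRate μ n)) : TimeBounded u := by
  have hM : 0 ≤ M :=
    nonneg_of_mul_nonneg_left ((norm_nonneg _).trans (h 0 0 0)) (Real.exp_pos _)
  refine .of_linear ?_
  rintro r ⟨h0, h1⟩
  have hc : 0 < -Real.log r := by linarith [Real.log_neg h0 h1]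
  set c := -Real.log r with hcdef
  refine ⟨M * Real.exp (c * μ ^ 2 + 4 * μ ^ 2 / c), fun n s τ => ?_⟩
  have hr : r ^ n = Real.exp (-(c * n)) := by
    rw [hcdef, neg_mul, neg_neg, mul_comm, Real.exp_nat_mul, Real.exp_log h0]
  have hw : 4 * weightRate μ n ≤ c * (n + μ ^ 2) + 4 * μ ^ 2 / c := by
    have hy : √((n:ℝ) + μ ^ 2) ^ 2 = n + μ ^ 2 := Real.sq_sqrt (by positivity)
    rw [weightRate]
    set y := √((n:ℝ) + μ ^ 2)
    have : c * y ^ 2 + 4 * μ ^ 2 / c - 4 * (μ * y) = (c * y - 2 * μ) ^ 2 / c := by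
      field_simp
      ring
    have h2 : 0 ≤ (c * y - 2 * μ) ^ 2 / c := by positivity
    nlinarith
  calc ‖u n s τ‖ * r ^ n
    _ ≤ M * Real.exp (4 * weightRate μ n) * Real.exp (-(c * n)) := by
      rw [hr]
      gcongr
      exact h n s τ
    _ ≤ M * Real.exp (c * μ ^ 2 + 4 * μ ^ 2 / c) := by
      rw [mul_assoc, ← Real.exp_add]
      refine mul_le_mul_of_nonneg_left (Real.exp_le_exp.2 ?_) hM
      linarith
    _ ≤ (n + 1) * (M * Real.exp (c * μ ^ 2 + 4 * μ ^ 2 / c)) :=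
      le_mul_of_one_le_left (by positivity) (by linarith [n.cast_nonneg (α := ℝ)])

theorem TimeBounded.timeDeriv {u : ℕ → ℝ → ℝ → ℂ} (hu : TimeBounded u) :
    TimeBounded (timeDeriv u) := by
  refine .of_linear ?_
  rintro r ⟨h0, h1⟩
  obtain ⟨B, hB⟩ := hu r ⟨h0.le, h1⟩
  refine ⟨B / r, fun n s τ => ?_⟩
  have hn : ‖(n + 1 : ℂ)‖ = n + 1 := by
    rw [← Nat.cast_succ, Complex.norm_natCast]; simp
  rw [_root_.timeDeriv, norm_mul, hn, mul_assoc]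
  gcongr
  rw [le_div_iff₀ h0, mul_assoc, ← pow_succ]
  exact hB (n + 1) s τ

theorem TimeBounded.add {u v : ℕ → ℝ → ℝ → ℂ} (hu : TimeBounded u) (hv : TimeBounded v) :
    TimeBounded fun n s τ => u n s τ + v n s τ := fun r hr => by
  obtain ⟨B, hB⟩ := hu r hr
  obtain ⟨B', hB'⟩ := hv r hr
  refine ⟨B + B', fun n s τ => ?_⟩
  have := hr.1
  calc _ ≤ (‖u n s τ‖ + ‖v n s τ‖) * r ^ n := by gcongr; exact norm_add_le _ _
    _ = _ := add_mul _ _ _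
    _ ≤ _ := add_le_add (hB n s τ) (hB' n s τ)

theorem TimeBounded.const_mul {u : ℕ → ℝ → ℝ → ℂ} (hu : TimeBounded u) (c : ℂ) :
    TimeBounded fun n s τ => c * u n s τ := fun r hr => by
  obtain ⟨B, hB⟩ := hu r hr
  refine ⟨‖c‖ * B, fun n s τ => ?_⟩
  rw [norm_mul, mul_assoc]
  gcongr
  exact hB n s τ

theorem TimeBounded.cauchyProduct {u v : ℕ → ℝ → ℝ → ℂ} (hu : TimeBounded u) (hv : TimeBounded v) :
    TimeBounded fun n s τ =>
      ∑ ij ∈ Finset.HasAntidiagonal.antidiagonal n, u ij.1 s τ * v ij.2 s τ := by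
  refine .of_linear fun r hr => ?_
  obtain ⟨B, hB⟩ := hu r (Ioo_subset_Ico_self hr)
  obtain ⟨B', hB'⟩ := hv r (Ioo_subset_Ico_self hr)
  have h0 := hr.1
  refine ⟨B * B', fun n s τ => ?_⟩
  have hn : ‖(r:ℂ) ^ n‖ = r ^ n := by
    rw [norm_pow, Complex.norm_real, Real.norm_eq_abs, abs_of_pos h0]
  rw [← hn, ← norm_mul, Finset.sum_mul]
  refine (norm_sum_le_of_le _ (n := fun _ => B * B') fun ij hij => ?_).trans_eq (by simp)
  rw [← Finset.HasAntidiagonal.mem_antidiagonal.1 hij, pow_add]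
  calc ‖u ij.1 s τ * v ij.2 s τ * ((r:ℂ) ^ ij.1 * (r:ℂ) ^ ij.2)‖
    _ = (‖u ij.1 s τ‖ * r ^ ij.1) * (‖v ij.2 s τ‖ * r ^ ij.2) := by
      simp only [norm_mul, norm_pow, Complex.norm_real, Real.norm_eq_abs, abs_of_pos h0]
      ring
    _ ≤ B * B' := mul_le_mul (hB _ s τ) (hB' _ s τ) (by positivity)
      ((by positivity : (0:ℝ) ≤ ‖u ij.1 s τ‖ * r ^ ij.1).trans (hB _ s τ))

theorem TimeBounded.sourceCoeff {p : ℂ} {lam u : ℕ → ℝ → ℝ → ℂ} (hlam : TimeBounded lam)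
    (hu : TimeBounded u) : TimeBounded (sourceCoeff p lam u) :=
  (hlam.cauchyProduct hu).add (hu.timeDeriv.const_mul p)

theorem TimeBounded.exists_summable {u : ℕ → ℝ → ℝ → ℂ} (hu : TimeBounded u) {r : ℝ} (h0 : 0 ≤ r)
    (h1 : r < 1) : ∃ b : ℕ → ℝ, Summable b ∧
      ∀ t : ℝ, |t| ≤ r → ∀ n s τ, ‖u n s τ * (t:ℂ) ^ n‖ ≤ b n := by
  have hr' : (0:ℝ) < (1 + r) / 2 := by linarith
  obtain ⟨B, hB⟩ := hu ((1 + r) / 2) ⟨hr'.le, by linarith⟩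
  refine ⟨fun n => B * (r / ((1 + r) / 2)) ^ n,
    (summable_geometric_of_lt_one (by positivity) (by rw [div_lt_one hr']; linarith)).mul_left B,
    fun t ht n s τ => ?_⟩
  rw [norm_mul, norm_pow, Complex.norm_real, Real.norm_eq_abs]
  calc ‖u n s τ‖ * |t| ^ n
    _ ≤ ‖u n s τ‖ * r ^ n := by gcongr
    _ = ‖u n s τ‖ * ((1 + r) / 2) ^ n * (r / ((1 + r) / 2)) ^ n := by
      rw [mul_assoc, ← mul_pow, mul_div_cancel₀ _ hr'.ne']
    _ ≤ B * (r / ((1 + r) / 2)) ^ n := by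
      gcongr
      exact hB n s τ

variable {u : ℕ → ℝ → ℝ → ℂ} {t : ℝ}

theorem TimeBounded.summable_norm (hu : TimeBounded u) (ht : |t| < 1) (s τ : ℝ) :
    Summable fun n => ‖u n s τ * (t:ℂ) ^ n‖ := by
  obtain ⟨b, hb, h⟩ := hu.exists_summable (abs_nonneg t) ht
  exact hb.of_nonneg_of_le (fun _ => norm_nonneg _) fun n => h t le_rfl n s τ

theorem TimeBounded.hasSum (hu : TimeBounded u) (ht : |t| < 1) (s τ : ℝ) :
    HasSum (fun n => u n s τ * (t:ℂ) ^ n) (timeSeries u t s τ) :=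
  (hu.summable_norm ht s τ).of_norm.hasSum

theorem exists_norm_timeSeries_le (hu : TimeBounded u) {r : ℝ} (h0 : 0 ≤ r) (h1 : r < 1) :
    ∃ B : ℝ, ∀ t : ℝ, |t| ≤ r → ∀ s τ, ‖timeSeries u t s τ‖ ≤ B := by
  obtain ⟨b, hb, h⟩ := hu.exists_summable h0 h1
  exact ⟨∑' n, b n, fun t ht s τ => tsum_of_norm_bounded hb.hasSum fun n => h t ht n s τ⟩

theorem continuous_timeSeries (hu : TimeBounded u)
    (cu : ∀ n, Continuous fun q : ℝ × ℝ => u n q.1 q.2) (ht : |t| < 1) :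
    Continuous fun q : ℝ × ℝ => timeSeries u t q.1 q.2 := by
  obtain ⟨b, hb, h⟩ := hu.exists_summable (abs_nonneg t) ht
  exact continuous_tsum (fun n => (cu n).mul continuous_const) hb
    fun n q => h t le_rfl n q.1 q.2

theorem continuous_timeDeriv (cu : ∀ n, Continuous fun q : ℝ × ℝ => u n q.1 q.2) (n : ℕ) :
    Continuous fun q : ℝ × ℝ => timeDeriv u n q.1 q.2 :=
  continuous_const.mul (cu (n + 1))

theorem hasDerivAt_timeSeries (hu : TimeBounded u) (ht : |t| < 1) (s τ : ℝ) :
    HasDerivAt (fun t' => timeSeries u t' s τ) (timeSeries (timeDeriv u) t s τ) t := by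
  obtain ⟨r, htr, hr1⟩ := exists_between ht
  have hr0 : 0 ≤ r := (abs_nonneg t).trans htr.le
  obtain ⟨b, hb, h⟩ := hu.timeDeriv.exists_summable hr0 hr1
  have hb' : Summable fun n : ℕ => if n = 0 then 0 else b (n - 1) := by
    rw [← summable_nat_add_iff 1]
    simpa using hb
  have hmem : t ∈ Metric.ball (0:ℝ) r := by simpa using htr
  have key := hasDerivAt_tsum_of_isPreconnected (g := fun n (t' : ℝ) => u n s τ * (t':ℂ) ^ n)
    (g' := fun n t' => u n s τ * (n * (t':ℂ) ^ (n - 1))) (u := fun n => if n = 0 then 0 else b (n - 1))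
    hb' Metric.isOpen_ball (convex_ball (0:ℝ) r).isPreconnected
    (fun n y _ => by
      have := ((hasDerivAt_id (y:ℂ)).pow n).comp_ofReal.const_mul (u n s τ)
      simpa using this)
    (fun n y hy => by
      rcases n with _ | n
      · simp
      · have := h y (by simpa using (mem_ball_zero_iff.1 hy).le) n s τ
        simp only [timeDeriv] at this
        simpa [mul_comm, mul_left_comm, mul_assoc] using this)
    hmem (hu.summable_norm ht s τ).of_norm hmem
  have hval : ∑' n, u n s τ * (n * (t:ℂ) ^ (n - 1)) = timeSeries (timeDeriv u) t s τ := by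
    have hs : Summable fun n : ℕ => u n s τ * (n * (t:ℂ) ^ (n - 1)) := by
      rw [← summable_nat_add_iff 1]
      refine (hu.timeDeriv.summable_norm ht s τ).of_norm.congr fun n => ?_
      simp only [timeDeriv, Nat.add_sub_cancel]
      push_cast
      ring
    rw [hs.tsum_eq_zero_add]
    simp only [Nat.cast_zero, zero_mul, mul_zero, zero_add, timeSeries, timeDeriv,
      Nat.add_sub_cancel]
    refine tsum_congr fun n => ?_
    push_cast
    ring
  rwa [hval] at key

theorem timeSeries_sourceCoeff {p : ℂ} {lam : ℕ → ℝ → ℝ → ℂ} (hlam : TimeBounded lam)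
    (hu : TimeBounded u) (ht : |t| < 1) (s τ : ℝ) :
    timeSeries (sourceCoeff p lam u) t s τ
      = timeSeries lam t s τ * timeSeries u t s τ + p * timeSeries (timeDeriv u) t s τ := by
  have h1 : timeSeries lam t s τ * timeSeries u t s τ
      = ∑' n, (∑ ij ∈ Finset.HasAntidiagonal.antidiagonal n, lam ij.1 s τ * u ij.2 s τ) * (t:ℂ) ^ n := by
    rw [timeSeries, timeSeries, tsum_mul_tsum_eq_tsum_sum_antidiagonal_of_summable_norm
      (hlam.summable_norm ht s τ) (hu.summable_norm ht s τ)]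
    refine tsum_congr fun n => ?_
    rw [Finset.sum_mul]
    refine Finset.sum_congr rfl fun ij hij => ?_
    rw [← Finset.HasAntidiagonal.mem_antidiagonal.1 hij, pow_add]
    ring
  rw [h1]
  have h2 := (((hlam.cauchyProduct hu).summable_norm ht s τ).of_norm.hasSum).add
    ((hu.timeDeriv.hasSum ht s τ).mul_left p)
  rw [← h2.tsum_eq, timeSeries]
  refine tsum_congr fun n => ?_
  rw [sourceCoeff, timeDeriv]
  ring

theorem hasSum_integral_timeSeries (hu : TimeBounded u)
    (cu : ∀ n, Continuous fun q : ℝ × ℝ => u n q.1 q.2) (ht : |t| < 1) (a b τ : ℝ) :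
    HasSum (fun n => (∫ s in a..b, u n s τ) * (t:ℂ) ^ n) (∫ s in a..b, timeSeries u t s τ) := by
  obtain ⟨c, hc, h⟩ := hu.exists_summable (abs_nonneg t) ht
  simp only [← integral_mul_const]
  refine intervalIntegral.hasSum_integral_of_dominated_convergence (fun n _ => c n) (fun n => ?_)
    (fun n => Filter.Eventually.of_forall fun s _ => h t le_rfl n s τ)
    (Filter.Eventually.of_forall fun _ _ => hc) intervalIntegrable_const
    (Filter.Eventually.of_forall fun s _ => hu.hasSum ht s τ)
  exact (((cu n).comp (Continuous.prodMk_left τ)).mul continuous_const).aestronglyMeasurable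

theorem hasSum_charIntegral_timeSeries (hu : TimeBounded u)
    (cu : ∀ n, Continuous fun q : ℝ × ℝ => u n q.1 q.2) (ht : |t| < 1) (ξ η : ℝ) :
    HasSum (fun n => charIntegral (u n) ξ η * (t:ℂ) ^ n) (charIntegral (timeSeries u t) ξ η) := by
  obtain ⟨c, hc, h⟩ := hu.exists_summable (abs_nonneg t) ht
  simp only [charIntegral, ← integral_mul_const]
  have inner : ∀ s, HasSum (fun n => ∫ τ in (0:ℝ)..η, u n s τ * (t:ℂ) ^ n)
      (∫ τ in (0:ℝ)..η, timeSeries u t s τ) := fun s => by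
    refine intervalIntegral.hasSum_integral_of_dominated_convergence (fun n _ => c n) (fun n => ?_)
      (fun n => Filter.Eventually.of_forall fun τ _ => h t le_rfl n s τ)
      (Filter.Eventually.of_forall fun _ _ => hc) intervalIntegrable_const
      (Filter.Eventually.of_forall fun τ _ => hu.hasSum ht s τ)
    exact (((cu n).comp (Continuous.prodMk_right s)).mul continuous_const).aestronglyMeasurable
  refine intervalIntegral.hasSum_integral_of_dominated_convergence (fun n _ => c n * |η|)
    (fun n => ?_) (fun n => Filter.Eventually.of_forall fun s _ => ?_)
    (Filter.Eventually.of_forall fun _ _ => hc.mul_right _) intervalIntegrable_const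
    (Filter.Eventually.of_forall fun s _ => inner s)
  · exact ((continuous_inner_integral (F := fun s τ => u n s τ * (t:ℂ) ^ n)
      ((cu n).mul continuous_const)).comp (Continuous.prodMk_left η)).aestronglyMeasurable
  · simpa using norm_integral_le_of_norm_le_const (a := 0) (b := η) (C := c n)
      (f := fun τ => u n s τ * (t:ℂ) ^ n) fun τ _ => h t le_rfl n s τ

end TimeSeries

/-! ### Regularity of the data -/

section Data

theorem contDiff_primitive {E : Type*} [NormedAddCommGroup E] [NormedSpace ℝ E] [CompleteSpace E]
    {n : ℕ} {h : ℝ → E} (hh : ContDiff ℝ n h) :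
    ContDiff ℝ (n + 1) fun x => ∫ s in (0:ℝ)..x, h s := by
  have hd : ∀ x, HasDerivAt (fun x => ∫ s in (0:ℝ)..x, h s) (h x) x := fun x =>
    hh.continuous.integral_hasStrictDerivAt 0 x |>.hasDerivAt
  rw [contDiff_succ_iff_deriv]
  refine ⟨fun x => (hd x).differentiableAt, by simp, ?_⟩
  rwa [show deriv (fun x => ∫ s in (0:ℝ)..x, h s) = h from funext fun x => (hd x).deriv]

theorem exists_contDiff_extension {f : ℝ → ℝ} (hf : ContDiffOn ℝ 1 f (Icc 0 1)) :
    ∃ E : ℝ → ℝ, ContDiff ℝ 1 E ∧ EqOn E f (Icc 0 1) := by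
  have hu : UniqueDiffOn ℝ (Icc (0:ℝ) 1) := uniqueDiffOn_Icc zero_lt_one
  have hd : ContinuousOn (derivWithin f (Icc 0 1)) (Icc 0 1) :=
    hf.continuousOn_derivWithin hu le_rfl
  have hcl : ∀ s : ℝ, max 0 (min 1 s) ∈ Icc (0:ℝ) 1 := fun s => ⟨le_max_left _ _, by simp⟩
  have hcont : Continuous fun s : ℝ => derivWithin f (Icc 0 1) (max 0 (min 1 s)) :=
    hd.comp_continuous (by fun_prop) hcl
  refine ⟨fun x => f 0 + ∫ s in (0:ℝ)..x, derivWithin f (Icc 0 1) (max 0 (min 1 s)),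
    contDiff_const.add (contDiff_primitive (n := 0) (contDiff_zero.2 hcont)), fun x hx => ?_⟩
  have : ∫ s in (0:ℝ)..x, derivWithin f (Icc 0 1) (max 0 (min 1 s)) = f x - f 0 := by
    refine integral_eq_sub_of_hasDerivAt_of_le hx.1
      (hf.continuousOn.mono (Icc_subset_Icc_right hx.2)) (fun s hs => ?_)
      (hcont.intervalIntegrable _ _)
    have hs1 : s < 1 := hs.2.trans_le hx.2
    rw [min_eq_right hs1.le, max_eq_right hs.1.le]
    exact ((hf.differentiableOn one_ne_zero s ⟨hs.1.le, hs1.le⟩).hasDerivWithinAt).hasDerivAt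
      (Icc_mem_nhds hs.1 hs1)
  simp only [this]
  ring

theorem summable_mul_pow_of_abs_le {a : ℕ → ℝ} {C t : ℝ} (h : ∀ n, |a n| ≤ C) (h0 : 0 ≤ t)
    (h1 : t < 1) : Summable fun n => a n * t ^ n := by
  refine .of_norm_bounded ((summable_geometric_of_lt_one h0 h1).mul_left C) fun n => ?_
  rw [norm_mul, norm_pow, Real.norm_eq_abs, Real.norm_eq_abs, abs_of_nonneg h0]
  gcongr
  exact h n

theorem abs_tsum_mul_pow_le {a : ℕ → ℝ} {C t : ℝ} (h : ∀ n, |a n| ≤ C) (h0 : 0 ≤ t)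
    (h1 : t < 1) : |∑' n, a n * t ^ n| ≤ C * (1 - t)⁻¹ := by
  refine tsum_of_norm_bounded (f := fun n => a n * t ^ n)
    ((hasSum_geometric_of_lt_one h0 h1).mul_left C) fun n => ?_
  rw [norm_mul, norm_pow, Real.norm_eq_abs, Real.norm_eq_abs, abs_of_nonneg h0]
  gcongr
  exact h n

theorem continuousOn_coeff_of_continuousOn_tsum {X : Type*} [TopologicalSpace X] {c : ℕ → X → ℝ}
    {C : ℝ} {A : Set X} (hc : ∀ n, ∀ x ∈ A, |c n x| ≤ C)
    (hcont : ∀ t ∈ Ioo (0:ℝ) 1, ContinuousOn (fun x => ∑' n, c n x * t ^ n) A) (n : ℕ) :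
    ContinuousOn (c n) A := by
  have split : ∀ n, ∀ x ∈ A, ∀ t ∈ Ioo (0:ℝ) 1,
      ∑' k, c (n + k) x * t ^ k = c n x + t * ∑' k, c (n + 1 + k) x * t ^ k := by
    intro n x hx t ht
    rw [(summable_mul_pow_of_abs_le (fun k => hc (n + k) x hx) ht.1.le ht.2).tsum_eq_zero_add,
      ← tsum_mul_left]
    simp only [add_zero, pow_zero, mul_one]
    congr 1
    refine tsum_congr fun k => ?_
    rw [add_comm k 1, ← add_assoc, pow_add]
    ring
  have lim : ∀ n, (∀ t ∈ Ioo (0:ℝ) 1, ContinuousOn (fun x => ∑' k, c (n + k) x * t ^ k) A) →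
      ContinuousOn (c n) A := by
    intro n hn
    have hunif : TendstoUniformlyOn (fun t x => ∑' k, c (n + k) x * t ^ k) (c n)
        (nhdsWithin (0:ℝ) (Ioi 0)) A := by
      rw [Metric.tendstoUniformlyOn_iff]
      intro ε hε
      have hlim : Filter.Tendsto (fun t : ℝ => t * (C * (1 - t)⁻¹)) (nhdsWithin 0 (Ioi 0))
          (nhds 0) := by
        have : ContinuousAt (fun t : ℝ => t * (C * (1 - t)⁻¹)) 0 := by
          have : (1:ℝ) - 0 ≠ 0 := by norm_num
          fun_prop (disch := assumption)
        simpa using this.tendsto.mono_left nhdsWithin_le_nhds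
      filter_upwards [hlim.eventually_lt_const hε, Ioo_mem_nhdsGT (zero_lt_one' ℝ)] with t h1 ht x hx
      rw [split n x hx t ht, dist_comm, Real.dist_eq, add_sub_cancel_left, abs_mul,
        abs_of_pos ht.1]
      refine (mul_le_mul_of_nonneg_left ?_ ht.1.le).trans_lt h1
      exact abs_tsum_mul_pow_le (fun k => hc (n + 1 + k) x hx) ht.1.le ht.2
    refine hunif.continuousOn (Filter.Eventually.frequently ?_)
    filter_upwards [Ioo_mem_nhdsGT (zero_lt_one' ℝ)] with t ht using hn t ht
  refine lim n ?_
  induction n with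
  | zero => simpa using hcont
  | succ n ih =>
    intro t ht
    refine (((ih t ht).sub (lim n ih)).div_const t).congr fun x hx => ?_
    simp only [Pi.sub_apply]
    rw [split n x hx t ht, add_sub_cancel_left, mul_div_cancel_left₀ _ ht.1.ne']

/-- Complex data: a power series in time with continuous, uniformly bounded coefficients, which for
each time extends to a continuously differentiable function of space. -/
def RegularData (h : ℝ → ℝ → ℂ) : Prop :=
  (∃ (c : ℕ → ℝ → ℂ) (C : ℝ), (∀ n, Continuous (c n)) ∧ (∀ n x, ‖c n x‖ ≤ C) ∧
    ∀ x ∈ Icc (0:ℝ) 1, ∀ t ∈ Ico (0:ℝ) 1, h x t = ∑' n, c n x * (t:ℂ) ^ n) ∧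
  ∀ t ∈ Ico (0:ℝ) 1, ∃ E : ℝ → ℂ, ContDiff ℝ 1 E ∧ ∀ x ∈ Icc (0:ℝ) 1, E x = h x t

theorem SpaceC1TimeAnalytic.exists_coeff {f : ℝ → ℝ → ℝ} (hf : SpaceC1TimeAnalytic f) :
    ∃ (c : ℕ → ℝ → ℝ) (C : ℝ), (∀ n, Continuous (c n)) ∧ (∀ n x, |c n x| ≤ C) ∧
      ∀ x ∈ Icc (0:ℝ) 1, ∀ t ∈ Ico (0:ℝ) 1, HasSum (fun n => c n x * t ^ n) (f x t) := by
  obtain ⟨hC1, c, C, hc, hs⟩ := hf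
  have hcl : ∀ s : ℝ, max 0 (min 1 s) ∈ Icc (0:ℝ) 1 := fun s => ⟨le_max_left _ _, by simp⟩
  have hcont : ∀ n, ContinuousOn (c n) (Icc 0 1) :=
    continuousOn_coeff_of_continuousOn_tsum hc fun t ht =>
      (hC1 t (Ioo_subset_Ico_self ht)).continuousOn.congr fun x hx =>
        (hs x hx t (Ioo_subset_Ico_self ht)).symm
  refine ⟨fun n s => c n (max 0 (min 1 s)), C,
    fun n => (hcont n).comp_continuous (by fun_prop) hcl, fun n x => hc n _ (hcl x),
    fun x hx t ht => ?_⟩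
  simp only [min_eq_right hx.2, max_eq_right hx.1]
  rw [hs x hx t ht]
  exact (summable_mul_pow_of_abs_le (fun n => hc n x hx) ht.1 ht.2).hasSum

theorem SpaceC1TimeAnalytic.regularData {f g : ℝ → ℝ → ℝ} (hf : SpaceC1TimeAnalytic f)
    (hg : SpaceC1TimeAnalytic g) :
    RegularData fun x t => (f x t : ℂ) - Complex.I * (g x t : ℂ) := by
  refine ⟨?_, fun t ht => ?_⟩
  · obtain ⟨c, C, cc, hc, hcs⟩ := hf.exists_coeff
    obtain ⟨d, D, cd, hd, hds⟩ := hg.exists_coeff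
    refine ⟨fun n x => (c n x : ℂ) - Complex.I * (d n x : ℂ), C + D, fun n => by fun_prop,
      fun n x => (norm_sub_le _ _).trans ?_, fun x hx t ht => ?_⟩
    · rw [norm_mul, Complex.norm_I, one_mul, Complex.norm_real, Complex.norm_real]
      exact add_le_add (hc n x) (hd n x)
    · have h1 := Complex.hasSum_ofReal.2 (hcs x hx t ht)
      have h2 := (Complex.hasSum_ofReal.2 (hds x hx t ht)).mul_left Complex.I
      refine (h1.sub h2).tsum_eq.symm.trans ?_
      refine tsum_congr fun n => ?_
      push_cast
      ring
  · obtain ⟨E, cE, hE⟩ := exists_contDiff_extension (hf.1 t ht)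
    obtain ⟨G, cG, hG⟩ := exists_contDiff_extension (hg.1 t ht)
    refine ⟨fun x => (E x : ℂ) - Complex.I * (G x : ℂ), ?_, fun x hx => by simp only [hE hx, hG hx]⟩
    exact (Complex.ofRealCLM.contDiff.comp cE).sub
      (contDiff_const.mul (Complex.ofRealCLM.contDiff.comp cG))

end Data

/-! ### Existence -/

section Existence

theorem timeSeries_integral_equation {u v H : ℕ → ℝ → ℝ → ℂ} (hu : TimeBounded u)
    (hv : TimeBounded v) (hH : TimeBounded H) (cv : ∀ n, Continuous fun q : ℝ × ℝ => v n q.1 q.2)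
    (cH : ∀ n, Continuous fun q : ℝ × ℝ => H n q.1 q.2) {t ξ η : ℝ} (ht : |t| < 1)
    (h : ∀ n, u n ξ η = -(1 / 4) * (∫ s in η..ξ, v n s 0) + 1 / 4 * charIntegral (H n) ξ η) :
    timeSeries u t ξ η
      = -(1 / 4) * (∫ s in η..ξ, timeSeries v t s 0) + 1 / 4 * charIntegral (timeSeries H t) ξ η := by
  have h1 := ((hasSum_integral_timeSeries hv cv ht η ξ 0).mul_left (-(1 / 4))).add
    ((hasSum_charIntegral_timeSeries hH cH ht ξ η).mul_left (1 / 4))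
  refine (hu.hasSum ht ξ η).unique (h1.congr_fun fun n => ?_)
  rw [h n]
  ring

theorem continuous_timeSeries_left {u : ℕ → ℝ → ℝ → ℂ} (hu : TimeBounded u)
    (cu : ∀ n, Continuous fun q : ℝ × ℝ => u n q.1 q.2) {t : ℝ} (ht : |t| < 1) (τ : ℝ) :
    Continuous fun s => timeSeries u t s τ :=
  (continuous_timeSeries hu cu ht).comp (Continuous.prodMk_left τ)

theorem contDiff_one_integral_between {h : ℝ → ℂ} (ch : Continuous h) :
    ContDiff ℝ 1 fun q : ℝ × ℝ => ∫ s in q.2..q.1, h s := by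
  have h1 : ContDiff ℝ 1 fun x => ∫ s in (0:ℝ)..x, h s :=
    contDiff_primitive (n := 0) (contDiff_zero.2 ch)
  convert (h1.comp contDiff_fst).sub (h1.comp contDiff_snd) using 2 with q
  exact (integral_interval_sub_left (ch.intervalIntegrable 0 _) (ch.intervalIntegrable 0 _)).symm

theorem contDiff_one_integral_add_charIntegral {h : ℝ → ℂ} {H : ℝ → ℝ → ℂ} (ch : Continuous h)
    (cH : Continuous fun q : ℝ × ℝ => H q.1 q.2) :
    ContDiff ℝ 1 fun q : ℝ × ℝ =>
      -(1 / 4) * (∫ s in q.2..q.1, h s) + 1 / 4 * charIntegral H q.1 q.2 := by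
  simp only [charIntegral_eq_doublePrim cH]
  have h2 := contDiff_one_doublePrim cH
  exact (contDiff_const.mul (contDiff_one_integral_between ch)).add
    (contDiff_const.mul (h2.sub (h2.comp (contDiff_snd.prodMk contDiff_snd))))

theorem charIntegral_congr {F G : ℝ → ℝ → ℂ} {ξ η : ℝ} (hη : 0 ≤ η) (hηξ : η ≤ ξ)
    (h : ∀ s ∈ Icc η ξ, ∀ τ ∈ Icc 0 η, F s τ = G s τ) :
    charIntegral F ξ η = charIntegral G ξ η := by
  refine integral_congr fun s hs => integral_congr fun τ hτ => ?_
  rw [uIcc_of_le hηξ] at hs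
  rw [uIcc_of_le hη] at hτ
  exact h s hs τ hτ

theorem exists_complex_kernel (p : ℂ) {b f : ℝ → ℝ → ℂ} (hb : RegularData b) (hf : RegularData f) :
    ∃ V V' : ℝ → ℝ → ℝ → ℂ,
      (∀ r ∈ Ico (0:ℝ) 1, ∃ B : ℝ, ∀ t : ℝ, |t| ≤ r → ∀ ξ η, ‖V t ξ η‖ ≤ B) ∧
      (∀ t : ℝ, |t| < 1 → ∀ ξ η, HasDerivAt (fun t' => V t' ξ η) (V' t ξ η) t) ∧
      ∀ t ∈ Ioo (0:ℝ) 1, ∃ (F : ℝ → ℝ → ℂ) (e : ℝ → ℂ),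
        ContDiff ℝ 1 (fun q : ℝ × ℝ => F q.1 q.2) ∧ ContDiff ℝ 2 e ∧
        (∀ ξ η, 0 ≤ η → η ≤ ξ → ξ + η ≤ 2 →
          V t ξ η = e ξ - e η + 1 / 4 * charIntegral F ξ η ∧
          F ξ η = p * (b ((ξ - η) / 2) t - f ((ξ + η) / 2) t) * V t ξ η + p * V' t ξ η) ∧
        ∀ x ∈ Icc (0:ℝ) 1, e (2 * x) - e 0 = -(1 / 2) * ∫ γ in (0:ℝ)..x, p * (b γ t - f γ t) := by
  obtain ⟨⟨cb, Cb, ccb, hcb, sb⟩, eb⟩ := hb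
  obtain ⟨⟨cf, Cf, ccf, hcf, sf⟩, ef⟩ := hf
  let lam : ℕ → ℝ → ℝ → ℂ := fun n s τ => p * (cb n ((s - τ) / 2) - cf n ((s + τ) / 2))
  have clam : ∀ n, Continuous fun q : ℝ × ℝ => lam n q.1 q.2 := fun n => by
    have := ccb n
    have := ccf n
    simp only [lam]
    fun_prop
  have hlam : ∀ n s τ, ‖lam n s τ‖ ≤ ‖p‖ * (Cb + Cf) := fun n s τ => by
    simp only [lam, norm_mul]
    gcongr
    exact (norm_sub_le _ _).trans (add_le_add (hcb _ _) (hcf _ _))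
  have hC : 0 ≤ ‖p‖ * (Cb + Cf) := (norm_nonneg _).trans (hlam 0 0 0)
  have clam0 : ∀ n, Continuous fun s => lam n s 0 := fun n =>
    (clam n).comp (Continuous.prodMk_left (0:ℝ))
  obtain ⟨K, μ, M, hμ, cK, hK, hKeq⟩ := exists_coefficient_solution p
    (g := fun n ξ η => -(1 / 4) * ∫ s in η..ξ, lam n s 0) (D := ‖p‖ * (Cb + Cf)) clam hlam
    (fun n => continuous_const.mul (contDiff_one_integral_between (clam0 n)).continuous)
    (fun n ξ η h0 h1 h2 => by
      have := norm_integral_le_of_norm_le_const (a := η) (b := ξ) (f := fun s => lam n s 0)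
        fun s _ => hlam n s 0
      rw [abs_of_nonneg (by linarith)] at this
      rw [norm_mul, show ‖(-(1 / 4) : ℂ)‖ = 1 / 4 by norm_num]
      nlinarith)
  have blam : TimeBounded lam := .of_norm_le hlam
  have bK : TimeBounded K := .of_weightRate hK
  have bH : TimeBounded (sourceCoeff p lam K) := blam.sourceCoeff bK
  have cH := continuous_sourceCoeff (p := p) clam cK
  refine ⟨timeSeries K, timeSeries (timeDeriv K),
    fun r hr => exists_norm_timeSeries_le bK hr.1 hr.2, fun t ht => hasDerivAt_timeSeries bK ht,
    fun t ht => ?_⟩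
  have ht1 : |t| < 1 := by rw [abs_of_pos ht.1]; exact ht.2
  have htI : t ∈ Ico (0:ℝ) 1 := Ioo_subset_Ico_self ht
  obtain ⟨Eb, cEb, hEb⟩ := eb t htI
  obtain ⟨Ef, cEf, hEf⟩ := ef t htI
  let K₁ : ℝ → ℝ → ℂ := fun ξ η => -(1 / 4) * (∫ s in η..ξ, timeSeries lam t s 0)
    + 1 / 4 * charIntegral (timeSeries (sourceCoeff p lam K) t) ξ η
  let K₂ : ℝ → ℝ → ℂ := fun ξ η => -(1 / 4) * (∫ s in η..ξ, timeSeries (timeDeriv lam) t s 0)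
    + 1 / 4 * charIntegral (timeSeries (timeDeriv (sourceCoeff p lam K)) t) ξ η
  have cL := continuous_timeSeries_left blam clam ht1 0
  have cL' := continuous_timeSeries_left blam.timeDeriv (continuous_timeDeriv clam) ht1 0
  have cHT := continuous_timeSeries bH cH ht1
  have cHT' := continuous_timeSeries bH.timeDeriv (continuous_timeDeriv cH) ht1
  have cK₁ : ContDiff ℝ 1 fun q : ℝ × ℝ => K₁ q.1 q.2 :=
    contDiff_one_integral_add_charIntegral cL cHT
  have cK₂ : ContDiff ℝ 1 fun q : ℝ × ℝ => K₂ q.1 q.2 :=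
    contDiff_one_integral_add_charIntegral cL' cHT'
  have hK₁ : ∀ ξ η, 0 ≤ η → η ≤ ξ → ξ ≤ 2 → timeSeries K t ξ η = K₁ ξ η := fun ξ η h0 h1 h2 =>
    timeSeries_integral_equation bK blam bH clam cH ht1 fun n => hKeq n ξ η h0 h1 h2
  have hK₂ : ∀ ξ η, 0 ≤ η → η ≤ ξ → ξ ≤ 2 → timeSeries (timeDeriv K) t ξ η = K₂ ξ η :=
    fun ξ η h0 h1 h2 => timeSeries_integral_equation bK.timeDeriv blam.timeDeriv bH.timeDeriv
      (continuous_timeDeriv clam) (continuous_timeDeriv cH) ht1 fun n => by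
        simp only [timeDeriv, charIntegral, integral_const_mul]
        rw [hKeq (n + 1) ξ η h0 h1 h2, charIntegral]
        ring
  have hlamT : ∀ ξ η, 0 ≤ η → η ≤ ξ → ξ + η ≤ 2 →
      timeSeries lam t ξ η = p * (b ((ξ - η) / 2) t - f ((ξ + η) / 2) t) := fun ξ η h0 h1 h2 => by
    have hx : (ξ + η) / 2 ∈ Icc (0:ℝ) 1 := ⟨by linarith, by linarith⟩
    have hy : (ξ - η) / 2 ∈ Icc (0:ℝ) 1 := ⟨by linarith, by linarith⟩
    have h3 := (TimeBounded.of_norm_le (u := fun n s _ => cb n s) fun n s _ => hcb n s).hasSum ht1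
      ((ξ - η) / 2) 0
    have h4 := (TimeBounded.of_norm_le (u := fun n s _ => cf n s) fun n s _ => hcf n s).hasSum ht1
      ((ξ + η) / 2) 0
    rw [sb _ hy t htI, sf _ hx t htI]
    refine ((blam.hasSum ht1 ξ η).unique (((h3.sub h4).mul_left p).congr_fun fun n => ?_))
    simp only [lam]
    ring
  let ℓ : ℝ → ℝ → ℂ := fun s τ => p * (Eb ((s - τ) / 2) - Ef ((s + τ) / 2))
  have cℓ : ContDiff ℝ 1 fun q : ℝ × ℝ => ℓ q.1 q.2 := by
    simp only [ℓ]
    fun_prop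
  have hℓ : ∀ ξ η, 0 ≤ η → η ≤ ξ → ξ + η ≤ 2 →
      ℓ ξ η = p * (b ((ξ - η) / 2) t - f ((ξ + η) / 2) t) := fun ξ η h0 h1 h2 => by
    simp only [ℓ]
    rw [hEb _ ⟨by linarith, by linarith⟩, hEf _ ⟨by linarith, by linarith⟩]
  have cℓ0 : ContDiff ℝ 1 fun s => ℓ s 0 := cℓ.comp (contDiff_prodMk_left 0)
  have hF : ∀ ξ η, 0 ≤ η → η ≤ ξ → ξ + η ≤ 2 → ℓ ξ η * K₁ ξ η + p * K₂ ξ η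
      = p * (b ((ξ - η) / 2) t - f ((ξ + η) / 2) t) * timeSeries K t ξ η
        + p * timeSeries (timeDeriv K) t ξ η := fun ξ η h0 h1 h2 => by
    rw [hℓ ξ η h0 h1 h2, hK₁ ξ η h0 h1 (by linarith), hK₂ ξ η h0 h1 (by linarith)]
  have cF : ContDiff ℝ 1 fun q : ℝ × ℝ => ℓ q.1 q.2 * K₁ q.1 q.2 + p * K₂ q.1 q.2 :=
    (cℓ.mul cK₁).add (contDiff_const.mul cK₂)
  refine ⟨fun ξ η => ℓ ξ η * K₁ ξ η + p * K₂ ξ η, fun ξ => -(1 / 4) * ∫ s in (0:ℝ)..ξ, ℓ s 0, cF,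
    contDiff_const.mul (contDiff_primitive (n := 1) cℓ0),
    fun ξ η h0 h1 h2 => ⟨?_, hF ξ η h0 h1 h2⟩, fun x hx => ?_⟩
  · rw [hK₁ ξ η h0 h1 (by linarith), ← mul_sub, integral_interval_sub_left
      (cℓ0.continuous.intervalIntegrable _ _) (cℓ0.continuous.intervalIntegrable _ _)]
    simp only [K₁]
    congr 2
    · refine integral_congr fun s hs => ?_
      rw [uIcc_of_le h1] at hs
      have hs0 := h0.trans hs.1
      have hs2 : s + 0 ≤ 2 := by linarith [hs.2]
      rw [hlamT s 0 le_rfl hs0 hs2, hℓ s 0 le_rfl hs0 hs2]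
    · refine charIntegral_congr h0 h1 fun s hs τ hτ => ?_
      have h3 := hτ.2.trans hs.1
      have h4 : s + τ ≤ 2 := by linarith [hs.2, hτ.2]
      rw [hF s τ hτ.1 h3 h4, timeSeries_sourceCoeff blam bK ht1, hlamT s τ hτ.1 h3 h4]
  · simp only [integral_same, mul_zero, sub_zero]
    have h1 : ∫ s in (0:ℝ)..2 * x, ℓ s 0 = 2 * ∫ γ in (0:ℝ)..x, ℓ (2 * γ) 0 := by
      rw [intervalIntegral.integral_comp_mul_left (fun s => ℓ s 0) two_ne_zero]
      simp
    have h2 : ∫ γ in (0:ℝ)..x, ℓ (2 * γ) 0 = ∫ γ in (0:ℝ)..x, p * (b γ t - f γ t) := by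
      refine integral_congr fun γ hγ => ?_
      rw [uIcc_of_le hx.1] at hγ
      have := hx.2
      rw [hℓ (2 * γ) 0 le_rfl (by linarith [hγ.1]) (by linarith [hγ.2])]
      simp
    rw [h1, h2]
    ring

end Existence

section RealKernel

theorem clm_doublePrim (L : ℂ →L[ℝ] ℝ) {F : ℝ → ℝ → ℂ} (hF : Continuous fun q : ℝ × ℝ => F q.1 q.2)
    (x y : ℝ) : L (doublePrim F x y) = doublePrim (fun s τ => L (F s τ)) x y := by
  have h1 := L.intervalIntegral_comp_comm (μ := MeasureTheory.volume) (a := 0) (b := x)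
    (((continuous_inner_integral hF).comp (Continuous.prodMk_left y)).intervalIntegrable 0 x)
  have h2 : ∀ s, ∫ τ in (0:ℝ)..y, L (F s τ) = L (∫ τ in (0:ℝ)..y, F s τ) := fun s =>
    L.intervalIntegral_comp_comm ((hF.comp (Continuous.prodMk_right s)).intervalIntegrable 0 y)
  rw [doublePrim, doublePrim]
  simp only [h2]
  exact h1.symm

theorem clm_dAlembert (L : ℂ →L[ℝ] ℝ) {F : ℝ → ℝ → ℂ} {e : ℝ → ℂ}
    (hF : ContDiff ℝ 1 fun q : ℝ × ℝ => F q.1 q.2) (he : ContDiff ℝ 2 e) {k : ℝ → ℝ → ℝ}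
    (hk : ∀ x y, k x y = L (e (x + y) - e (x - y) + 1 / 4 * charIntegral F (x + y) (x - y))) :
    ContDiff ℝ 2 (fun q : ℝ × ℝ => k q.1 q.2) ∧ ∀ x y,
      deriv (fun x' => deriv (fun x'' => k x'' y) x') x
        = deriv (fun y' => deriv (fun y'' => k x y'') y') y + L (F (x + y) (x - y)) := by
  have hLF : ContDiff ℝ 1 fun q : ℝ × ℝ => L (F q.1 q.2) := L.contDiff.comp hF
  refine wave_equation_dAlembert (F := fun s τ => L (F s τ)) (e₁ := fun s => L (e s))
    (e₂ := fun s => L (e s) + 1 / 4 * doublePrim (fun s τ => L (F s τ)) s s) hLF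
    (L.contDiff.comp he) ?_ fun x y => ?_
  · exact (L.contDiff.comp he).add
      (contDiff_const.mul ((contDiff_two_doublePrim hLF).comp (contDiff_id.prodMk contDiff_id)))
  · have h4 : ∀ z : ℂ, L (1 / 4 * z) = 1 / 4 * L z := fun z => by
      rw [show (1 / 4 : ℂ) * z = (1 / 4 : ℝ) • z by rw [Complex.real_smul]; norm_num, map_smul,
        smul_eq_mul]
    rw [hk, map_add, map_sub, h4, charIntegral_eq_doublePrim hF.continuous, map_sub,
      clm_doublePrim L hF.continuous, clm_doublePrim L hF.continuous]
    ring

theorem RegularData.continuousOn {h : ℝ → ℝ → ℂ} (hh : RegularData h) {t : ℝ}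
    (ht : t ∈ Ico (0:ℝ) 1) : ContinuousOn (fun x => h x t) (Icc 0 1) := by
  obtain ⟨E, cE, hE⟩ := hh.2 t ht
  exact cE.continuous.continuousOn.congr fun x hx => (hE x hx).symm

theorem exists_bounded_neumannKernelSol {β βc : ℝ → ℝ → ℝ → ℝ} {p₁ p₂ t₀ : ℝ} {b f : ℝ → ℝ → ℂ}
    (hb : RegularData b) (hf : RegularData f)
    (hβ : ∀ x y t, (β x y t : ℂ) - Complex.I * βc x y t
      = ((p₁ : ℂ) - Complex.I * p₂) * (b y t - f x t)) (ht₀ : t₀ ∈ Ioo (0:ℝ) 1) :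
    ∃ k kc : ℝ → ℝ → ℝ → ℝ, IsNeumannKernelSol β βc p₁ p₂ p₁ (-p₂) t₀ k kc ∧
      ∃ B : ℝ, ∀ x y, (x, y) ∈ Omega → ∀ t ∈ Ioo (0:ℝ) t₀, |k x y t| ≤ B ∧ |kc x y t| ≤ B := by
  set p : ℂ := (p₁ : ℂ) - Complex.I * p₂ with hp
  obtain ⟨V, V', hV, hVt, h⟩ := exists_complex_kernel p hb hf
  choose! F e cF ce hVF he using h
  have hI : ∀ t ∈ Ioo (0:ℝ) t₀, t ∈ Ioo (0:ℝ) 1 := fun t ht => ⟨ht.1, ht.2.trans ht₀.2⟩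
  let Z : ℝ → ℝ → ℝ → ℂ := fun x y t =>
    e t (x + y) - e t (x - y) + 1 / 4 * charIntegral (F t) (x + y) (x - y)
  have hZV : ∀ x y, (x, y) ∈ Omega → ∀ t ∈ Ioo (0:ℝ) 1, Z x y t = V t (x + y) (x - y) := by
    rintro x y ⟨h0, h1, h2⟩ t ht
    simp only at h0 h1 h2
    exact (hVF t ht (x + y) (x - y) (by linarith) (by linarith) (by linarith)).1.symm
  have hZF : ∀ x y, (x, y) ∈ Omega → ∀ t ∈ Ioo (0:ℝ) 1, F t (x + y) (x - y)
      = ((β x y t : ℂ) - Complex.I * βc x y t) * Z x y t + p * V' t (x + y) (x - y) := by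
    rintro x y hxy t ht
    rw [hZV x y hxy t ht, hβ]
    obtain ⟨h0, h1, h2⟩ := hxy
    simp only at h0 h1 h2
    have := (hVF t ht (x + y) (x - y) (by linarith) (by linarith) (by linarith)).2
    rw [this]
    congr 5 <;> ring
  have hZt : ∀ x y, (x, y) ∈ Omega → ∀ t ∈ Ioo (0:ℝ) 1,
      HasDerivAt (fun t' => Z x y t') (V' t (x + y) (x - y)) t := fun x y hxy t ht =>
    (hVt t (by rw [abs_of_pos ht.1]; exact ht.2) (x + y) (x - y)).congr_of_eventuallyEq <|
      Filter.mem_of_superset (Ioo_mem_nhds ht.1 ht.2) fun t' ht' => hZV x y hxy t' ht'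
  have hre : ∀ x y, (x, y) ∈ Omega → ∀ t ∈ Ioo (0:ℝ) 1,
      HasDerivAt (fun t' => (Z x y t').re) (V' t (x + y) (x - y)).re t := fun x y hxy t ht =>
    Complex.reCLM.hasFDerivAt.comp_hasDerivAt t (hZt x y hxy t ht)
  have him : ∀ x y, (x, y) ∈ Omega → ∀ t ∈ Ioo (0:ℝ) 1,
      HasDerivAt (fun t' => (Z x y t').im) (V' t (x + y) (x - y)).im t := fun x y hxy t ht =>
    Complex.imCLM.hasFDerivAt.comp_hasDerivAt t (hZt x y hxy t ht)
  have hwr : ∀ t ∈ Ioo (0:ℝ) 1, _ := fun t ht =>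
    clm_dAlembert Complex.reCLM (cF t ht) (ce t ht) (k := fun x y => (Z x y t).re) fun _ _ => rfl
  have hwi : ∀ t ∈ Ioo (0:ℝ) 1, _ := fun t ht =>
    clm_dAlembert Complex.imCLM (cF t ht) (ce t ht) (k := fun x y => (Z x y t).im) fun _ _ => rfl
  have hdiag : ∀ x ∈ Icc (0:ℝ) 1, ∀ t ∈ Ioo (0:ℝ) 1, Z x x t
      = -(1 / 2) * ∫ γ in (0:ℝ)..x, ((β γ γ t : ℂ) - Complex.I * βc γ γ t) := by
    intro x hx t ht
    simp only [Z, hβ]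
    rw [← he t ht x hx]
    simp [charIntegral, two_mul]
  have hInt : ∀ x ∈ Icc (0:ℝ) 1, ∀ t ∈ Ioo (0:ℝ) 1, IntervalIntegrable
      (fun γ => (β γ γ t : ℂ) - Complex.I * βc γ γ t) MeasureTheory.volume 0 x := by
    intro x hx t ht
    simp only [hβ]
    refine ContinuousOn.intervalIntegrable ?_
    rw [uIcc_of_le hx.1]
    exact (continuousOn_const.mul ((hb.continuousOn (Ioo_subset_Ico_self ht)).sub
      (hf.continuousOn (Ioo_subset_Ico_self ht)))).mono (Icc_subset_Icc_right hx.2)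
  have hzero : ∀ x t, Z x 0 t = 0 := fun x t => by simp [Z, charIntegral]
  refine ⟨fun x y t => (Z x y t).re, fun x y t => (Z x y t).im,
    ⟨fun t ht => (hwr t (hI t ht)).1.contDiffOn, fun t ht => (hwi t (hI t ht)).1.contDiffOn,
      fun x y hxy t ht => ⟨(hre x y hxy t (hI t ht)).differentiableAt,
        (him x y hxy t (hI t ht)).differentiableAt⟩,
      fun x y hxy t ht => ?_, fun x hx t ht => ?_, fun t ht => ?_⟩, ?_⟩
  · have ht' := hI t ht
    simp only [pXX, pYY, pT]
    rw [(hwr t ht').2 x y, (hwi t ht').2 x y, (hre x y hxy t ht').deriv, (him x y hxy t ht').deriv,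
      hZF x y hxy t ht', hp]
    constructor <;> simp <;> ring
  · have ht' := hI t ht
    have hR := Complex.reCLM.intervalIntegral_comp_comm (hInt x hx t ht')
    have hJ := Complex.imCLM.intervalIntegral_comp_comm (hInt x hx t ht')
    simp only [Complex.reCLM_apply, Complex.imCLM_apply, Complex.sub_re, Complex.sub_im,
      Complex.ofReal_re, Complex.ofReal_im, Complex.mul_re, Complex.mul_im, Complex.I_re,
      Complex.I_im, zero_mul, mul_zero, one_mul, zero_sub, sub_zero, zero_add, sub_self,
      intervalIntegral.integral_neg] at hR hJ
    simp only [pX, hzero, Complex.zero_re, Complex.zero_im, deriv_const, and_self, and_true]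
    rw [hdiag x hx t ht']
    have h2 : (-(1 / 2) : ℂ) = ((-(1 / 2) : ℝ) : ℂ) := by norm_num
    rw [h2, Complex.re_ofReal_mul, Complex.im_ofReal_mul, ← hR, ← hJ]
    exact ⟨rfl, by ring⟩
  · simp [hzero]
  · obtain ⟨B, hB⟩ := hV t₀ ⟨ht₀.1.le, ht₀.2⟩
    refine ⟨B, fun x y hxy t ht => ?_⟩
    have h1 : ‖Z x y t‖ ≤ B := by
      rw [hZV x y hxy t (hI t ht)]
      exact hB t (by rw [abs_of_pos ht.1]; exact ht.2.le) _ _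
    exact ⟨(Complex.abs_re_le_norm _).trans h1, (Complex.abs_im_le_norm _).trans h1⟩

end RealKernel

theorem integral_integral_integral_rotate {G : ℝ × ℝ → ℝ → ℂ} {N : ℝ}
    (hG : MeasureTheory.StronglyMeasurable (Function.uncurry G)) (hN : ∀ z t, ‖G z t‖ ≤ N)
    {a b s₀ s₁ τ₀ τ₁ : ℝ} (hτ : τ₀ ≤ τ₁) :
    ∫ t in a..b, ∫ s in s₀..s₁, ∫ τ in τ₀..τ₁, G (s, τ) t
      = ∫ s in s₀..s₁, ∫ τ in τ₀..τ₁, ∫ t in a..b, G (s, τ) t := by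
  have hfin : ∀ u v w x : ℝ, MeasureTheory.volume (uIoc u v ×ˢ uIoc w x) ≠ ⊤ := by
    intro u v w x
    rw [MeasureTheory.Measure.volume_eq_prod, MeasureTheory.Measure.prod_prod]
    exact (ENNReal.mul_lt_top (by simp [uIoc]) (by simp [uIoc])).ne
  rw [MeasureTheory.intervalIntegral_intervalIntegral_swap]
  · refine intervalIntegral.integral_congr fun s _ => ?_
    refine MeasureTheory.intervalIntegral_intervalIntegral_swap ?_
    refine MeasureTheory.Measure.integrableOn_of_bounded (hfin _ _ _ _) (M := N) ?_
      (Filter.Eventually.of_forall fun z => ?_)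
    · have : MeasureTheory.StronglyMeasurable fun z : ℝ × ℝ => G (s, z.2) z.1 :=
        hG.comp_measurable (g := fun z : ℝ × ℝ => ((s, z.2), z.1)) (by fun_prop)
      exact this.aestronglyMeasurable
    · exact hN _ _
  · refine MeasureTheory.Measure.integrableOn_of_bounded (hfin _ _ _ _) (M := N * |τ₁ - τ₀|) ?_
      (Filter.Eventually.of_forall fun z => ?_)
    · have h1 : MeasureTheory.StronglyMeasurable fun w : (ℝ × ℝ) × ℝ => G (w.1.2, w.2) w.1.1 :=
        hG.comp_measurable (g := fun w : (ℝ × ℝ) × ℝ => ((w.1.2, w.2), w.1.1)) (by fun_prop)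
      have h2 := h1.integral_prod_right' (ν := MeasureTheory.volume.restrict (Ioc τ₀ τ₁))
      refine (h2.aestronglyMeasurable).congr (Filter.Eventually.of_forall fun z => ?_)
      simp only [Function.uncurry, intervalIntegral.integral_of_le hτ]
    · exact intervalIntegral.norm_integral_le_of_norm_le_const fun τ _ => hN _ _

theorem integral_rotate_of_continuousOn {G : ℝ → ℝ × ℝ → ℂ} {N : ℝ}
    {a b s₀ s₁ τ₀ τ₁ : ℝ} (hab : a ≤ b) (hs : s₀ ≤ s₁) (hτ : τ₀ ≤ τ₁)
    (hc : ∀ t ∈ Icc a b, ContinuousOn (G t) (Icc s₀ s₁ ×ˢ Icc τ₀ τ₁))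
    (hm : ∀ z ∈ Icc s₀ s₁ ×ˢ Icc τ₀ τ₁,
      MeasureTheory.StronglyMeasurable ((Icc a b).indicator fun t => G t z))
    (hN : ∀ t ∈ Icc a b, ∀ z ∈ Icc s₀ s₁ ×ˢ Icc τ₀ τ₁, ‖G t z‖ ≤ N) :
    ∫ t in a..b, ∫ s in s₀..s₁, ∫ τ in τ₀..τ₁, G t (s, τ)
      = ∫ s in s₀..s₁, ∫ τ in τ₀..τ₁, ∫ t in a..b, G t (s, τ) := by
  let cl : ℝ × ℝ → ℝ × ℝ := fun z => (projIcc s₀ s₁ hs z.1, projIcc τ₀ τ₁ hτ z.2)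
  have hcl : Continuous cl := by
    simp only [cl]
    fun_prop
  have hclm : ∀ z, cl z ∈ Icc s₀ s₁ ×ˢ Icc τ₀ τ₁ := fun z =>
    ⟨(projIcc s₀ s₁ hs z.1).2, (projIcc τ₀ τ₁ hτ z.2).2⟩
  let G' : ℝ × ℝ → ℝ → ℂ := fun z => (Icc a b).indicator fun t => G t (cl z)
  have hN0 : 0 ≤ N := (norm_nonneg _).trans (hN a ⟨le_rfl, hab⟩ _ (hclm 0))
  have hG' : MeasureTheory.StronglyMeasurable (Function.uncurry G') := by
    refine MeasureTheory.stronglyMeasurable_uncurry_of_continuous_of_stronglyMeasurable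
      (fun t => ?_) fun z => hm _ (hclm z)
    by_cases ht : t ∈ Icc a b
    · simp only [G', indicator_of_mem ht]
      exact (hc t ht).comp_continuous hcl hclm
    · simp only [G', indicator_of_notMem ht]
      exact continuous_const
  have hGN : ∀ z t, ‖G' z t‖ ≤ N := by
    intro z t
    by_cases ht : t ∈ Icc a b
    · simp only [G', indicator_of_mem ht]
      exact hN t ht _ (hclm z)
    · simp only [G', indicator_of_notMem ht, norm_zero]
      exact hN0
  have hGG : ∀ t ∈ uIcc a b, ∀ s ∈ uIcc s₀ s₁, ∀ τ ∈ uIcc τ₀ τ₁, G t (s, τ) = G' (s, τ) t := by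
    intro t ht s hs' τ hτ'
    rw [uIcc_of_le hab] at ht
    rw [uIcc_of_le hs] at hs'
    rw [uIcc_of_le hτ] at hτ'
    simp only [G', indicator_of_mem ht, cl, projIcc_of_mem hs hs', projIcc_of_mem hτ hτ']
  calc _ = ∫ t in a..b, ∫ s in s₀..s₁, ∫ τ in τ₀..τ₁, G' (s, τ) t :=
        intervalIntegral.integral_congr fun t ht => intervalIntegral.integral_congr fun s hs' =>
          intervalIntegral.integral_congr fun τ hτ' => hGG t ht s hs' τ hτ'
    _ = _ := integral_integral_integral_rotate hG' hGN hτ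
    _ = _ := (intervalIntegral.integral_congr fun s hs' => intervalIntegral.integral_congr
          fun τ hτ' => intervalIntegral.integral_congr fun t ht => hGG t ht s hs' τ hτ').symm

/-- The image of the triangle `Omega` in the characteristic coordinates `s = x + y`,
`τ = x - y`. -/
def charTriangle : Set (ℝ × ℝ) := {z | 0 ≤ z.2 ∧ z.2 ≤ z.1 ∧ z.1 + z.2 ≤ 2}

/-- The interior of `charTriangle`. -/
def openCharTriangle : Set (ℝ × ℝ) := {z | 0 < z.2 ∧ z.2 < z.1 ∧ z.1 + z.2 < 2}

theorem openCharTriangle_subset : openCharTriangle ⊆ charTriangle :=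
  fun _ hz => ⟨hz.1.le, hz.2.1.le, hz.2.2.le⟩

theorem Icc_prod_Icc_subset_openCharTriangle {s₀ s₁ τ₀ τ₁ : ℝ} (h₀ : 0 < τ₀) (h₁ : τ₁ < s₀)
    (h₂ : s₁ + τ₁ < 2) : Icc s₀ s₁ ×ˢ Icc τ₀ τ₁ ⊆ openCharTriangle := by
  rintro ⟨s, τ⟩ ⟨⟨hs, hs'⟩, ⟨hτ, hτ'⟩⟩
  simp only at hs hs' hτ hτ'
  exact ⟨by simp only; linarith, by simp only; linarith, by simp only; linarith⟩

/-- The second difference of `f` over the rectangle `[s₀, s₁] × [τ₀, τ₁]`. -/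
def rectDiff (f : ℝ × ℝ → ℂ) (s₀ s₁ τ₀ τ₁ : ℝ) : ℂ :=
  f (s₁, τ₁) - f (s₀, τ₁) - f (s₁, τ₀) + f (s₀, τ₀)

/-- A family `Q t` of functions on the characteristic triangle vanishing on the edges `τ = 0`
and `s = τ`, with mixed derivative `H t` subject to `4 H = λ Q + p ∂ₜQ`. -/
structure IsCharWave (Q H : ℝ → ℝ × ℝ → ℂ) (lam : ℝ × ℝ → ℂ → ℂ) (p : ℂ) (I : Set ℝ) : Prop where
  continuousOn : ∀ t ∈ I, ContinuousOn (Q t) charTriangle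
  differentiableAt : ∀ z ∈ charTriangle, ∀ t ∈ I, DifferentiableAt ℝ (fun t' => Q t' z) t
  continuousOn_mixed : ∀ t ∈ I, ContinuousOn (H t) openCharTriangle
  bounded_mixed : ∀ t ∈ I, ∃ C, ∀ z ∈ openCharTriangle, ‖H t z‖ ≤ C
  equation : ∀ t ∈ I, ∀ z ∈ openCharTriangle,
    4 * H t z = lam z t * Q t z + p * deriv (fun t' => Q t' z) t
  rectDiff_eq : ∀ t ∈ I, ∀ s₀ s₁ τ₀ τ₁ : ℝ, s₀ ≤ s₁ → τ₀ ≤ τ₁ → 0 < τ₀ → τ₁ < s₀ → s₁ + τ₁ < 2 →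
    rectDiff (Q t) s₀ s₁ τ₀ τ₁ = ∫ s in s₀..s₁, ∫ τ in τ₀..τ₁, H t (s, τ)
  diagonal : ∀ t ∈ I, ∀ s ∈ Icc (0:ℝ) 1, Q t (s, s) = 0
  edge : ∀ t ∈ I, ∀ s ∈ Icc (0:ℝ) 2, Q t (s, 0) = 0

/-- The coefficient `lam z` is holomorphic on the unit disc, locally bounded uniformly in `z`. -/
structure IsDiscCoefficient (lam : ℝ × ℝ → ℂ → ℂ) : Prop where
  differentiableOn : ∀ z ∈ openCharTriangle, DifferentiableOn ℂ (lam z) (Metric.ball 0 1)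
  bounded : ∀ ρ < 1, ∃ C, 0 ≤ C ∧ ∀ z ∈ openCharTriangle, ∀ w ∈ Metric.ball (0:ℂ) ρ, ‖lam z w‖ ≤ C

/-- The time average of `Q` over `[a, b]` against the weight `φ`. -/
noncomputable def timeAverage (Q : ℝ → ℝ × ℝ → ℂ) (a b : ℝ) (φ : ℂ → ℂ) (z : ℝ × ℝ) : ℂ :=
  ∫ t in a..b, φ t * Q t z

theorem ofReal_mem_ball_of_mem_Icc {a b r t : ℝ} (ha : 0 ≤ a) (hr : b < r) (ht : t ∈ Icc a b) :
    (t : ℂ) ∈ Metric.ball (0:ℂ) r := by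
  simp only [Metric.mem_ball, dist_zero_right, Complex.norm_real, Real.norm_eq_abs]
  rw [abs_of_nonneg (ha.trans ht.1)]
  exact ht.2.trans_lt hr

namespace IsCharWave

variable {Q H : ℝ → ℝ × ℝ → ℂ} {lam : ℝ × ℝ → ℂ → ℂ} {p : ℂ} {I : Set ℝ} {a b N : ℝ}

theorem continuousOn_time (h : IsCharWave Q H lam p I) {z : ℝ × ℝ} (hz : z ∈ charTriangle)
    (hI : Icc a b ⊆ I) : ContinuousOn (fun t => Q t z) (Icc a b) :=
  fun t ht => (h.differentiableAt z hz t (hI ht)).continuousAt.continuousWithinAt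

theorem continuousOn_timeAverage (h : IsCharWave Q H lam p I) (hab : a ≤ b) (hI : Icc a b ⊆ I)
    (hN : ∀ t ∈ Icc a b, ∀ z ∈ charTriangle, ‖Q t z‖ ≤ N) {φ : ℂ → ℂ}
    (hφ : ContinuousOn (fun t : ℝ => φ t) (Icc a b)) :
    ContinuousOn (timeAverage Q a b φ) charTriangle := by
  intro z hz
  refine intervalIntegral.continuousWithinAt_of_dominated_interval
    (bound := fun t => ‖φ t‖ * N) ?_ ?_ ?_ ?_
  · refine Filter.eventually_of_mem self_mem_nhdsWithin fun w hw => ?_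
    rw [uIoc_of_le hab]
    exact ((hφ.mul (h.continuousOn_time hw hI)).mono Ioc_subset_Icc_self).aestronglyMeasurable
      measurableSet_Ioc
  · refine Filter.eventually_of_mem self_mem_nhdsWithin fun w hw => ?_
    refine Filter.Eventually.of_forall fun t ht => ?_
    rw [uIoc_of_le hab] at ht
    rw [norm_mul]
    exact mul_le_mul_of_nonneg_left (hN t (Ioc_subset_Icc_self ht) w hw) (norm_nonneg _)
  · refine ContinuousOn.intervalIntegrable ?_
    rw [uIcc_of_le hab]
    exact hφ.norm.mul continuousOn_const
  · refine Filter.Eventually.of_forall fun t ht => ?_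
    rw [uIoc_of_le hab] at ht
    exact continuousWithinAt_const.mul (h.continuousOn t (hI (Ioc_subset_Icc_self ht)) z hz)

theorem stronglyMeasurable_indicator_mixed (h : IsCharWave Q H lam p I)
    (hlam : IsDiscCoefficient lam) (ha : 0 ≤ a) (hb : b < 1) (hI : Icc a b ⊆ I) {z : ℝ × ℝ}
    (hz : z ∈ openCharTriangle) :
    MeasureTheory.StronglyMeasurable ((Icc a b).indicator fun t => H t z) := by
  have h1 : ContinuousOn (fun t : ℝ => lam z t * Q t z) (Icc a b) := by
    refine ContinuousOn.mul ?_ (h.continuousOn_time (openCharTriangle_subset hz) hI)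
    exact (hlam.differentiableOn z hz).continuousOn.comp Complex.continuous_ofReal.continuousOn
      fun t ht => ofReal_mem_ball_of_mem_Icc ha hb ht
  have h2 : MeasureTheory.StronglyMeasurable
      ((Icc a b).indicator fun t : ℝ => lam z t * Q t z) := by
    classical
    refine Measurable.stronglyMeasurable ?_
    rw [← piecewise_eq_indicator]
    exact h1.measurable_piecewise continuousOn_const measurableSet_Icc
  have h3 : MeasureTheory.StronglyMeasurable
      ((Icc a b).indicator fun t : ℝ => p * deriv (fun t' => Q t' z) t) :=
    ((stronglyMeasurable_deriv _).const_mul p).indicator measurableSet_Icc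
  have h4 : ((Icc a b).indicator fun t => H t z) = fun t : ℝ => (4:ℂ)⁻¹ *
      (((Icc a b).indicator fun t : ℝ => lam z t * Q t z) t
        + ((Icc a b).indicator fun t : ℝ => p * deriv (fun t' => Q t' z) t) t) := by
    funext t
    by_cases ht : t ∈ Icc a b
    · simp only [indicator_of_mem ht]
      rw [← h.equation t (hI ht) z hz]
      ring
    · simp only [indicator_of_notMem ht]
      ring
  rw [h4]
  exact (h2.add h3).const_mul _

theorem rectDiff_timeAverage (h : IsCharWave Q H lam p I)
    (hlam : IsDiscCoefficient lam) (ha : 0 ≤ a) (hab : a ≤ b) (hb : b < 1) (hI : Icc a b ⊆ I)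
    (hN : ∀ t ∈ Icc a b, ∀ z ∈ openCharTriangle, ‖H t z‖ ≤ N) {φ : ℂ → ℂ}
    (hφ : ContinuousOn (fun t : ℝ => φ t) (Icc a b)) {s₀ s₁ τ₀ τ₁ : ℝ} (hs : s₀ ≤ s₁)
    (hτ : τ₀ ≤ τ₁) (h₀ : 0 < τ₀) (h₁ : τ₁ < s₀) (h₂ : s₁ + τ₁ < 2) :
    rectDiff (timeAverage Q a b φ) s₀ s₁ τ₀ τ₁
      = ∫ s in s₀..s₁, ∫ τ in τ₀..τ₁, ∫ t in a..b, φ t * H t (s, τ) := by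
  have hR := Icc_prod_Icc_subset_openCharTriangle (s₁ := s₁) h₀ h₁ h₂
  have hInt : ∀ s ∈ Icc s₀ s₁, ∀ τ ∈ Icc τ₀ τ₁,
      IntervalIntegrable (fun t : ℝ => φ t * Q t (s, τ)) MeasureTheory.volume a b := by
    intro s hs τ hτ
    refine ContinuousOn.intervalIntegrable ?_
    rw [uIcc_of_le hab]
    exact hφ.mul (h.continuousOn_time (openCharTriangle_subset (hR ⟨hs, hτ⟩)) hI)
  obtain ⟨B, hB⟩ := isCompact_Icc.exists_bound_of_continuousOn hφ
  have hB0 : 0 ≤ B := (norm_nonneg _).trans (hB a ⟨le_rfl, hab⟩)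
  have hs₀ : s₀ ∈ Icc s₀ s₁ := ⟨le_rfl, hs⟩
  have hs₁ : s₁ ∈ Icc s₀ s₁ := ⟨hs, le_rfl⟩
  have hτ₀ : τ₀ ∈ Icc τ₀ τ₁ := ⟨le_rfl, hτ⟩
  have hτ₁ : τ₁ ∈ Icc τ₀ τ₁ := ⟨hτ, le_rfl⟩
  calc rectDiff (timeAverage Q a b φ) s₀ s₁ τ₀ τ₁
      = ∫ t in a..b, φ t * rectDiff (Q t) s₀ s₁ τ₀ τ₁ := by
        simp only [rectDiff, timeAverage]
        rw [← intervalIntegral.integral_sub (hInt _ hs₁ _ hτ₁) (hInt _ hs₀ _ hτ₁),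
          ← intervalIntegral.integral_sub ((hInt _ hs₁ _ hτ₁).sub (hInt _ hs₀ _ hτ₁))
            (hInt _ hs₁ _ hτ₀),
          ← intervalIntegral.integral_add (((hInt _ hs₁ _ hτ₁).sub (hInt _ hs₀ _ hτ₁)).sub
            (hInt _ hs₁ _ hτ₀)) (hInt _ hs₀ _ hτ₀)]
        congr 1
        funext t
        ring
    _ = ∫ t in a..b, ∫ s in s₀..s₁, ∫ τ in τ₀..τ₁, φ t * H t (s, τ) := by
        refine intervalIntegral.integral_congr fun t ht => ?_
        rw [uIcc_of_le hab] at ht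
        simp only [intervalIntegral.integral_const_mul]
        rw [h.rectDiff_eq t (hI ht) s₀ s₁ τ₀ τ₁ hs hτ h₀ h₁ h₂]
    _ = _ := by
        refine integral_rotate_of_continuousOn (G := fun t z => φ t * H t z) (N := B * N)
          hab hs hτ (fun t ht => ?_) (fun z hz => ?_) fun t ht z hz => ?_
        · exact continuousOn_const.mul ((h.continuousOn_mixed t (hI ht)).mono hR)
        · classical
          have h1 := h.stronglyMeasurable_indicator_mixed hlam ha hb hI (hR hz)
          have h2 : MeasureTheory.StronglyMeasurable ((Icc a b).indicator fun t : ℝ => φ t) := by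
            refine Measurable.stronglyMeasurable ?_
            rw [← piecewise_eq_indicator]
            exact hφ.measurable_piecewise continuousOn_const measurableSet_Icc
          rw [indicator_mul]
          exact h2.mul h1
        · rw [norm_mul]
          exact mul_le_mul (hB t ht) (hN t ht z (hR hz)) (norm_nonneg _) hB0

theorem four_mul_integral_mixed (h : IsCharWave Q H lam p I)
    (hlam : IsDiscCoefficient lam) (hp : p ≠ 0) (ha : 0 ≤ a) (hab : a ≤ b) (hb : b < 1)
    (hI : Icc a b ⊆ I)
    (hN : ∀ t ∈ Icc a b, ∀ z ∈ openCharTriangle, ‖H t z‖ ≤ N) {φ : ℂ → ℂ}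
    {r : ℝ} (hr : b < r) (hφ : DifferentiableOn ℂ φ (Metric.ball 0 r)) (hφa : φ a = 0) (hφb : φ b = 0)
    {z : ℝ × ℝ} (hz : z ∈ openCharTriangle) :
    4 * ∫ t in a..b, φ t * H t z
      = timeAverage Q a b (fun w => lam z w * φ w - p * deriv φ w) z := by
  have hmem : ∀ t ∈ Icc a b, (t : ℂ) ∈ Metric.ball (0:ℂ) r := fun t ht =>
    ofReal_mem_ball_of_mem_Icc ha hr ht
  have hz' := openCharTriangle_subset hz
  have cφ : ContinuousOn (fun t : ℝ => φ t) (Icc a b) :=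
    hφ.continuousOn.comp Complex.continuous_ofReal.continuousOn hmem
  have cφ' : ContinuousOn (fun t : ℝ => deriv φ t) (Icc a b) :=
    (hφ.deriv Metric.isOpen_ball).continuousOn.comp Complex.continuous_ofReal.continuousOn hmem
  have cl : ContinuousOn (fun t : ℝ => lam z t) (Icc a b) :=
    (hlam.differentiableOn z hz).continuousOn.comp Complex.continuous_ofReal.continuousOn
      fun t ht => ofReal_mem_ball_of_mem_Icc ha hb ht
  have cQ := h.continuousOn_time hz' hI
  obtain ⟨C, hC⟩ := isCompact_Icc.exists_bound_of_continuousOn (cl.mul cQ)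
  have iQ' : IntervalIntegrable (fun t => deriv (fun t' => Q t' z) t)
      MeasureTheory.volume a b := by
    rw [intervalIntegrable_iff]
    refine MeasureTheory.Measure.integrableOn_of_bounded (M := ‖p‖⁻¹ * (4 * N + C))
      (by simp [uIoc]) (stronglyMeasurable_deriv _).aestronglyMeasurable ?_
    refine (MeasureTheory.ae_restrict_iff' measurableSet_uIoc).2
      (Filter.Eventually.of_forall fun t ht => ?_)
    rw [uIoc_of_le hab] at ht
    have ht' := Ioc_subset_Icc_self ht
    have e1 : deriv (fun t' => Q t' z) t = p⁻¹ * (4 * H t z - lam z t * Q t z) := by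
      rw [h.equation t (hI ht') z hz]
      field_simp
      ring
    rw [e1, norm_mul, norm_inv]
    refine mul_le_mul_of_nonneg_left ((norm_sub_le _ _).trans (add_le_add ?_ (hC t ht')))
      (by positivity)
    rw [norm_mul]
    have := hN t ht' z hz
    norm_num
    exact this
  have iφ' : IntervalIntegrable (fun t : ℝ => deriv φ t) MeasureTheory.volume a b :=
    ContinuousOn.intervalIntegrable (by rwa [uIcc_of_le hab])
  have hparts := intervalIntegral.integral_mul_deriv_eq_deriv_mul
    (u := fun t : ℝ => φ t) (v := fun t => Q t z) (u' := fun t : ℝ => deriv φ t)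
    (v' := fun t => deriv (fun t' => Q t' z) t) (a := a) (b := b)
    (fun t ht => by
      rw [uIcc_of_le hab] at ht
      exact ((hφ.differentiableAt (Metric.isOpen_ball.mem_nhds
        (hmem t ht))).hasDerivAt).comp_ofReal)
    (fun t ht => by
      rw [uIcc_of_le hab] at ht
      exact (h.differentiableAt z hz' t (hI ht)).hasDerivAt) iφ' iQ'
  rw [hφa, hφb, zero_mul, zero_mul, sub_zero, zero_sub] at hparts
  have i1 : IntervalIntegrable (fun t : ℝ => lam z t * φ t * Q t z) MeasureTheory.volume a b :=
    ContinuousOn.intervalIntegrable (by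
      rw [uIcc_of_le hab]
      exact (cl.mul cφ).mul cQ)
  have i2 : IntervalIntegrable (fun t : ℝ => p * (deriv φ t * Q t z)) MeasureTheory.volume a b :=
    ContinuousOn.intervalIntegrable (by
      rw [uIcc_of_le hab]
      exact continuousOn_const.mul (cφ'.mul cQ))
  have i3 : IntervalIntegrable (fun t : ℝ => p * (φ t * deriv (fun t' => Q t' z) t))
      MeasureTheory.volume a b :=
    (iQ'.continuousOn_mul (by rwa [uIcc_of_le hab])).const_mul p
  calc 4 * ∫ t in a..b, φ t * H t z
      = ∫ t in a..b, (lam z t * φ t * Q t z + p * (φ t * deriv (fun t' => Q t' z) t)) := by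
        rw [← intervalIntegral.integral_const_mul]
        refine intervalIntegral.integral_congr fun t ht => ?_
        rw [uIcc_of_le hab] at ht
        rw [show 4 * (φ t * H t z) = φ t * (4 * H t z) by ring, h.equation t (hI ht) z hz]
        ring
    _ = (∫ t in a..b, lam z t * φ t * Q t z) - ∫ t in a..b, p * (deriv φ t * Q t z) := by
        rw [intervalIntegral.integral_add i1 i3, intervalIntegral.integral_const_mul, hparts,
          intervalIntegral.integral_const_mul]
        ring
    _ = _ := by
        rw [← intervalIntegral.integral_sub i1 i2, timeAverage]
        congr 1
        funext t
        ring

end IsCharWave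

theorem norm_le_of_norm_rectDiff_le {W : ℝ × ℝ → ℂ} (hW : ContinuousOn W charTriangle)
    (hd : ∀ s ∈ Icc (0:ℝ) 1, W (s, s) = 0) (he : ∀ s ∈ Icc (0:ℝ) 2, W (s, 0) = 0)
    {ξ η D : ℝ} (hη : 0 < η) (hξ : η < ξ) (h2 : ξ + η ≤ 2)
    (hD : ∀ s₀ s₁ τ₀ τ₁ : ℝ, s₀ ≤ s₁ → τ₀ ≤ τ₁ → 0 < τ₀ → τ₁ < s₀ → s₁ + τ₁ < 2 →
      s₁ ≤ ξ → τ₁ ≤ η → ‖rectDiff W s₀ s₁ τ₀ τ₁‖ ≤ D) : ‖W (ξ, η)‖ ≤ D := by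
  have ev : ∀ᶠ ε : ℝ in nhdsWithin 0 (Ioi 0), 0 < ε ∧ ε < min (η / 2) ((ξ - η) / 2) :=
    Ioo_mem_nhdsGT (lt_min (by linarith) (by linarith))
  have key : ∀ (u v : ℝ → ℝ), Continuous u → Continuous v →
      (∀ᶠ ε in nhdsWithin (0:ℝ) (Ioi 0), (u ε, v ε) ∈ charTriangle) →
      (u 0, v 0) ∈ charTriangle →
      Filter.Tendsto (fun ε => W (u ε, v ε)) (nhdsWithin 0 (Ioi 0)) (nhds (W (u 0, v 0))) := by
    intro u v hu hv h h0
    refine (hW _ h0).tendsto.comp (tendsto_nhdsWithin_iff.2 ⟨?_, h⟩)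
    exact ((hu.prodMk hv).tendsto 0).mono_left nhdsWithin_le_nhds
  have t1 := key (fun ε => ξ - ε) (fun ε => η - ε) (by fun_prop) (by fun_prop)
    (ev.mono fun ε ⟨h, h'⟩ => by
      have h3 := h'.trans_le (min_le_left _ _)
      have h4 := h'.trans_le (min_le_right _ _)
      exact ⟨by dsimp only; linarith, by dsimp only; linarith, by dsimp only; linarith⟩)
    ⟨by dsimp only; linarith, by dsimp only; linarith, by dsimp only; linarith⟩
  have t2 := key (fun ε => η + ε) (fun ε => η - ε) (by fun_prop) (by fun_prop)
    (ev.mono fun ε ⟨h, h'⟩ => by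
      have h3 := h'.trans_le (min_le_left _ _)
      have h4 := h'.trans_le (min_le_right _ _)
      exact ⟨by dsimp only; linarith, by dsimp only; linarith, by dsimp only; linarith⟩)
    ⟨by dsimp only; linarith, by dsimp only; linarith, by dsimp only; linarith⟩
  have t3 := key (fun ε => ξ - ε) (fun ε => ε) (by fun_prop) (by fun_prop)
    (ev.mono fun ε ⟨h, h'⟩ => by
      have h3 := h'.trans_le (min_le_left _ _)
      have h4 := h'.trans_le (min_le_right _ _)
      exact ⟨by dsimp only; linarith, by dsimp only; linarith, by dsimp only; linarith⟩)
    ⟨by dsimp only; linarith, by dsimp only; linarith, by dsimp only; linarith⟩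
  have t4 := key (fun ε => η + ε) (fun ε => ε) (by fun_prop) (by fun_prop)
    (ev.mono fun ε ⟨h, h'⟩ => by
      have h3 := h'.trans_le (min_le_left _ _)
      have h4 := h'.trans_le (min_le_right _ _)
      exact ⟨by dsimp only; linarith, by dsimp only; linarith, by dsimp only; linarith⟩)
    ⟨by dsimp only; linarith, by dsimp only; linarith, by dsimp only; linarith⟩
  have t5 := ((t1.sub t2).sub t3).add t4
  simp only [sub_zero, add_zero] at t5
  rw [hd η ⟨by linarith, by linarith⟩, he ξ ⟨by linarith, by linarith⟩,
    he η ⟨by linarith, by linarith⟩, sub_zero, sub_zero, add_zero] at t5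
  refine le_of_tendsto t5.norm (ev.mono fun ε ⟨h, h'⟩ => ?_)
  have h3 := h'.trans_le (min_le_left _ _)
  have h4 := h'.trans_le (min_le_right _ _)
  exact hD (η + ε) (ξ - ε) ε (η - ε) (by linarith) (by linarith) h (by linarith) (by linarith)
    (by linarith) (by linarith)

theorem norm_integral_rect_le_of_norm_le_pow {F : ℝ → ℝ → ℂ} {s₀ s₁ τ₀ τ₁ K : ℝ} (m : ℕ)
    (hK : 0 ≤ K) (hs₀ : 0 ≤ s₀) (hs : s₀ ≤ s₁) (hτ₀ : 0 ≤ τ₀) (hτ : τ₀ ≤ τ₁)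
    (hF : ∀ s ∈ Icc s₀ s₁, ∀ τ ∈ Icc τ₀ τ₁, ‖F s τ‖ ≤ K * (s * τ) ^ m) :
    ‖∫ s in s₀..s₁, ∫ τ in τ₀..τ₁, F s τ‖ ≤ K * (s₁ * τ₁) ^ (m + 1) / (m + 1) ^ 2 := by
  have pw : ∀ u v : ℝ, 0 ≤ u → ∫ x in u..v, x ^ m ≤ v ^ (m + 1) / (m + 1) := by
    intro u v hu
    rw [integral_pow]
    gcongr
    linarith [pow_nonneg hu (m + 1)]
  have h1 : ∀ s ∈ Icc s₀ s₁,
      ‖∫ τ in τ₀..τ₁, F s τ‖ ≤ (K * (τ₁ ^ (m + 1) / (m + 1))) * s ^ m := by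
    intro s hs'
    have hs0 : 0 ≤ s := hs₀.trans hs'.1
    calc ‖∫ τ in τ₀..τ₁, F s τ‖ ≤ ∫ τ in τ₀..τ₁, (K * s ^ m) * τ ^ m := by
          refine intervalIntegral.norm_integral_le_of_norm_le hτ
            (Filter.Eventually.of_forall fun τ hτ' => ?_)
            (Continuous.intervalIntegrable (by fun_prop) _ _)
          refine (hF s hs' τ (Ioc_subset_Icc_self hτ')).trans_eq ?_
          rw [mul_pow, mul_assoc]
      _ = (K * s ^ m) * ∫ τ in τ₀..τ₁, τ ^ m := intervalIntegral.integral_const_mul _ _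
      _ ≤ (K * s ^ m) * (τ₁ ^ (m + 1) / (m + 1)) :=
          mul_le_mul_of_nonneg_left (pw _ _ hτ₀) (by positivity)
      _ = _ := by ring
  have hτ₁ : 0 ≤ τ₁ := hτ₀.trans hτ
  calc ‖∫ s in s₀..s₁, ∫ τ in τ₀..τ₁, F s τ‖
      ≤ ∫ s in s₀..s₁, (K * (τ₁ ^ (m + 1) / (m + 1))) * s ^ m := by
        refine intervalIntegral.norm_integral_le_of_norm_le hs
          (Filter.Eventually.of_forall fun s hs' => h1 s (Ioc_subset_Icc_self hs'))
          (Continuous.intervalIntegrable (by fun_prop) _ _)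
    _ = (K * (τ₁ ^ (m + 1) / (m + 1))) * ∫ s in s₀..s₁, s ^ m :=
        intervalIntegral.integral_const_mul _ _
    _ ≤ (K * (τ₁ ^ (m + 1) / (m + 1))) * (s₁ ^ (m + 1) / (m + 1)) :=
        mul_le_mul_of_nonneg_left (pw _ _ hs₀) (by positivity)
    _ = _ := by
        rw [mul_pow]
        field_simp

namespace IsCharWave

variable {Q H : ℝ → ℝ × ℝ → ℂ} {lam : ℝ × ℝ → ℂ → ℂ} {p : ℂ} {I : Set ℝ} {a b N : ℝ}

/-- Averages against weights vanishing to order `m` at the endpoints of `[a, b]` decay like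
`1 / (m!)²`. -/
theorem norm_timeAverage_pow_mul_le (h : IsCharWave Q H lam p I) (hlam : IsDiscCoefficient lam)
    (hp : p ≠ 0) (ha : 0 ≤ a) (hab : a ≤ b) (hI : Icc a b ⊆ I)
    (hQ : ∀ t ∈ Icc a b, ∀ z ∈ charTriangle, ‖Q t z‖ ≤ N)
    (hN : ∀ t ∈ Icc a b, ∀ z ∈ openCharTriangle, ‖H t z‖ ≤ N)
    {r ρ δ C Γ : ℝ} (hr : b < r) (hδ : 0 < δ) (n : ℕ) (hρ : r + n * δ ≤ ρ) (hρ1 : ρ < 1)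
    (hC0 : 0 ≤ C) (hC : ∀ z ∈ openCharTriangle, ∀ w ∈ Metric.ball (0:ℂ) ρ, ‖lam z w‖ ≤ C)
    (hΓ : 4 * C + ‖p‖ * (4 * n + 8 / δ) ≤ Γ) (m : ℕ) (hm : m ≤ n) (g : ℂ → ℂ) (B : ℝ)
    (hg : DifferentiableOn ℂ g (Metric.ball 0 (r + m * δ)))
    (hB : ∀ w ∈ Metric.ball (0:ℂ) (r + m * δ), ‖g w‖ ≤ B) (z : ℝ × ℝ) (hz : z ∈ charTriangle) :
    ‖timeAverage Q a b (fun w => ((w - a) * (b - w)) ^ m * g w) z‖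
      ≤ N * B * (Γ * (z.1 * z.2)) ^ m / (m.factorial : ℝ) ^ 2 := by
  have hr0 : 0 < r := by linarith
  have hrm : ∀ k : ℕ, k ≤ n → r + k * δ < 1 := fun k hk => by
    have : (k : ℝ) * δ ≤ n * δ := by gcongr
    linarith
  have hN0 : 0 ≤ N := (norm_nonneg _).trans (hQ a ⟨le_rfl, hab⟩ z hz)
  have hb1 : b < 1 := by
    have := hrm 0 (Nat.zero_le _)
    simp at this
    linarith
  have hΓ0 : 0 ≤ Γ := le_trans (by positivity) hΓ
  induction m generalizing g B z with
  | zero =>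
    simp only [Nat.cast_zero, zero_mul, add_zero] at hg hB
    simp only [pow_zero, one_mul, Nat.factorial_zero, Nat.cast_one, one_pow, div_one, mul_one,
      timeAverage]
    have hB0 : 0 ≤ B := (norm_nonneg _).trans (hB 0 (by simpa using hr0))
    calc ‖∫ t in a..b, g t * Q t z‖ ≤ (N * B) * |b - a| := by
          refine intervalIntegral.norm_integral_le_of_norm_le_const fun t ht => ?_
          rw [uIoc_of_le hab] at ht
          have ht' := Ioc_subset_Icc_self ht
          rw [norm_mul, mul_comm]
          exact mul_le_mul (hQ t ht' z hz) (hB _ (ofReal_mem_ball_of_mem_Icc ha hr ht'))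
            (norm_nonneg _) hN0
      _ ≤ (N * B) * 1 := by
          refine mul_le_mul_of_nonneg_left ?_ (by positivity)
          rw [abs_of_nonneg (by linarith)]
          linarith
      _ = N * B := mul_one _
  | succ m ih =>
    have hm' : m ≤ n := by omega
    have hn0 : (0:ℝ) ≤ m * δ := by positivity
    have hlt : r + m * δ < r + ((m + 1 : ℕ) : ℝ) * δ := by
      push_cast
      linarith
    have hsub : Metric.ball (0:ℂ) (r + m * δ) ⊆ Metric.ball 0 (r + ((m + 1 : ℕ) : ℝ) * δ) :=
      Metric.ball_subset_ball hlt.le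
    have hB0 : 0 ≤ B := (norm_nonneg _).trans (hB 0 (by
      simp only [Metric.mem_ball, dist_self]
      linarith))
    let P : ℂ → ℂ := fun w => (w - a) * (b - w)
    have hPd : ∀ w, HasDerivAt P (a + b - 2 * w) w := fun w => by
      refine (((hasDerivAt_id w).sub_const (a:ℂ)).mul
        ((hasDerivAt_id w).const_sub (b:ℂ))).congr_deriv ?_
      simp only [id]
      ring
    let φ : ℂ → ℂ := fun w => P w ^ (m + 1) * g w
    have hgd : ∀ w ∈ Metric.ball (0:ℂ) (r + m * δ), HasDerivAt g (deriv g w) w := fun w hw =>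
      (hg.differentiableAt (Metric.isOpen_ball.mem_nhds (hsub hw))).hasDerivAt
    have hφd : ∀ w ∈ Metric.ball (0:ℂ) (r + m * δ), HasDerivAt φ
        (P w ^ m * ((m + 1) * (a + b - 2 * w) * g w + P w * deriv g w)) w := by
      intro w hw
      refine (((hPd w).pow (m + 1)).mul (hgd w hw)).congr_deriv ?_
      rw [Nat.add_sub_cancel, Pi.pow_apply]
      push_cast
      ring
    have hr' : b < r + m * δ := by linarith
    have hφdiff : DifferentiableOn ℂ φ (Metric.ball 0 (r + m * δ)) := fun w hw =>
      (hφd w hw).differentiableAt.differentiableWithinAt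
    have hφa : φ a = 0 := by simp [φ, P]
    have hφb : φ b = 0 := by simp [φ, P]
    have hφc : ContinuousOn (fun t : ℝ => φ t) (Icc a b) :=
      hφdiff.continuousOn.comp Complex.continuous_ofReal.continuousOn
        fun t ht => ofReal_mem_ball_of_mem_Icc ha hr' ht
    have hW := h.continuousOn_timeAverage hab hI hQ hφc
    have hnorm : ∀ w ∈ Metric.ball (0:ℂ) (r + m * δ), ‖w‖ < 1 := fun w hw => by
      have := hrm m hm'
      simp only [Metric.mem_ball, dist_zero_right] at hw
      linarith
    have ha1 : ‖(a:ℂ)‖ ≤ 1 := by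
      rw [Complex.norm_real, Real.norm_eq_abs, abs_of_nonneg ha]
      linarith
    have hb1' : ‖(b:ℂ)‖ ≤ 1 := by
      rw [Complex.norm_real, Real.norm_eq_abs, abs_of_nonneg (ha.trans hab)]
      linarith
    have hPn : ∀ w ∈ Metric.ball (0:ℂ) (r + m * δ), ‖P w‖ ≤ 4 := fun w hw => by
      have h1 : ‖w - a‖ ≤ 2 := (norm_sub_le _ _).trans (by linarith [hnorm w hw])
      have h2 : ‖b - w‖ ≤ 2 := (norm_sub_le _ _).trans (by linarith [hnorm w hw])
      calc ‖P w‖ = ‖w - a‖ * ‖b - w‖ := norm_mul _ _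
        _ ≤ 2 * 2 := mul_le_mul h1 h2 (norm_nonneg _) (by norm_num)
        _ = 4 := by norm_num
    have hPn' : ∀ w ∈ Metric.ball (0:ℂ) (r + m * δ), ‖(a:ℂ) + b - 2 * w‖ ≤ 4 := fun w hw => by
      have h1 : ‖2 * w‖ ≤ 2 := by
        rw [norm_mul]
        norm_num
        exact (hnorm w hw).le
      have h2 : ‖(a:ℂ) + b‖ ≤ 2 := (norm_add_le _ _).trans (by linarith)
      exact (norm_sub_le _ _).trans (by linarith)
    have hg' : ∀ w ∈ Metric.ball (0:ℂ) (r + m * δ), ‖deriv g w‖ ≤ B / (δ / 2) := by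
      intro w hw
      have hcb : Metric.closedBall w (δ / 2) ⊆ Metric.ball 0 (r + ((m + 1 : ℕ) : ℝ) * δ) := by
        intro v hv
        simp only [Metric.mem_ball, Metric.mem_closedBall] at hv hw ⊢
        have := dist_triangle v w 0
        push_cast
        linarith
      refine Complex.norm_deriv_le_of_forall_mem_sphere_norm_le (by positivity) ?_
        fun v hv => hB v (hcb (Metric.sphere_subset_closedBall hv))
      refine ⟨hg.mono (Metric.ball_subset_closedBall.trans hcb), ?_⟩
      rw [closure_ball _ (by positivity)]
      exact hg.continuousOn.mono hcb
    have hmix : ∀ z ∈ openCharTriangle,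
        ‖∫ t in a..b, φ t * H t z‖
          ≤ N * B * Γ ^ (m + 1) / (m.factorial : ℝ) ^ 2 * (z.1 * z.2) ^ m := by
      intro z hz
      have h4 := h.four_mul_integral_mixed hlam hp ha hab hb1 hI hN hr' hφdiff hφa hφb hz
      let g₁ : ℂ → ℂ := fun w =>
        lam z w * P w * g w - p * ((m + 1) * (a + b - 2 * w) * g w + P w * deriv g w)
      have e1 : timeAverage Q a b (fun w => lam z w * φ w - p * deriv φ w) z
          = timeAverage Q a b (fun w => ((w - a) * (b - w)) ^ m * g₁ w) z := by
        refine intervalIntegral.integral_congr fun t ht => ?_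
        rw [uIcc_of_le hab] at ht
        simp only [(hφd t (ofReal_mem_ball_of_mem_Icc ha hr' ht)).deriv, φ, g₁, P]
        ring
      have hb3 : Metric.ball (0:ℂ) (r + m * δ) ⊆ Metric.ball 0 ρ := by
        refine Metric.ball_subset_ball (le_trans ?_ hρ)
        gcongr
      have d1 : DifferentiableOn ℂ g₁ (Metric.ball 0 (r + m * δ)) := by
        have dl : DifferentiableOn ℂ (lam z) (Metric.ball 0 (r + m * δ)) :=
          (hlam.differentiableOn z hz).mono (Metric.ball_subset_ball (hrm m hm').le)
        have dP : DifferentiableOn ℂ P (Metric.ball 0 (r + m * δ)) := fun w _ =>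
          (hPd w).differentiableAt.differentiableWithinAt
        have dg := hg.mono hsub
        have dg' := (hg.deriv Metric.isOpen_ball).mono hsub
        exact ((dl.mul dP).mul dg).sub (DifferentiableOn.const_mul
          (((DifferentiableOn.const_mul (by fun_prop) _).mul dg).add (dP.mul dg')) p)
      have b1 : ∀ w ∈ Metric.ball (0:ℂ) (r + m * δ), ‖g₁ w‖ ≤ B * Γ := by
        intro w hw
        have n1 : ‖lam z w * P w * g w‖ ≤ C * 4 * B := by
          rw [norm_mul, norm_mul]
          exact mul_le_mul (mul_le_mul (hC z hz w (hb3 hw)) (hPn w hw) (norm_nonneg _) hC0)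
            (hB w (hsub hw)) (norm_nonneg _) (by positivity)
        have n2 : ‖((m:ℂ) + 1) * (a + b - 2 * w) * g w‖ ≤ (m + 1) * 4 * B := by
          rw [norm_mul, norm_mul]
          have : ‖(m:ℂ) + 1‖ = m + 1 := by
            have := Complex.norm_natCast (m + 1)
            push_cast at this
            exact this
          rw [this]
          exact mul_le_mul (mul_le_mul_of_nonneg_left (hPn' w hw) (by positivity))
            (hB w (hsub hw)) (norm_nonneg _) (by positivity)
        have n3 : ‖P w * deriv g w‖ ≤ 4 * (B / (δ / 2)) := by
          rw [norm_mul]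
          exact mul_le_mul (hPn w hw) (hg' w hw) (norm_nonneg _) (by norm_num)
        have n4 : ‖g₁ w‖ ≤ C * 4 * B + ‖p‖ * ((m + 1) * 4 * B + 4 * (B / (δ / 2))) := by
          refine (norm_sub_le _ _).trans (add_le_add n1 ?_)
          rw [norm_mul]
          exact mul_le_mul_of_nonneg_left ((norm_add_le _ _).trans (add_le_add n2 n3))
            (norm_nonneg _)
        refine n4.trans ?_
        have hmn : ((m:ℝ) + 1) ≤ n := by exact_mod_cast hm
        calc C * 4 * B + ‖p‖ * ((m + 1) * 4 * B + 4 * (B / (δ / 2)))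
            = B * (4 * C + ‖p‖ * (4 * (m + 1) + 8 / δ)) := by
              field_simp
              ring
          _ ≤ B * (4 * C + ‖p‖ * (4 * n + 8 / δ)) := by gcongr
          _ ≤ B * Γ := by gcongr
      have hfin := ih hm' g₁ (B * Γ) d1 b1 z (openCharTriangle_subset hz)
      rw [← e1, ← h4, norm_mul] at hfin
      norm_num at hfin
      have hnn := norm_nonneg (∫ t in a..b, φ t * H t z)
      calc ‖∫ t in a..b, φ t * H t z‖ ≤ 4 * ‖∫ t in a..b, φ t * H t z‖ := by linarith
        _ ≤ _ := hfin
        _ = _ := by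
          rw [mul_pow]
          ring
    have hfac : (((m + 1).factorial : ℕ) : ℝ) ^ 2 = (m.factorial : ℝ) ^ 2 * (m + 1) ^ 2 := by
      rw [Nat.factorial_succ]
      push_cast
      ring
    have hz12 : 0 ≤ z.1 * z.2 := mul_nonneg (hz.1.trans hz.2.1) hz.1
    have hnonneg : 0 ≤ N * B * (Γ * (z.1 * z.2)) ^ (m + 1) / (((m + 1).factorial : ℕ) : ℝ) ^ 2 := by
      positivity
    have hWd : ∀ s ∈ Icc (0:ℝ) 1, timeAverage Q a b φ (s, s) = 0 := fun s hs => by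
      refine (intervalIntegral.integral_congr (g := fun _ => 0) fun t ht => ?_).trans (by simp)
      rw [uIcc_of_le hab] at ht
      simp [h.diagonal t (hI ht) s hs]
    have hWe : ∀ s ∈ Icc (0:ℝ) 2, timeAverage Q a b φ (s, 0) = 0 := fun s hs => by
      refine (intervalIntegral.integral_congr (g := fun _ => 0) fun t ht => ?_).trans (by simp)
      rw [uIcc_of_le hab] at ht
      simp [h.edge t (hI ht) s hs]
    change ‖timeAverage Q a b φ z‖ ≤ _
    obtain ⟨ξ, η⟩ := z
    obtain ⟨z1, z2, z3⟩ := hz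
    simp only at z1 z2 z3 hnonneg ⊢
    rcases z1.eq_or_lt with z1 | z1
    · subst z1
      rw [hWe ξ ⟨z2, by linarith⟩, norm_zero]
      exact hnonneg
    rcases z2.eq_or_lt with z2 | z2
    · subst z2
      rw [hWd η ⟨z1.le, by linarith⟩, norm_zero]
      exact hnonneg
    refine norm_le_of_norm_rectDiff_le hW hWd hWe z1 z2 z3 ?_
    intro s₀ s₁ τ₀ τ₁ hs hτ h₀ h₁ h₂ hsξ hτη
    rw [h.rectDiff_timeAverage hlam ha hab hb1 hI hN hφc hs hτ h₀ h₁ h₂]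
    refine (norm_integral_rect_le_of_norm_le_pow m (by positivity) (by linarith) hs h₀.le hτ
      fun s hs' τ hτ' => hmix (s, τ)
        (Icc_prod_Icc_subset_openCharTriangle h₀ h₁ h₂ ⟨hs', hτ'⟩)).trans ?_
    rw [hfac, mul_pow Γ]
    have : (s₁ * τ₁) ^ (m + 1) ≤ (ξ * η) ^ (m + 1) := by
      have : 0 ≤ s₁ := by linarith
      have : 0 ≤ τ₁ := by linarith
      have : 0 ≤ ξ := by linarith
      gcongr
    calc N * B * Γ ^ (m + 1) / (m.factorial : ℝ) ^ 2 * (s₁ * τ₁) ^ (m + 1) / (m + 1) ^ 2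
        ≤ N * B * Γ ^ (m + 1) / (m.factorial : ℝ) ^ 2 * (ξ * η) ^ (m + 1) / (m + 1) ^ 2 := by
          gcongr
      _ = _ := by
          field_simp

end IsCharWave

theorem le_setIntegral_pow_mul_pow {a b : ℝ} (hab : a < b) (n : ℕ) :
    (b - a) / 2 * ((b - a) ^ 2 / 16) ^ n ≤ ∫ t in Icc a b, ((t - a) * (b - t)) ^ n := by
  have hsub : Icc (a + (b - a) / 4) (b - (b - a) / 4) ⊆ Icc a b :=
    Icc_subset_Icc (by linarith) (by linarith)
  have hInt : MeasureTheory.IntegrableOn (fun t : ℝ => ((t - a) * (b - t)) ^ n) (Icc a b) :=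
    ContinuousOn.integrableOn_Icc (by fun_prop)
  have h1 : ∫ _t in Icc (a + (b - a) / 4) (b - (b - a) / 4), ((b - a) ^ 2 / 16) ^ n
      ≤ ∫ t in Icc (a + (b - a) / 4) (b - (b - a) / 4), ((t - a) * (b - t)) ^ n := by
    refine MeasureTheory.setIntegral_mono_on (by simp) (hInt.mono_set hsub) measurableSet_Icc ?_
    intro t ht
    refine pow_le_pow_left₀ (by positivity) ?_ n
    nlinarith [mul_nonneg (sub_nonneg.2 ht.1) (sub_nonneg.2 ht.2), ht.1, ht.2]
  have h2 : ∫ t in Icc (a + (b - a) / 4) (b - (b - a) / 4), ((t - a) * (b - t)) ^ n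
      ≤ ∫ t in Icc a b, ((t - a) * (b - t)) ^ n := by
    refine MeasureTheory.setIntegral_mono_set hInt ?_ hsub.eventuallyLE
    refine (MeasureTheory.ae_restrict_iff' measurableSet_Icc).2
      (Filter.Eventually.of_forall fun t ht => ?_)
    exact pow_nonneg (mul_nonneg (by linarith [ht.1]) (by linarith [ht.2])) n
  refine le_trans (le_of_eq ?_) (h1.trans h2)
  rw [MeasureTheory.setIntegral_const, Real.volume_real_Icc_of_le (by linarith), smul_eq_mul]
  ring

namespace IsCharWave

variable {Q H : ℝ → ℝ × ℝ → ℂ} {lam : ℝ × ℝ → ℂ → ℂ} {p : ℂ} {I : Set ℝ} {a b N : ℝ}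

theorem norm_timeAverage_pow_le (h : IsCharWave Q H lam p I) (hlam : IsDiscCoefficient lam)
    (hp : p ≠ 0) (ha : 0 ≤ a) (hab : a ≤ b) (hb : b < 1) (hI : Icc a b ⊆ I)
    (hQ : ∀ t ∈ Icc a b, ∀ z ∈ charTriangle, ‖Q t z‖ ≤ N)
    (hN : ∀ t ∈ Icc a b, ∀ z ∈ openCharTriangle, ‖H t z‖ ≤ N) {z : ℝ × ℝ}
    (hz : z ∈ charTriangle) :
    ∃ Λ : ℝ, ∀ n : ℕ, 0 < n →
      ‖timeAverage Q a b (fun w => ((w - a) * (b - w)) ^ n) z‖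
        ≤ N * (Λ ^ n / (n.factorial : ℝ)) := by
  have hN0 : 0 ≤ N := (norm_nonneg _).trans (hQ a ⟨le_rfl, hab⟩ z hz)
  obtain ⟨C, hC0, hC⟩ := hlam.bounded (b + 2 * ((1 - b) / 3)) (by linarith)
  have hσ : 0 < (1 - b) / 3 := by linarith
  set σ := (1 - b) / 3 with hσdef
  set Γ := 4 * C + ‖p‖ * (4 + 8 / σ) with hΓ
  have hΓ0 : 0 ≤ Γ := by positivity
  refine ⟨Γ * Real.exp 1, fun n hn => ?_⟩
  have hn' : (0:ℝ) < n := by exact_mod_cast hn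
  have hn1 : (1:ℝ) ≤ n := by exact_mod_cast hn
  have key := h.norm_timeAverage_pow_mul_le hlam hp ha hab hI hQ hN (r := b + σ)
    (ρ := b + 2 * σ) (δ := σ / n) (C := C) (Γ := Γ * n) (by linarith) (by positivity) n
    (by
      rw [mul_div_cancel₀ _ hn'.ne']
      linarith) (by linarith) hC0 hC
    (by
      have : 4 * C ≤ 4 * C * n := le_mul_of_one_le_right (by positivity) hn1
      calc 4 * C + ‖p‖ * (4 * n + 8 / (σ / n)) ≤ 4 * C * n + ‖p‖ * (4 * n + 8 / (σ / n)) := by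
            linarith
        _ = Γ * n := by
            rw [hΓ]
            field_simp)
    n le_rfl (fun _ => 1) 1 (differentiableOn_const _) (fun w _ => by simp) z hz
  simp only [mul_one] at key
  refine key.trans ?_
  have hz12 : 0 ≤ z.1 * z.2 := mul_nonneg (hz.1.trans hz.2.1) hz.1
  have hz1 : z.1 * z.2 ≤ 1 := by nlinarith [sq_nonneg (z.1 - z.2), hz.1, hz.2.1, hz.2.2]
  have hexp := Real.pow_div_factorial_le_exp (n : ℝ) hn'.le n
  calc N * (Γ * n * (z.1 * z.2)) ^ n / (n.factorial : ℝ) ^ 2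
      ≤ N * (Γ * n * 1) ^ n / (n.factorial : ℝ) ^ 2 := by gcongr
    _ = N * (Γ ^ n / n.factorial) * ((n:ℝ) ^ n / n.factorial) := by
        rw [mul_one, mul_pow]
        field_simp
    _ ≤ N * (Γ ^ n / n.factorial) * Real.exp n := by gcongr
    _ = _ := by
        rw [mul_pow, ← Real.exp_nat_mul, mul_one]
        ring

theorem eq_zero_midpoint (h : IsCharWave Q H lam p I) (hlam : IsDiscCoefficient lam)
    (hp : p ≠ 0) (ha : 0 ≤ a) (hab : a < b) (hb : b < 1) (hI : Icc a b ⊆ I)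
    (hQ : ∀ t ∈ Icc a b, ∀ z ∈ charTriangle, ‖Q t z‖ ≤ N)
    (hN : ∀ t ∈ Icc a b, ∀ z ∈ openCharTriangle, ‖H t z‖ ≤ N) {z : ℝ × ℝ}
    (hz : z ∈ charTriangle) : Q ((a + b) / 2) z = 0 := by
  obtain ⟨Λ, hΛ⟩ := h.norm_timeAverage_pow_le hlam hp ha hab.le hb hI hQ hN hz
  have hmid : (a + b) / 2 ∈ Icc a b := ⟨by linarith, by linarith⟩
  have hpeak := tendsto_setIntegral_pow_smul_of_unique_maximum_of_isCompact_of_continuousOn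
    (μ := MeasureTheory.volume) (x₀ := (a + b) / 2) (c := fun t : ℝ => (t - a) * (b - t))
    (g := fun t => Q t z) (isCompact_Icc (a := a) (b := b)) (by fun_prop)
    (fun y _ hne => by
      have : 0 < (y - (a + b) / 2) ^ 2 := by
        have := sub_ne_zero.2 hne
        positivity
      nlinarith)
    (fun t ht => mul_nonneg (by linarith [ht.1]) (by linarith [ht.2]))
    (mul_pos (by linarith) (by linarith))
    (by
      rw [interior_Icc, closure_Ioo hab.ne]
      exact hmid)
    (h.continuousOn_time hz hI)
  set q := (b - a) ^ 2 / 16 with hq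
  have hd : 0 < b - a := by linarith
  have hq0 : 0 < q := by positivity
  have hlim : Filter.Tendsto (fun n : ℕ => (2 / (b - a) * N) * ((Λ / q) ^ n / (n.factorial : ℝ)))
      Filter.atTop (nhds 0) := by
    simpa using (FloorSemiring.tendsto_pow_div_factorial_atTop (Λ / q)).const_mul
      (2 / (b - a) * N)
  refine tendsto_nhds_unique hpeak (squeeze_zero_norm' ?_ hlim)
  filter_upwards [Filter.eventually_gt_atTop 0] with n hn
  have e1 : ∫ t in Icc a b, ((t - a) * (b - t)) ^ n • Q t z
      = timeAverage Q a b (fun w => ((w - a) * (b - w)) ^ n) z := by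
    rw [timeAverage, intervalIntegral.integral_of_le hab.le,
      MeasureTheory.integral_Icc_eq_integral_Ioc]
    congr 1
    funext t
    rw [Complex.real_smul]
    push_cast
    rfl
  have hlow := le_setIntegral_pow_mul_pow hab n
  rw [← hq] at hlow
  clear_value q
  have hlow0 : 0 < (b - a) / 2 * q ^ n := by positivity
  rw [e1, norm_smul, norm_inv, Real.norm_of_nonneg (hlow0.le.trans hlow)]
  calc _ ≤ ((b - a) / 2 * q ^ n)⁻¹ * (N * (Λ ^ n / (n.factorial : ℝ))) :=
        mul_le_mul (inv_anti₀ hlow0 hlow) (hΛ n hn) (norm_nonneg _) (by positivity)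
    _ = _ := by
        rw [div_pow Λ]
        field_simp

end IsCharWave

theorem isCompact_charTriangle : IsCompact charTriangle := by
  have hc : IsClosed charTriangle :=
    (isClosed_le continuous_const continuous_snd).inter
      ((isClosed_le continuous_snd continuous_fst).inter
        (isClosed_le (continuous_fst.add continuous_snd) continuous_const))
  refine (isCompact_Icc (a := ((0:ℝ), (0:ℝ))) (b := (2, 2))).of_isClosed_subset hc ?_
  rintro ⟨s, τ⟩ ⟨h1, h2, h3⟩
  simp only at h1 h2 h3
  exact ⟨⟨by dsimp only; linarith, h1⟩, ⟨by dsimp only; linarith, by dsimp only; linarith⟩⟩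

theorem isOpen_openCharTriangle : IsOpen openCharTriangle :=
  (isOpen_lt continuous_const continuous_snd).inter
    ((isOpen_lt continuous_snd continuous_fst).inter
      (isOpen_lt (continuous_fst.add continuous_snd) continuous_const))

theorem norm_integral_rect_le {F : ℝ → ℝ → ℂ} {s₀ s₁ τ₀ τ₁ K : ℝ}
    (hs : s₀ ≤ s₁) (hτ : τ₀ ≤ τ₁) (hF : ∀ s ∈ Icc s₀ s₁, ∀ τ ∈ Icc τ₀ τ₁, ‖F s τ‖ ≤ K) :
    ‖∫ s in s₀..s₁, ∫ τ in τ₀..τ₁, F s τ‖ ≤ K * ((s₁ - s₀) * (τ₁ - τ₀)) := by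
  refine (intervalIntegral.norm_integral_le_of_norm_le_const (C := K * (τ₁ - τ₀))
    fun s hs' => ?_).trans_eq ?_
  · rw [uIoc_of_le hs] at hs'
    refine (intervalIntegral.norm_integral_le_of_norm_le_const (C := K) fun τ hτ' => ?_).trans_eq ?_
    · rw [uIoc_of_le hτ] at hτ'
      exact hF s (Ioc_subset_Icc_self hs') τ (Ioc_subset_Icc_self hτ')
    · rw [abs_of_nonneg (sub_nonneg.2 hτ)]
  · rw [abs_of_nonneg (sub_nonneg.2 hs)]
    ring

/-- `f` and its second differences over rectangles, divided by the area, are bounded by `N`. -/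
def RectBounded (f : ℝ × ℝ → ℂ) (N : ℝ) : Prop :=
  (∀ z ∈ charTriangle, ‖f z‖ ≤ N) ∧
    ∀ s₀ s₁ τ₀ τ₁ : ℝ, s₀ ≤ s₁ → τ₀ ≤ τ₁ → 0 < τ₀ → τ₁ < s₀ → s₁ + τ₁ < 2 →
      ‖rectDiff f s₀ s₁ τ₀ τ₁‖ ≤ N * ((s₁ - s₀) * (τ₁ - τ₀))

namespace IsCharWave

variable {Q H : ℝ → ℝ × ℝ → ℂ} {lam : ℝ × ℝ → ℂ → ℂ} {p : ℂ} {I : Set ℝ}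

theorem exists_rectBounded (h : IsCharWave Q H lam p I) {t : ℝ} (ht : t ∈ I) :
    ∃ n : ℕ, RectBounded (Q t) n := by
  obtain ⟨C, hC⟩ := h.bounded_mixed t ht
  obtain ⟨B, hB⟩ := isCompact_charTriangle.exists_bound_of_continuousOn (h.continuousOn t ht)
  obtain ⟨n, hn⟩ := exists_nat_ge (max B C)
  refine ⟨n, fun z hz => (hB z hz).trans ((le_max_left _ _).trans hn), ?_⟩
  intro s₀ s₁ τ₀ τ₁ hs hτ h₀ h₁ h₂
  rw [h.rectDiff_eq t ht s₀ s₁ τ₀ τ₁ hs hτ h₀ h₁ h₂]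
  exact norm_integral_rect_le hs hτ fun s hs' τ hτ' =>
    (hC _ (Icc_prod_Icc_subset_openCharTriangle h₀ h₁ h₂ ⟨hs', hτ'⟩)).trans
      ((le_max_right _ _).trans hn)

theorem norm_mixed_le (h : IsCharWave Q H lam p I) {t N : ℝ} (ht : t ∈ I)
    (hN : RectBounded (Q t) N) {z : ℝ × ℝ} (hz : z ∈ openCharTriangle) : ‖H t z‖ ≤ N := by
  refine le_of_forall_pos_le_add fun ε hε => ?_
  have hc := (h.continuousOn_mixed t ht).continuousAt (isOpen_openCharTriangle.mem_nhds hz)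
  have hev := (Metric.continuousAt_iff.1 hc) ε hε
  obtain ⟨d₁, hd₁, hd₁'⟩ := hev
  obtain ⟨d₂, hd₂, hd₂'⟩ := Metric.isOpen_iff.1 isOpen_openCharTriangle z hz
  set d := min d₁ d₂ / 2 with hd
  have hd0 : 0 < d := by positivity
  have hdm : d < min d₁ d₂ := half_lt_self (by positivity)
  obtain ⟨s, τ⟩ := z
  have hball : ∀ s' ∈ Icc s (s + d), ∀ τ' ∈ Icc τ (τ + d),
      dist (s', τ') (s, τ) < min d₁ d₂ := by
    intro s' hs' τ' hτ'
    refine lt_of_le_of_lt ?_ hdm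
    rw [Prod.dist_eq, max_le_iff]
    constructor
    · rw [Real.dist_eq, abs_of_nonneg (by linarith [hs'.1])]
      linarith [hs'.2]
    · rw [Real.dist_eq, abs_of_nonneg (by linarith [hτ'.1])]
      linarith [hτ'.2]
  have hc1 : (s, τ + d) ∈ openCharTriangle := hd₂' ((hball s ⟨le_rfl, by linarith⟩ (τ + d)
    ⟨by linarith, le_rfl⟩).trans_le (min_le_right _ _))
  have hc2 : (s + d, τ + d) ∈ openCharTriangle := hd₂' ((hball (s + d) ⟨by linarith, le_rfl⟩
    (τ + d) ⟨by linarith, le_rfl⟩).trans_le (min_le_right _ _))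
  have hrect := h.rectDiff_eq t ht s (s + d) τ (τ + d) (by linarith) (by linarith) hz.1
    hc1.2.1 hc2.2.2
  have hbd := hN.2 s (s + d) τ (τ + d) (by linarith) (by linarith) hz.1 hc1.2.1 hc2.2.2
  rw [hrect] at hbd
  have hsubset : Icc s (s + d) ×ˢ Icc τ (τ + d) ⊆ openCharTriangle :=
    Icc_prod_Icc_subset_openCharTriangle hz.1 hc1.2.1 hc2.2.2
  have hdiff : ‖∫ s' in s..(s + d), ∫ τ' in τ..(τ + d), (H t (s', τ') - H t (s, τ))‖
      ≤ ε * ((s + d - s) * (τ + d - τ)) := by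
    refine norm_integral_rect_le (by linarith) (by linarith) fun s' hs' τ' hτ' => ?_
    rw [← dist_eq_norm]
    exact (hd₁' ((hball s' hs' τ' hτ').trans_le (min_le_left _ _))).le
  have hinner : ∀ s' ∈ uIcc s (s + d), ∫ τ' in τ..(τ + d), (H t (s', τ') - H t (s, τ))
      = (∫ τ' in τ..(τ + d), H t (s', τ')) - d * H t (s, τ) := by
    intro s' hs'
    rw [uIcc_of_le (by linarith)] at hs'
    rw [intervalIntegral.integral_sub]
    · simp
    · refine ContinuousOn.intervalIntegrable ?_
      rw [uIcc_of_le (by linarith)]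
      exact (h.continuousOn_mixed t ht).comp (by fun_prop) fun τ' hτ' => hsubset ⟨hs', hτ'⟩
    · simp
  have hout : IntervalIntegrable (fun s' => ∫ τ' in τ..(τ + d), H t (s', τ'))
      MeasureTheory.volume s (s + d) := by
    refine ContinuousOn.intervalIntegrable ?_
    rw [uIcc_of_le (by linarith)]
    obtain ⟨C, hC⟩ := (isCompact_Icc.prod isCompact_Icc).exists_bound_of_continuousOn
      ((h.continuousOn_mixed t ht).mono hsubset)
    intro s' hs'
    refine intervalIntegral.continuousWithinAt_of_dominated_interval (bound := fun _ => C)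
      (Filter.eventually_of_mem self_mem_nhdsWithin fun w hw => ?_)
      (Filter.eventually_of_mem self_mem_nhdsWithin fun w hw =>
        Filter.Eventually.of_forall fun τ' hτ' => ?_) (by simp)
      (Filter.Eventually.of_forall fun τ' hτ' => ?_)
    · rw [uIoc_of_le (by linarith)]
      refine ContinuousOn.aestronglyMeasurable ?_ measurableSet_Ioc
      exact (h.continuousOn_mixed t ht).comp (by fun_prop) fun τ' hτ' =>
        hsubset ⟨hw, Ioc_subset_Icc_self hτ'⟩
    · rw [uIoc_of_le (by linarith)] at hτ'
      exact hC _ ⟨hw, Ioc_subset_Icc_self hτ'⟩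
    · rw [uIoc_of_le (by linarith)] at hτ'
      exact (h.continuousOn_mixed t ht).comp (f := fun w => (w, τ')) (by fun_prop)
        (fun w hw => hsubset ⟨hw, Ioc_subset_Icc_self hτ'⟩) s' hs'
  rw [intervalIntegral.integral_congr hinner, intervalIntegral.integral_sub hout (by simp)] at hdiff
  simp only [intervalIntegral.integral_const, add_sub_cancel_left] at hdiff hbd
  have h3 : ‖d • (d * H t (s, τ))‖ ≤ (N + ε) * (d * d) := by
    have := norm_sub_norm_le (d • (d * H t (s, τ)))
      (∫ s' in s..(s + d), ∫ τ' in τ..(τ + d), H t (s', τ'))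
    rw [norm_sub_rev] at this
    linarith
  rw [norm_smul, norm_mul, Complex.norm_real, Real.norm_of_nonneg hd0.le] at h3
  have : 0 < d * d := by positivity
  nlinarith

theorem eq_zero (h : IsCharWave Q H lam p I) (hlam : IsDiscCoefficient lam) (hp : p ≠ 0)
    (hIo : IsOpen I) (hI : I ⊆ Ioo 0 1) {t : ℝ} (ht : t ∈ I) {z : ℝ × ℝ} (hz : z ∈ charTriangle) :
    Q t z = 0 := by
  set Z : Set ℝ := {t | ∀ z ∈ charTriangle, Q t z = 0} with hZ
  by_contra hne
  set F : Set ℝ := I ∩ (interior Z)ᶜ with hF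
  have htF : t ∈ F := ⟨ht, fun h' => hne (interior_subset h' z hz)⟩
  have : Nonempty F := ⟨⟨t, htF⟩⟩
  have : LocallyCompactSpace F :=
    (hIo.isLocallyClosed.inter isOpen_interior.isClosed_compl.isLocallyClosed).locallyCompactSpace
  have hcont : ∀ z ∈ charTriangle, Continuous fun t : F => Q t z := fun z hz =>
    continuousOn_iff_continuous_domRestrict.1 fun t ht =>
      (h.differentiableAt z hz t ht.1).continuousAt.continuousWithinAt
  obtain ⟨n, x, hx⟩ := nonempty_interior_of_iUnion_of_closed
    (f := fun n : ℕ => {t : F | RectBounded (Q t) n})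
    (fun n => by
      refine IsClosed.inter
        (s₁ := {t : F | ∀ z ∈ charTriangle, ‖Q t z‖ ≤ n})
        (s₂ := {t : F | ∀ s₀ s₁ τ₀ τ₁ : ℝ, s₀ ≤ s₁ → τ₀ ≤ τ₁ → 0 < τ₀ → τ₁ < s₀ → s₁ + τ₁ < 2 →
          ‖rectDiff (Q t) s₀ s₁ τ₀ τ₁‖ ≤ n * ((s₁ - s₀) * (τ₁ - τ₀))}) ?_ ?_
      · simp only [ofPred_forall]
        exact isClosed_iInter fun z => isClosed_iInter fun hz =>
          isClosed_le (hcont z hz).norm continuous_const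
      · simp only [ofPred_forall]
        refine isClosed_iInter fun s₀ => isClosed_iInter fun s₁ => isClosed_iInter fun τ₀ =>
          isClosed_iInter fun τ₁ => isClosed_iInter fun hs => isClosed_iInter fun hτ =>
          isClosed_iInter fun h₀ => isClosed_iInter fun h₁ => isClosed_iInter fun h₂ =>
          isClosed_le (Continuous.norm ?_) continuous_const
        have hR : ∀ s ∈ Icc s₀ s₁, ∀ τ ∈ Icc τ₀ τ₁, Continuous fun t : F => Q t (s, τ) :=
          fun s hs τ hτ => hcont _ (openCharTriangle_subset
            (Icc_prod_Icc_subset_openCharTriangle h₀ h₁ h₂ ⟨hs, hτ⟩))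
        exact (((hR _ ⟨hs, le_rfl⟩ _ ⟨hτ, le_rfl⟩).sub (hR _ ⟨le_rfl, hs⟩ _ ⟨hτ, le_rfl⟩)).sub
          (hR _ ⟨hs, le_rfl⟩ _ ⟨le_rfl, hτ⟩)).add (hR _ ⟨le_rfl, hs⟩ _ ⟨le_rfl, hτ⟩))
    (eq_univ_of_forall fun t => mem_iUnion.2 (h.exists_rectBounded t.2.1))
  rw [mem_interior] at hx
  obtain ⟨V, hV, hVo, hxV⟩ := hx
  obtain ⟨U, hUo, rfl⟩ := isOpen_induced_iff.1 hVo
  have hJ : ∀ t ∈ U ∩ I, RectBounded (Q t) n := by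
    rintro t ⟨htU, htI⟩
    by_cases htG : t ∈ interior Z
    · have hz0 := interior_subset htG
      refine ⟨fun z hz => by simp [hz0 z hz], fun s₀ s₁ τ₀ τ₁ hs hτ h₀ h₁ h₂ => ?_⟩
      have hR : ∀ s ∈ Icc s₀ s₁, ∀ τ ∈ Icc τ₀ τ₁, Q t (s, τ) = 0 :=
          fun s hs τ hτ => hz0 _ (openCharTriangle_subset
            (Icc_prod_Icc_subset_openCharTriangle h₀ h₁ h₂ ⟨hs, hτ⟩))
      rw [rectDiff, hR _ ⟨hs, le_rfl⟩ _ ⟨hτ, le_rfl⟩, hR _ ⟨le_rfl, hs⟩ _ ⟨hτ, le_rfl⟩,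
        hR _ ⟨hs, le_rfl⟩ _ ⟨le_rfl, hτ⟩, hR _ ⟨le_rfl, hs⟩ _ ⟨le_rfl, hτ⟩]
      simp only [sub_zero, add_zero, norm_zero]
      have := sub_nonneg.2 hs
      have := sub_nonneg.2 hτ
      positivity
    · exact hV (show (⟨t, htI, htG⟩ : F) ∈ Subtype.val ⁻¹' U from htU)
  have hJo : IsOpen (U ∩ I) := hUo.inter hIo
  have hJZ : U ∩ I ⊆ Z := by
    intro t ht z hz
    obtain ⟨ε, hε, hball⟩ := Metric.isOpen_iff.1 hJo t ht
    have hsub : Icc (t - ε / 2) (t + ε / 2) ⊆ U ∩ I := by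
      intro t' ht'
      refine hball ?_
      rw [Metric.mem_ball, Real.dist_eq, abs_lt]
      exact ⟨by linarith [ht'.1], by linarith [ht'.2]⟩
    have hsubI := hsub.trans inter_subset_right
    have key := h.eq_zero_midpoint hlam hp (a := t - ε / 2) (b := t + ε / 2) (N := n)
      (hI (hsubI ⟨le_rfl, by linarith⟩)).1.le (by linarith)
      (hI (hsubI ⟨by linarith, le_rfl⟩)).2 hsubI (fun t' ht' => (hJ t' (hsub ht')).1)
      (fun t' ht' z hz => h.norm_mixed_le (hsubI ht') (hJ t' (hsub ht')) hz) hz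
    rwa [show (t - ε / 2 + (t + ε / 2)) / 2 = t by ring] at key
  exact x.2.2 (mem_interior.2 ⟨U ∩ I, hJZ, hJo, hxV, x.2.1⟩)

end IsCharWave

theorem uniqueDiffOn_Omega : UniqueDiffOn ℝ Omega := by
  refine uniqueDiffOn_convex ?_ ⟨(1 / 2, 1 / 4), ?_⟩
  · intro q hq q' hq' a b ha hb hab
    obtain ⟨h1, h2, h3⟩ := hq
    obtain ⟨h1', h2', h3'⟩ := hq'
    refine ⟨?_, ?_, ?_⟩ <;>
      simp only [Prod.snd_add, Prod.fst_add, Prod.smul_fst, Prod.smul_snd, smul_eq_mul] <;>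
      nlinarith [mul_nonneg ha h1, mul_nonneg hb h1', mul_nonneg ha (sub_nonneg.2 h2),
        mul_nonneg hb (sub_nonneg.2 h2'), mul_nonneg ha (sub_nonneg.2 h3),
        mul_nonneg hb (sub_nonneg.2 h3')]
  · refine mem_interior.2 ⟨{q : ℝ × ℝ | 0 < q.2 ∧ q.2 < q.1 ∧ q.1 < 1},
      fun q hq => ⟨hq.1.le, hq.2.1.le, hq.2.2.le⟩, ?_, by norm_num⟩
    exact (isOpen_lt continuous_const continuous_snd).inter
      ((isOpen_lt continuous_snd continuous_fst).inter (isOpen_lt continuous_fst continuous_const))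

theorem isCompact_Omega : IsCompact Omega := by
  have hc : IsClosed Omega :=
    (isClosed_le continuous_const continuous_snd).inter
      ((isClosed_le continuous_snd continuous_fst).inter
        (isClosed_le continuous_fst continuous_const))
  refine (isCompact_Icc (a := ((0:ℝ), (0:ℝ))) (b := (1, 1))).of_isClosed_subset hc ?_
  rintro ⟨x, y⟩ ⟨h1, h2, h3⟩
  exact ⟨⟨h1.trans h2, h1⟩, ⟨h3, h2.trans h3⟩⟩

/-- The interior of the triangle `Omega`. -/
def openOmega : Set (ℝ × ℝ) := {q | 0 < q.2 ∧ q.2 < q.1 ∧ q.1 < 1}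

theorem isOpen_openOmega : IsOpen openOmega :=
  (isOpen_lt continuous_const continuous_snd).inter
    ((isOpen_lt continuous_snd continuous_fst).inter (isOpen_lt continuous_fst continuous_const))

theorem openOmega_subset : openOmega ⊆ Omega := fun _ hq => ⟨hq.1.le, hq.2.1.le, hq.2.2.le⟩

theorem Omega_mem_nhds {q : ℝ × ℝ} (hq : q ∈ openOmega) : Omega ∈ nhds q :=
  Filter.mem_of_superset (isOpen_openOmega.mem_nhds hq) openOmega_subset

/-- The point of the triangle with characteristic coordinates `(s, τ)`. -/
noncomputable def ofChar (z : ℝ × ℝ) : ℝ × ℝ := ((z.1 + z.2) / 2, (z.1 - z.2) / 2)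

theorem continuous_ofChar : Continuous ofChar := by
  unfold ofChar
  fun_prop

theorem ofChar_mem_Omega {z : ℝ × ℝ} (hz : z ∈ charTriangle) : ofChar z ∈ Omega := by
  obtain ⟨h1, h2, h3⟩ := hz
  refine ⟨?_, ?_, ?_⟩ <;> simp only [ofChar] <;> linarith

theorem ofChar_mem_openOmega {z : ℝ × ℝ} (hz : z ∈ openCharTriangle) :
    ofChar z ∈ openOmega := by
  obtain ⟨h1, h2, h3⟩ := hz
  refine ⟨?_, ?_, ?_⟩ <;> simp only [ofChar] <;> linarith

section SecondDerivative

variable {E : Type*} [NormedAddCommGroup E] [NormedSpace ℝ E] {w : ℝ × ℝ → E}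

theorem ContDiffOn.contDiffAt_openOmega (hw : ContDiffOn ℝ 2 w Omega) {q : ℝ × ℝ}
    (hq : q ∈ openOmega) : ContDiffAt ℝ 2 w q :=
  hw.contDiffAt (Omega_mem_nhds hq)

theorem ContDiffOn.hasDerivAt_line (hw : ContDiffOn ℝ 2 w Omega) {ℓ : ℝ → ℝ × ℝ} {v : ℝ × ℝ}
    {u : ℝ} (hℓ : HasDerivAt ℓ v u) (hu : ℓ u ∈ openOmega) :
    HasDerivAt (fun u' => w (ℓ u')) (fderiv ℝ w (ℓ u) v) u :=
  ((hw.contDiffAt_openOmega hu).differentiableAt (by norm_num)).hasFDerivAt.comp_hasDerivAt u hℓ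

theorem ContDiffOn.hasDerivAt_fderiv_line (hw : ContDiffOn ℝ 2 w Omega) {ℓ : ℝ → ℝ × ℝ}
    {v : ℝ × ℝ} {u : ℝ} (hℓ : HasDerivAt ℓ v u) (hu : ℓ u ∈ openOmega) (v' : ℝ × ℝ) :
    HasDerivAt (fun u' => fderiv ℝ w (ℓ u') v') (fderiv ℝ (fderiv ℝ w) (ℓ u) v v') u := by
  have h1 : DifferentiableAt ℝ (fderiv ℝ w) (ℓ u) :=
    ((hw.contDiffAt_openOmega hu).fderiv_right (m := 1) (by norm_num)).differentiableAt
      (by norm_num)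
  have h2 := h1.hasFDerivAt.comp_hasDerivAt u hℓ
  exact (h2.clm_apply (hasDerivAt_const u v')).congr_deriv (by simp)

theorem ContDiffOn.continuousOn_fderiv_fderiv (hw : ContDiffOn ℝ 2 w Omega) :
    ContinuousOn (fderiv ℝ (fderiv ℝ w)) openOmega := by
  intro q hq
  have h1 := (hw.contDiffAt_openOmega hq).fderiv_right (m := 1) (by norm_num)
  exact (h1.fderiv_right (m := 0) (by norm_num)).continuousAt.continuousWithinAt

theorem ContDiffOn.exists_bound_fderiv_fderiv (hw : ContDiffOn ℝ 2 w Omega) :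
    ∃ C, ∀ q ∈ openOmega, ‖fderiv ℝ (fderiv ℝ w) q‖ ≤ C := by
  have h1 : ContDiffOn ℝ 1 (fderivWithin ℝ w Omega) Omega :=
    hw.fderivWithin uniqueDiffOn_Omega (by norm_num)
  have h2 := h1.continuousOn_fderivWithin uniqueDiffOn_Omega (by norm_num)
  obtain ⟨C, hC⟩ := isCompact_Omega.exists_bound_of_continuousOn h2
  refine ⟨C, fun q hq => ?_⟩
  have h3 := hC q (openOmega_subset hq)
  rw [fderivWithin_of_mem_nhds (Omega_mem_nhds hq)] at h3
  have h4 : fderivWithin ℝ w Omega =ᶠ[nhds q] fderiv ℝ w :=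
    Filter.eventually_of_mem (isOpen_openOmega.mem_nhds hq) fun q' hq' =>
      fderivWithin_of_mem_nhds (Omega_mem_nhds hq')
  rwa [h4.fderiv_eq] at h3

/-- `f` is differentiable near `x` and its derivative has derivative `A` at `x`. -/
def HasSecondDerivAt (f : ℝ → E) (A : E) (x : ℝ) : Prop :=
  (∀ᶠ x' in nhds x, DifferentiableAt ℝ f x') ∧ HasDerivAt (deriv f) A x

theorem ContDiffOn.hasSecondDerivAt_line (hw : ContDiffOn ℝ 2 w Omega) {ℓ : ℝ → ℝ × ℝ}
    {v : ℝ × ℝ} (hℓ : ∀ u, HasDerivAt ℓ v u) {u : ℝ} (hu : ℓ u ∈ openOmega) :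
    HasSecondDerivAt (fun u' => w (ℓ u')) (fderiv ℝ (fderiv ℝ w) (ℓ u) v v) u := by
  have hev : ∀ᶠ u' in nhds u, ℓ u' ∈ openOmega :=
    (hℓ u).continuousAt (isOpen_openOmega.mem_nhds hu)
  refine ⟨hev.mono fun u' h => (hw.hasDerivAt_line (hℓ u') h).differentiableAt, ?_⟩
  exact (hw.hasDerivAt_fderiv_line (hℓ u) hu v).congr_of_eventuallyEq
    (hev.mono fun u' h => (hw.hasDerivAt_line (hℓ u') h).deriv)

/-- Mixed characteristic derivative of `w`, as a function of the characteristic coordinates. -/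
noncomputable def charMixed (w : ℝ × ℝ → E) (z : ℝ × ℝ) : E :=
  fderiv ℝ (fderiv ℝ w) (ofChar z) (1 / 2, -(1 / 2)) (1 / 2, 1 / 2)

theorem ContDiffOn.four_smul_charMixed (hw : ContDiffOn ℝ 2 w Omega) {z : ℝ × ℝ}
    (hz : z ∈ openCharTriangle) :
    (4:ℝ) • charMixed w z = fderiv ℝ (fderiv ℝ w) (ofChar z) (1, 0) (1, 0)
      - fderiv ℝ (fderiv ℝ w) (ofChar z) (0, 1) (0, 1) := by
  have hs := (hw.contDiffAt_openOmega (ofChar_mem_openOmega hz)).isSymmSndFDerivAt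
    (by simp [minSmoothness_of_isRCLikeNormedField])
  have e1 : ((1 / 2, -(1 / 2)) : ℝ × ℝ) = (1 / 2 : ℝ) • (((1, 0) : ℝ × ℝ) - (0, 1)) := by
    ext <;> simp
  have e2 : ((1 / 2, 1 / 2) : ℝ × ℝ) = (1 / 2 : ℝ) • (((1, 0) : ℝ × ℝ) + (0, 1)) := by
    ext <;> simp
  have h3 := hs (1, 0) (0, 1)
  rw [charMixed, e1, e2]
  simp only [map_smul, map_sub, map_add, smul_apply,
    sub_apply, h3]
  module

theorem ContDiffOn.continuousOn_charMixed (hw : ContDiffOn ℝ 2 w Omega) :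
    ContinuousOn (charMixed w) openCharTriangle :=
  ((hw.continuousOn_fderiv_fderiv.comp continuous_ofChar.continuousOn
    fun _ hz => ofChar_mem_openOmega hz).clm_apply continuousOn_const).clm_apply continuousOn_const

theorem ContDiffOn.exists_bound_charMixed (hw : ContDiffOn ℝ 2 w Omega) :
    ∃ C, ∀ z ∈ openCharTriangle, ‖charMixed w z‖ ≤ C := by
  obtain ⟨C, hC⟩ := hw.exists_bound_fderiv_fderiv
  refine ⟨C * ‖((1 / 2, -(1 / 2)) : ℝ × ℝ)‖ * ‖((1 / 2, 1 / 2) : ℝ × ℝ)‖, fun z hz => ?_⟩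
  refine (ContinuousLinearMap.le_opNorm₂ _ _ _).trans ?_
  gcongr
  exact hC _ (ofChar_mem_openOmega hz)

end SecondDerivative

theorem ContDiffOn.rectDiff_eq_integral_charMixed {w : ℝ × ℝ → ℂ} (hw : ContDiffOn ℝ 2 w Omega)
    {s₀ s₁ τ₀ τ₁ : ℝ} (hs : s₀ ≤ s₁) (hτ : τ₀ ≤ τ₁) (h₀ : 0 < τ₀) (h₁ : τ₁ < s₀)
    (h₂ : s₁ + τ₁ < 2) :
    rectDiff (fun z => w (ofChar z)) s₀ s₁ τ₀ τ₁
      = ∫ s in s₀..s₁, ∫ τ in τ₀..τ₁, charMixed w (s, τ) := by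
  have hR := Icc_prod_Icc_subset_openCharTriangle (s₁ := s₁) h₀ h₁ h₂
  have hls : ∀ τ s : ℝ, HasDerivAt (fun s => ofChar (s, τ)) (1 / 2, 1 / 2) s := fun τ s =>
    (((hasDerivAt_id s).add_const τ).div_const 2).prodMk
      (((hasDerivAt_id s).sub_const τ).div_const 2)
  have hlτ : ∀ s τ : ℝ, HasDerivAt (fun τ => ofChar (s, τ)) (1 / 2, -(1 / 2)) τ := fun s τ => by
    refine ((((hasDerivAt_id τ).const_add s).div_const 2).prodMk
      (((hasDerivAt_id τ).const_sub s).div_const 2)).congr_deriv ?_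
    norm_num
  have hinner : ∀ s ∈ uIcc s₀ s₁, ∫ τ in τ₀..τ₁, charMixed w (s, τ)
      = fderiv ℝ w (ofChar (s, τ₁)) (1 / 2, 1 / 2) - fderiv ℝ w (ofChar (s, τ₀)) (1 / 2, 1 / 2) := by
    intro s hs'
    rw [uIcc_of_le hs] at hs'
    refine intervalIntegral.integral_eq_sub_of_hasDerivAt
      (f := fun τ => fderiv ℝ w (ofChar (s, τ)) (1 / 2, 1 / 2)) (fun τ hτ' => ?_) ?_
    · rw [uIcc_of_le hτ] at hτ'
      exact hw.hasDerivAt_fderiv_line (hlτ s τ) (ofChar_mem_openOmega (hR ⟨hs', hτ'⟩)) _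
    · refine ContinuousOn.intervalIntegrable ?_
      rw [uIcc_of_le hτ]
      exact hw.continuousOn_charMixed.comp (by fun_prop) fun τ hτ' => hR ⟨hs', hτ'⟩
  have hcont : ∀ τ ∈ Icc τ₀ τ₁, ContinuousOn
      (fun s => fderiv ℝ w (ofChar (s, τ)) (1 / 2, 1 / 2)) (Icc s₀ s₁) := fun τ hτ' s hs' =>
    (hw.hasDerivAt_fderiv_line (hls τ s) (ofChar_mem_openOmega (hR ⟨hs', hτ'⟩))
      _).continuousAt.continuousWithinAt
  have hτ₀ : τ₀ ∈ Icc τ₀ τ₁ := ⟨le_rfl, hτ⟩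
  have hτ₁ : τ₁ ∈ Icc τ₀ τ₁ := ⟨hτ, le_rfl⟩
  rw [intervalIntegral.integral_congr hinner,
    intervalIntegral.integral_eq_sub_of_hasDerivAt
      (f := fun s => w (ofChar (s, τ₁)) - w (ofChar (s, τ₀)))]
  · simp only [rectDiff]
    ring
  · intro s hs'
    rw [uIcc_of_le hs] at hs'
    exact (hw.hasDerivAt_line (hls τ₁ s) (ofChar_mem_openOmega (hR ⟨hs', hτ₁⟩))).sub
      (hw.hasDerivAt_line (hls τ₀ s) (ofChar_mem_openOmega (hR ⟨hs', hτ₀⟩)))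
  · refine ContinuousOn.intervalIntegrable ?_
    rw [uIcc_of_le hs]
    exact (hcont τ₁ hτ₁).sub (hcont τ₀ hτ₀)

theorem norm_tsum_mul_pow_le {c : ℕ → ℝ → ℂ} {C : ℝ} (hc : ∀ n x, ‖c n x‖ ≤ C) {ρ : ℝ}
    (hρ₀ : 0 ≤ ρ) (hρ : ρ < 1) (x : ℝ) {ζ : ℂ} (hζ : ζ ∈ Metric.ball (0:ℂ) ρ) :
    ‖∑' n, c n x * ζ ^ n‖ ≤ C * (1 - ρ)⁻¹ := by
  have hC : 0 ≤ C := (norm_nonneg _).trans (hc 0 0)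
  refine tsum_of_norm_bounded ((hasSum_geometric_of_lt_one hρ₀ hρ).mul_left C) fun n => ?_
  rw [norm_mul, norm_pow]
  gcongr
  · exact hc n x
  · exact (mem_ball_zero_iff.1 hζ).le

theorem differentiableOn_tsum_mul_pow {c : ℕ → ℝ → ℂ} {C : ℝ} (hc : ∀ n x, ‖c n x‖ ≤ C)
    (x : ℝ) : DifferentiableOn ℂ (fun ζ : ℂ => ∑' n, c n x * ζ ^ n) (Metric.ball 0 1) := by
  intro ζ hζ
  obtain ⟨ρ, hζρ, hρ⟩ := exists_between (mem_ball_zero_iff.1 hζ)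
  have hC : 0 ≤ C := (norm_nonneg _).trans (hc 0 0)
  have hρ₀ : 0 ≤ ρ := (norm_nonneg ζ).trans hζρ.le
  have h := Complex.differentiableOn_tsum_of_summable_norm
    (F := fun n ζ => c n x * ζ ^ n) (U := Metric.ball 0 ρ)
    ((summable_geometric_of_lt_one hρ₀ hρ).mul_left C) (fun n => by fun_prop)
    Metric.isOpen_ball fun n ζ' hζ' => by
      rw [norm_mul, norm_pow]
      gcongr
      · exact hc n x
      · exact (mem_ball_zero_iff.1 hζ').le
  exact (h.differentiableAt
    (Metric.isOpen_ball.mem_nhds (mem_ball_zero_iff.2 hζρ))).differentiableWithinAt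

theorem RegularData.exists_discCoefficient {b f : ℝ → ℝ → ℂ} (hb : RegularData b)
    (hf : RegularData f) (p : ℂ) :
    ∃ lam, IsDiscCoefficient lam ∧ ∀ z ∈ charTriangle, ∀ t ∈ Ico (0:ℝ) 1,
      lam z t = p * (b (ofChar z).2 t - f (ofChar z).1 t) := by
  obtain ⟨⟨c, C, -, hc, hbc⟩, -⟩ := hb
  obtain ⟨⟨d, D, -, hd, hfd⟩, -⟩ := hf
  have hC : 0 ≤ C := (norm_nonneg _).trans (hc 0 0)
  have hD : 0 ≤ D := (norm_nonneg _).trans (hd 0 0)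
  refine ⟨fun z ζ => p * (∑' n, c n (ofChar z).2 * ζ ^ n - ∑' n, d n (ofChar z).1 * ζ ^ n),
    ⟨fun z _ => ((differentiableOn_tsum_mul_pow hc _).sub
      (differentiableOn_tsum_mul_pow hd _)).const_mul p, fun ρ hρ => ?_⟩, fun z hz t ht => ?_⟩
  · have h0 : 0 ≤ (1 - max ρ 0)⁻¹ := inv_nonneg.2 (by
      rw [sub_nonneg]
      exact max_le hρ.le zero_le_one)
    refine ⟨‖p‖ * (C * (1 - max ρ 0)⁻¹ + D * (1 - max ρ 0)⁻¹), by positivity,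
      fun z _ ζ hζ => ?_⟩
    have hζ' := Metric.ball_subset_ball (le_max_left ρ 0) hζ
    have hρ' : max ρ 0 < 1 := max_lt hρ one_pos
    rw [norm_mul]
    gcongr
    exact (norm_sub_le _ _).trans (add_le_add
      (norm_tsum_mul_pow_le hc (le_max_right _ _) hρ' _ hζ')
      (norm_tsum_mul_pow_le hd (le_max_right _ _) hρ' _ hζ'))
  · obtain ⟨h1, h2, h3⟩ := ofChar_mem_Omega hz
    simp only [hbc _ ⟨h1, h2.trans h3⟩ t ht, hfd _ ⟨h1.trans h2, h3⟩ t ht]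

theorem HasSecondDerivAt.ofReal_add_I_mul {f g : ℝ → ℝ} {A B x : ℝ}
    (hf : HasSecondDerivAt f A x) (hg : HasSecondDerivAt g B x) :
    HasSecondDerivAt (fun x => (f x : ℂ) + Complex.I * (g x : ℂ)) (A + Complex.I * B) x := by
  have hd : ∀ {x'}, DifferentiableAt ℝ f x' → DifferentiableAt ℝ g x' →
      HasDerivAt (fun x => (f x : ℂ) + Complex.I * (g x : ℂ))
        (deriv f x' + Complex.I * deriv g x') x' := fun h1 h2 =>
    h1.hasDerivAt.ofReal_comp.add (h2.hasDerivAt.ofReal_comp.const_mul Complex.I)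
  have hev := hf.1.and hg.1
  refine ⟨hev.mono fun x' h => (hd h.1 h.2).differentiableAt, ?_⟩
  exact (hf.2.ofReal_comp.add (hg.2.ofReal_comp.const_mul Complex.I)).congr_of_eventuallyEq
    (hev.mono fun x' h => (hd h.1 h.2).deriv)

theorem charMixed_sub {w w' : ℝ × ℝ → ℂ} (hw : ContDiffOn ℝ 2 w Omega)
    (hw' : ContDiffOn ℝ 2 w' Omega) {z : ℝ × ℝ} (hz : z ∈ openCharTriangle) :
    charMixed (fun q => w' q - w q) z = charMixed w' z - charMixed w z := by
  have hq := ofChar_mem_openOmega hz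
  have hd : ∀ {u : ℝ × ℝ → ℂ}, ContDiffOn ℝ 2 u Omega → ∀ {q}, q ∈ openOmega →
      DifferentiableAt ℝ u q := fun hu _ hq =>
    (hu.contDiffAt_openOmega hq).differentiableAt (by norm_num)
  have hd' : ∀ {u : ℝ × ℝ → ℂ}, ContDiffOn ℝ 2 u Omega →
      DifferentiableAt ℝ (fderiv ℝ u) (ofChar z) := fun hu =>
    ((hu.contDiffAt_openOmega hq).fderiv_right (m := 1) (by norm_num)).differentiableAt
      (by norm_num)
  have h1 : fderiv ℝ (fun q => w' q - w q) =ᶠ[nhds (ofChar z)]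
      fun q => fderiv ℝ w' q - fderiv ℝ w q :=
    Filter.eventually_of_mem (isOpen_openOmega.mem_nhds hq) fun q hq' =>
      fderiv_fun_sub (hd hw' hq') (hd hw hq')
  rw [charMixed, h1.fderiv_eq, fderiv_fun_sub (hd' hw') (hd' hw)]
  rfl

/-- The complex kernel `k + i k_c` at time `t`. -/
noncomputable def complexKernel (k kc : ℝ → ℝ → ℝ → ℝ) (t : ℝ) (q : ℝ × ℝ) : ℂ :=
  (k q.1 q.2 t : ℂ) + Complex.I * (kc q.1 q.2 t : ℂ)

namespace IsNeumannKernelSol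

variable {β βc : ℝ → ℝ → ℝ → ℝ} {p₁ p₂ q₁ q₂ t₀ t : ℝ} {k kc : ℝ → ℝ → ℝ → ℝ}

theorem contDiffOn_complexKernel (h : IsNeumannKernelSol β βc p₁ p₂ q₁ q₂ t₀ k kc)
    (ht : t ∈ Ioo 0 t₀) : ContDiffOn ℝ 2 (complexKernel k kc t) Omega :=
  (Complex.ofRealCLM.contDiff.comp_contDiffOn (h.1 t ht)).add
    (contDiffOn_const.mul (Complex.ofRealCLM.contDiff.comp_contDiffOn (h.2.1 t ht)))

theorem hasDerivAt_complexKernel (h : IsNeumannKernelSol β βc p₁ p₂ q₁ q₂ t₀ k kc)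
    (ht : t ∈ Ioo 0 t₀) {q : ℝ × ℝ} (hq : q ∈ Omega) :
    HasDerivAt (fun t' => complexKernel k kc t' q)
      (pT k q.1 q.2 t + Complex.I * pT kc q.1 q.2 t) t :=
  have h' := h.2.2.1 q.1 q.2 hq t ht
  h'.1.hasDerivAt.ofReal_comp.add (h'.2.hasDerivAt.ofReal_comp.const_mul Complex.I)

theorem fderiv_fderiv_complexKernel_fst (h : IsNeumannKernelSol β βc p₁ p₂ q₁ q₂ t₀ k kc)
    (ht : t ∈ Ioo 0 t₀) {q : ℝ × ℝ} (hq : q ∈ openOmega) :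
    fderiv ℝ (fderiv ℝ (complexKernel k kc t)) q (1, 0) (1, 0)
      = pXX k q.1 q.2 t + Complex.I * pXX kc q.1 q.2 t := by
  have hl : ∀ x, HasDerivAt (fun x : ℝ => (x, q.2)) ((1:ℝ), (0:ℝ)) x := fun x =>
    (hasDerivAt_id x).prodMk (hasDerivAt_const x q.2)
  have h1 := (h.1 t ht).hasSecondDerivAt_line hl (u := q.1) hq
  have h2 := (h.2.1 t ht).hasSecondDerivAt_line hl (u := q.1) hq
  have h3 := (h.contDiffOn_complexKernel ht).hasSecondDerivAt_line hl (u := q.1) hq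
  refine (h3.2.unique (h1.ofReal_add_I_mul h2).2).trans ?_
  rw [← h1.2.deriv, ← h2.2.deriv]
  rfl

theorem fderiv_fderiv_complexKernel_snd (h : IsNeumannKernelSol β βc p₁ p₂ q₁ q₂ t₀ k kc)
    (ht : t ∈ Ioo 0 t₀) {q : ℝ × ℝ} (hq : q ∈ openOmega) :
    fderiv ℝ (fderiv ℝ (complexKernel k kc t)) q (0, 1) (0, 1)
      = pYY k q.1 q.2 t + Complex.I * pYY kc q.1 q.2 t := by
  have hl : ∀ y, HasDerivAt (fun y : ℝ => (q.1, y)) ((0:ℝ), (1:ℝ)) y := fun y =>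
    (hasDerivAt_const y q.1).prodMk (hasDerivAt_id y)
  have h1 := (h.1 t ht).hasSecondDerivAt_line hl (u := q.2) hq
  have h2 := (h.2.1 t ht).hasSecondDerivAt_line hl (u := q.2) hq
  have h3 := (h.contDiffOn_complexKernel ht).hasSecondDerivAt_line hl (u := q.2) hq
  refine (h3.2.unique (h1.ofReal_add_I_mul h2).2).trans ?_
  rw [← h1.2.deriv, ← h2.2.deriv]
  rfl

theorem four_mul_charMixed (h : IsNeumannKernelSol β βc p₁ p₂ p₁ (-p₂) t₀ k kc)
    (ht : t ∈ Ioo 0 t₀) {z : ℝ × ℝ} (hz : z ∈ openCharTriangle) :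
    4 * charMixed (complexKernel k kc t) z
      = ((β (ofChar z).1 (ofChar z).2 t : ℂ) - Complex.I * βc (ofChar z).1 (ofChar z).2 t)
          * complexKernel k kc t (ofChar z)
        + ((p₁:ℂ) - Complex.I * p₂) * deriv (fun t' => complexKernel k kc t' (ofChar z)) t := by
  have hq := ofChar_mem_openOmega hz
  have h4 := (h.contDiffOn_complexKernel ht).four_smul_charMixed hz
  have h4' : 4 * charMixed (complexKernel k kc t) z
      = (4:ℝ) • charMixed (complexKernel k kc t) z := by
    rw [Complex.real_smul]
    norm_num
  rw [h4', h4, h.fderiv_fderiv_complexKernel_fst ht hq, h.fderiv_fderiv_complexKernel_snd ht hq,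
    (h.hasDerivAt_complexKernel ht (openOmega_subset hq)).deriv]
  obtain ⟨e1, e2⟩ := h.2.2.2.1 (ofChar z).1 (ofChar z).2 (openOmega_subset hq) t ht
  rw [e1, e2, complexKernel]
  push_cast
  linear_combination ((βc (ofChar z).1 (ofChar z).2 t : ℂ) * kc (ofChar z).1 (ofChar z).2 t
    + p₂ * pT kc (ofChar z).1 (ofChar z).2 t) * Complex.I_sq

theorem apply_zero_right (h : IsNeumannKernelSol β βc p₁ p₂ q₁ q₂ t₀ k kc)
    (ht : t ∈ Ioo 0 t₀) {x : ℝ} (hx : x ∈ Icc (0:ℝ) 1) : k x 0 t = 0 ∧ kc x 0 t = 0 := by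
  have key : ∀ g : ℝ → ℝ → ℝ → ℝ, ContDiffOn ℝ 2 (fun p : ℝ × ℝ => g p.1 p.2 t) Omega →
      (∀ x ∈ Icc (0:ℝ) 1, pX g x 0 t = 0) → g 0 0 t = 0 → g x 0 t = 0 := by
    intro g hg hgx hg0
    rcases hx.1.eq_or_lt with rfl | hx0
    · exact hg0
    have hd : DifferentiableOn ℝ (fun x' => g x' 0 t) (Icc 0 1) :=
      (hg.differentiableOn (by norm_num)).comp (f := fun x' : ℝ => (x', (0:ℝ)))
        (by fun_prop) fun x' hx' => ⟨le_rfl, hx'.1, hx'.2⟩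
    obtain ⟨c, hc, hc'⟩ := exists_deriv_eq_slope (fun x' => g x' 0 t) hx0
      (hd.continuousOn.mono (Icc_subset_Icc_right hx.2))
      (hd.mono (Ioo_subset_Icc_self.trans (Icc_subset_Icc_right hx.2)))
    rw [show deriv (fun x' => g x' 0 t) c = 0 from hgx c ⟨hc.1.le, hc.2.le.trans hx.2⟩, hg0,
      eq_comm, div_eq_zero_iff] at hc'
    rcases hc' with h | h <;> linarith
  exact ⟨key k (h.1 t ht) (fun x hx => (h.2.2.2.2.1 x hx t ht).2.2.1) (h.2.2.2.2.2 t ht).1,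
    key kc (h.2.1 t ht) (fun x hx => (h.2.2.2.2.1 x hx t ht).2.2.2) (h.2.2.2.2.2 t ht).2⟩

theorem isCharWave_sub {k' kc' : ℝ → ℝ → ℝ → ℝ} {lam : ℝ × ℝ → ℂ → ℂ}
    (h : IsNeumannKernelSol β βc p₁ p₂ p₁ (-p₂) t₀ k kc)
    (h' : IsNeumannKernelSol β βc p₁ p₂ p₁ (-p₂) t₀ k' kc')
    (hlam : ∀ z ∈ charTriangle, ∀ t ∈ Ioo 0 t₀, lam z t
      = (β (ofChar z).1 (ofChar z).2 t : ℂ) - Complex.I * βc (ofChar z).1 (ofChar z).2 t) :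
    IsCharWave (fun t z => complexKernel k' kc' t (ofChar z) - complexKernel k kc t (ofChar z))
      (fun t => charMixed fun q => complexKernel k' kc' t q - complexKernel k kc t q)
      lam (p₁ - Complex.I * p₂) (Ioo 0 t₀) := by
  have hw : ∀ {t}, t ∈ Ioo 0 t₀ →
      ContDiffOn ℝ 2 (fun q => complexKernel k' kc' t q - complexKernel k kc t q) Omega :=
    fun ht => (h'.contDiffOn_complexKernel ht).sub (h.contDiffOn_complexKernel ht)
  constructor
  · exact fun t ht => (hw ht).continuousOn.comp continuous_ofChar.continuousOn
      fun z hz => ofChar_mem_Omega hz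
  · exact fun z hz t ht =>
      (h'.hasDerivAt_complexKernel ht (ofChar_mem_Omega hz)).differentiableAt.sub
        (h.hasDerivAt_complexKernel ht (ofChar_mem_Omega hz)).differentiableAt
  · exact fun t ht => (hw ht).continuousOn_charMixed
  · exact fun t ht => (hw ht).exists_bound_charMixed
  · intro t ht z hz
    have hq := ofChar_mem_Omega (openCharTriangle_subset hz)
    have hD := (h'.hasDerivAt_complexKernel ht hq).differentiableAt
    have hD' := (h.hasDerivAt_complexKernel ht hq).differentiableAt
    rw [charMixed_sub (h.contDiffOn_complexKernel ht) (h'.contDiffOn_complexKernel ht) hz,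
      mul_sub, h'.four_mul_charMixed ht hz, h.four_mul_charMixed ht hz,
      hlam z (openCharTriangle_subset hz) t ht, deriv_fun_sub hD hD']
    ring
  · exact fun t ht s₀ s₁ τ₀ τ₁ => (hw ht).rectDiff_eq_integral_charMixed
  · intro t ht s hs
    have hc : ofChar (s, s) = (s, 0) := by simp [ofChar]
    simp only [hc, complexKernel, (h.apply_zero_right ht hs).1, (h.apply_zero_right ht hs).2,
      (h'.apply_zero_right ht hs).1, (h'.apply_zero_right ht hs).2, sub_self]
  · intro t ht s hs
    have hs' : s / 2 ∈ Icc (0:ℝ) 1 := ⟨by linarith [hs.1], by linarith [hs.2]⟩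
    have hc : ofChar (s, 0) = (s / 2, s / 2) := by simp [ofChar]
    have e := h.2.2.2.2.1 _ hs' t ht
    have e' := h'.2.2.2.2.1 _ hs' t ht
    simp only [hc, complexKernel, e.1, e.2.1, e'.1, e'.2.1, sub_self]

theorem unique {b f : ℝ → ℝ → ℂ} (hb : RegularData b) (hf : RegularData f)
    (hβ : ∀ x y t, (β x y t : ℂ) - Complex.I * βc x y t
      = ((p₁:ℂ) - Complex.I * p₂) * (b y t - f x t))
    (hp : (p₁:ℂ) - Complex.I * p₂ ≠ 0) (ht₀ : t₀ < 1) {k' kc' : ℝ → ℝ → ℝ → ℝ}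
    (h : IsNeumannKernelSol β βc p₁ p₂ p₁ (-p₂) t₀ k kc)
    (h' : IsNeumannKernelSol β βc p₁ p₂ p₁ (-p₂) t₀ k' kc') {x y : ℝ} (hxy : (x, y) ∈ Omega)
    (ht : t ∈ Ioo 0 t₀) : k' x y t = k x y t ∧ kc' x y t = kc x y t := by
  obtain ⟨lam, hlam, hlam'⟩ := hb.exists_discCoefficient hf (p₁ - Complex.I * p₂)
  have hw := h.isCharWave_sub h' (lam := lam) fun z hz t ht => by
    rw [hlam' z hz t ⟨ht.1.le, ht.2.trans ht₀⟩, hβ]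
  obtain ⟨h1, h2, h3⟩ := hxy
  simp only at h1 h2 h3
  have hz : (x + y, x - y) ∈ charTriangle :=
    ⟨by simp only; linarith, by simp only; linarith, by simp only; linarith⟩
  have h0 := hw.eq_zero hlam hp isOpen_Ioo (Ioo_subset_Ioo_right ht₀.le) ht hz
  have hc : ofChar (x + y, x - y) = (x, y) := by
    ext <;> simp only [ofChar] <;> ring
  simp only [hc, complexKernel] at h0
  have hre := congrArg Complex.re h0
  have him := congrArg Complex.im h0
  simp at hre him
  exact ⟨by linarith, by linarith⟩

end IsNeumannKernelSol

/-- existence, uniqueness and exponential bound for the backstepping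
kernel pair `(k, k_c)` of the Neumann boundary-control problem. -/
theorem neumann_kernel_existence_uniqueness_bound
    (aR aI : ℝ) (haR : 0 < aR)
    (p₁ p₂ q₁ q₂ : ℝ)
    (hp₁ : p₁ = aR / (aR ^ 2 + aI ^ 2)) (hq₁ : q₁ = aR / (aR ^ 2 + aI ^ 2))
    (hp₂ : p₂ = -aI / (aR ^ 2 + aI ^ 2)) (hq₂ : q₂ = aI / (aR ^ 2 + aI ^ 2))
    (bR bI fR fI : ℝ → ℝ → ℝ)
    (hbR : SpaceC1TimeAnalytic bR) (hbI : SpaceC1TimeAnalytic bI)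
    (hfR : SpaceC1TimeAnalytic fR) (hfI : SpaceC1TimeAnalytic fI)
    (β βc : ℝ → ℝ → ℝ → ℝ)
    (hβ : ∀ x y t : ℝ, β x y t
      = (aR * (bR y t - fR x t) + aI * (bI y t - fI x t)) / (aR ^ 2 + aI ^ 2))
    (hβc : ∀ x y t : ℝ, βc x y t
      = (aR * (bI y t - fI x t) - aI * (bR y t - fR x t)) / (aR ^ 2 + aI ^ 2))
    (t₀ : ℝ) (ht₀ : t₀ ∈ Ioo (0:ℝ) 1) :
    ∃ k kc : ℝ → ℝ → ℝ → ℝ,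
      IsNeumannKernelSol β βc p₁ p₂ q₁ q₂ t₀ k kc
      ∧ (∀ k' kc' : ℝ → ℝ → ℝ → ℝ,
          IsNeumannKernelSol β βc p₁ p₂ q₁ q₂ t₀ k' kc' →
          ∀ x y : ℝ, (x, y) ∈ Omega → ∀ t ∈ Ioo (0:ℝ) t₀,
            k' x y t = k x y t ∧ kc' x y t = kc x y t)
      ∧ ∃ M : ℝ, 0 < M ∧ ∀ x y : ℝ, (x, y) ∈ Omega → ∀ t ∈ Ioo (0:ℝ) t₀,
          |k x y t| ≤ M * Real.exp (M * (x ^ 2 - y ^ 2))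
          ∧ |kc x y t| ≤ M * Real.exp (M * (x ^ 2 - y ^ 2)) := by
  have hN : 0 < aR ^ 2 + aI ^ 2 := by positivity
  have hN' : (aR:ℂ) ^ 2 + (aI:ℂ) ^ 2 ≠ 0 := by exact_mod_cast hN.ne'
  have hb := hbR.regularData hbI
  have hf := hfR.regularData hfI
  obtain rfl : q₁ = p₁ := hq₁.trans hp₁.symm
  obtain rfl : q₂ = -p₂ := by rw [hq₂, hp₂, neg_div, neg_neg]
  have hββ : ∀ x y t, (β x y t : ℂ) - Complex.I * βc x y t = ((q₁:ℂ) - Complex.I * p₂)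
      * (((bR y t : ℂ) - Complex.I * bI y t) - ((fR x t : ℂ) - Complex.I * fI x t)) := by
    intro x y t
    rw [hβ, hβc, hp₁, hp₂]
    push_cast
    field_simp
    linear_combination (aI:ℂ) * ((bI y t : ℂ) - fI x t) * Complex.I_sq
  have hp : (q₁:ℂ) - Complex.I * p₂ ≠ 0 := by
    intro h0
    have h1 := congrArg Complex.re h0
    have h2 : 0 < q₁ := hp₁ ▸ div_pos haR hN
    simp at h1
    exact h2.ne' h1
  obtain ⟨k, kc, hk, B, hB⟩ := exists_bounded_neumannKernelSol hb hf hββ ht₀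
  refine ⟨k, kc, hk, fun k' kc' hk' x y hxy t ht =>
    hk.unique hb hf hββ hp ht₀.2 hk' hxy ht, max B 1, by positivity, fun x y hxy t ht => ?_⟩
  have hexp : 1 ≤ Real.exp (max B 1 * (x ^ 2 - y ^ 2)) := by
    refine Real.one_le_exp (mul_nonneg (by positivity) (sub_nonneg.2 ?_))
    exact pow_le_pow_left₀ hxy.1 hxy.2.1 2
  have hM : B ≤ max B 1 * Real.exp (max B 1 * (x ^ 2 - y ^ 2)) :=
    (le_max_left B 1).trans (le_mul_of_one_le_right (by positivity) hexp)
  exact ⟨(hB x y hxy t ht).1.trans hM, (hB x y hxy t ht).2.trans hM⟩
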